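/- arXiv:math/9712238 — 6 statements merged into one kernel-verified Lean document; each statement's English description precedes it below -/
import Mathlib

section
/- For all real numbers u, q with q > 1 and 0 < u < 1 and every partition λ: M_{(u,q)}(λ) = [∏_{r=1}^∞ (1 − u/q^r)] · Σ_γ ∏_{i=0}^{|λ|−1} m_{γ_i, γ_{i+1}}, where the sum is over all sequences of partitions γ_0, γ_1, …, γ_{|λ|} such that γ_0 is the empty partition, γ_{|λ|} = λ, and γ_{i+1} covers γ_i for each 0 ≤ i ≤ |λ|−1. -/
/-!
Write `λ'_j` for the column lengths and `m_i` for the multiplicities of `λ`. From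
`∑_j (λ'_j)² = 2 ∑_{h<i} h m_h m_i + ∑_i i m_i²` (`sum_tail_sq`) and
`|GL(m,q)| = q^{m²} (1/q; 1/q)_m` (`glOrder_eq`), the measure takes the form
`M(λ) = ∏_r (1 - u/q^r) · u^{|λ|} / denom λ` with
`denom λ = q^{∑_j (λ'_j)²} ∏_i (1/q; 1/q)_{m_i}` (`denom_eq`).

Put `N(λ) = u^{|λ|} / denom λ`. It has to be shown that `N(Λ) = ∑_λ N(λ) m_{λ,Λ}`, the sum being
over the partitions covered by `Λ ≠ ∅`; induction on `|Λ|` then gives the sum over chains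
(`chain_sum`). The partitions covered by `Λ` correspond to the distinct part sizes `s` of `Λ`
(`down_bijective`). Comparing `denom` before and after adding one box (`denom_cons`), the summand
that belongs to `s` is `N(Λ) (q^{Λ'_s} - q^{Λ'_{s+1}}) / (q^{Λ'_1} - 1)` (`step_eq`). This expression
vanishes if `s` is not a part of `Λ`, so the sum telescopes to `N(Λ)` (`sum_step`).
-/

open scoped BigOperators

/-- The "order of `GL(m,q)`" for a real parameter `q`:
`|GL(m,q)| = q^(m(m-1)/2) * ∏_{j=1}^m (q^j - 1)`. -/
noncomputable def glOrder (q : ℝ) (m : ℕ) : ℝ :=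
  q ^ (m * (m - 1) / 2) * ∏ j ∈ Finset.range m, (q ^ (j + 1) - 1)

/-- The measure `M_{(u,q)}` on the set of all partitions of all nonnegative integers. -/
noncomputable def measureM (u q : ℝ) (lam : Σ n : ℕ, Nat.Partition n) : ℝ :=
  (∏' r : ℕ, (1 - u / q ^ (r + 1))) * u ^ lam.1 /
    (q ^ (2 * ∑ i ∈ Finset.range (lam.1 + 1), ∑ h ∈ Finset.range i,
            h * lam.2.parts.count h * lam.2.parts.count i
        + ∑ i ∈ Finset.range (lam.1 + 1), (i - 1) * lam.2.parts.count i ^ 2) *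
      ∏ i ∈ Finset.range (lam.1 + 1), glOrder q (lam.2.parts.count i))
/-- `Lam` covers `lam` in the Young lattice: the diagram of `Lam` is obtained from that of
`lam` by adding a single box (either a new part equal to `1`, or a part `t` grows to `t+1`). -/
def Covers (lam Lam : Multiset ℕ) : Prop :=
  Lam = 1 ::ₘ lam ∨ ∃ t : ℕ, 0 < t ∧ t ∈ lam ∧ Lam = (t + 1) ::ₘ lam.erase t

/-- `colLen lam s` is `lam'_s`, the number of parts of `lam` of size at least `s`. -/
def colLen (lam : Multiset ℕ) (s : ℕ) : ℕ :=
  Multiset.card (lam.filter (fun p => s ≤ p))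

/-- The weight `m_{lam,Lam}` on an edge of the Young lattice: `u/(q^{λ'_1}(q^{λ'_1+1}-1))`
if the box is added in column 1, and `u(q^{-λ'_s} - q^{-λ'_{s-1}})/(q^{λ'_1}-1)` if the box
is added in column `s = t+1 > 1` (i.e. a part `t` of `lam` grows to `t+1`).  The weight is `0`
if `Lam` does not cover `lam`. -/
noncomputable def weight (u q : ℝ) (lam Lam : Multiset ℕ) : ℝ :=
  (if Lam = 1 ::ₘ lam then
      u / (q ^ Multiset.card lam * (q ^ (Multiset.card lam + 1) - 1))
    else 0) +
  ∑ t ∈ lam.toFinset,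
    (if 0 < t ∧ Lam = (t + 1) ::ₘ lam.erase t then
        u * (1 / q ^ colLen lam (t + 1) - 1 / q ^ colLen lam t) /
          (q ^ Multiset.card lam - 1)
      else 0)

/-- The finite `q`-Pochhammer symbol `(1/q; 1/q)_m = ∏_{j=1}^m (1 - q^{-j})`. -/
noncomputable def poch (q : ℝ) (m : ℕ) : ℝ :=
  ∏ j ∈ Finset.range m, (1 - 1 / q ^ (j + 1))

/-- `q^{∑_j (λ'_j)²} ∏_i (1/q; 1/q)_{m_i(λ)}`, where only columns `1 ≤ j ≤ K` and parts `i < K`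
are taken into account; this is everything as soon as all parts of `λ` are smaller than `K`. -/
noncomputable def denom (q : ℝ) (K : ℕ) (L : Multiset ℕ) : ℝ :=
  q ^ (∑ j ∈ Finset.range K, colLen L (j + 1) ^ 2) * ∏ i ∈ Finset.range K, poch q (L.count i)

/-- The saturated chains `∅ = γ_0, γ_1, …, γ_n = L` in the Young lattice. -/
abbrev Chain (n : ℕ) (L : Multiset ℕ) : Type :=
  {g : Fin (n + 1) → Multiset ℕ //
    g 0 = 0 ∧ g (Fin.last n) = L ∧ ∀ i : Fin n, Covers (g i.castSucc) (g i.succ)}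

/-- The partition obtained from `L` by removing the last box of a row of length `s`; a row of
length `1` disappears, so that no zero parts are created. -/
def down (L : Multiset ℕ) (s : ℕ) : Multiset ℕ :=
  if s = 1 then L.erase 1 else (s - 1) ::ₘ L.erase s

/-! ### The two forms of the denominator -/

theorem poch_succ (q : ℝ) (m : ℕ) : poch q (m + 1) = poch q m * (1 - 1 / q ^ (m + 1)) :=
  Finset.prod_range_succ _ _

theorem one_sub_pos {q : ℝ} (hq : 1 < q) (m : ℕ) : 0 < 1 - 1 / q ^ (m + 1) := by
  have : 1 < q ^ (m + 1) := one_lt_pow₀ hq (by omega)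
  rw [sub_pos, div_lt_one (by linarith)]
  exact this

theorem poch_pos {q : ℝ} (hq : 1 < q) (m : ℕ) : 0 < poch q m :=
  Finset.prod_pos fun j _ => one_sub_pos hq j

theorem denom_pos {q : ℝ} (hq : 1 < q) (K : ℕ) (L : Multiset ℕ) : 0 < denom q K L := by
  have : 0 < q := by linarith
  exact mul_pos (by positivity) (Finset.prod_pos fun j _ => poch_pos hq _)

theorem glOrder_eq {q : ℝ} (hq : 1 < q) (m : ℕ) : glOrder q m = q ^ (m ^ 2) * poch q m := by
  have h0 : q ≠ 0 := by linarith
  induction m with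
  | zero => simp [glOrder, poch]
  | succ m ih =>
    have h : glOrder q (m + 1) = glOrder q m * (q ^ m * (q ^ (m + 1) - 1)) := by
      rw [glOrder, glOrder, Nat.triangle_succ, Finset.prod_range_succ, pow_add]
      ring
    rw [h, ih, poch_succ]
    field_simp
    ring

theorem colLen_cons (R : Multiset ℕ) (s j : ℕ) :
    colLen (s ::ₘ R) j = colLen R j + if j ≤ s then 1 else 0 := by
  unfold colLen
  split_ifs with h <;> simp [h]

theorem colLen_succ (R : Multiset ℕ) (j : ℕ) :
    colLen R j = colLen R (j + 1) + R.count j := by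
  induction R using Multiset.induction_on with
  | empty => simp [colLen]
  | cons a R ih =>
    rw [colLen_cons, colLen_cons, ih, Multiset.count_cons]
    split_ifs <;> omega

theorem colLen_one {R : Multiset ℕ} (h : 0 ∉ R) : colLen R 1 = Multiset.card R := by
  unfold colLen
  congr 1
  rw [Multiset.filter_eq_self]
  intro a ha
  exact Nat.one_le_iff_ne_zero.2 fun h0 => h (h0 ▸ ha)

theorem colLen_eq_sum {K : ℕ} {L : Multiset ℕ} (hK : ∀ a ∈ L, a < K) (j : ℕ) :
    colLen L (j + 1) = ∑ i ∈ Finset.range K, if j < i then L.count i else 0 := by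
  unfold colLen
  rw [← Multiset.sum_count_eq_card (s := Finset.range K)]
  · refine Finset.sum_congr rfl fun i _ => ?_
    rw [Multiset.count_filter]
    rfl
  · intro a ha
    exact Finset.mem_range.2 (hK a (Multiset.mem_of_mem_filter ha))

theorem sum_tail (m : ℕ → ℕ) (K : ℕ) :
    ∑ j ∈ Finset.range K, ∑ i ∈ Finset.range K, (if j < i then m i else 0)
      = ∑ h ∈ Finset.range K, h * m h := by
  rw [Finset.sum_comm]
  refine Finset.sum_congr rfl fun i hi => ?_
  rw [← Finset.sum_filter, Finset.sum_const, smul_eq_mul]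
  congr 1
  have : (Finset.range K).filter (· < i) = Finset.range i := by
    ext j
    simp only [Finset.mem_filter, Finset.mem_range] at *
    omega
  rw [this, Finset.card_range]

/-- `∑_j (λ'_j)² = 2 ∑_{h<i} h m_h m_i + ∑_i i m_i²`, for arbitrary multiplicities `m`. -/
theorem sum_tail_sq (m : ℕ → ℕ) (K : ℕ) :
    ∑ j ∈ Finset.range K, (∑ i ∈ Finset.range K, if j < i then m i else 0) ^ 2
      = 2 * ∑ i ∈ Finset.range K, ∑ h ∈ Finset.range i, h * m h * m i
        + ∑ i ∈ Finset.range K, i * m i ^ 2 := by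
  induction K with
  | zero => simp
  | succ K ih =>
    have h1 : ∑ i ∈ Finset.range (K + 1), (if K < i then m i else 0) = 0 := by
      refine Finset.sum_eq_zero fun i hi => if_neg ?_
      have := Finset.mem_range.1 hi
      omega
    have h2 : ∀ j ∈ Finset.range K,
        (∑ i ∈ Finset.range (K + 1), if j < i then m i else 0) ^ 2
          = (∑ i ∈ Finset.range K, if j < i then m i else 0) ^ 2
            + (∑ i ∈ Finset.range K, if j < i then m i else 0) * (2 * m K) + m K ^ 2 := by
      intro j hj
      rw [Finset.sum_range_succ, if_pos (Finset.mem_range.1 hj)]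
      ring
    rw [Finset.sum_range_succ, h1, Finset.sum_congr rfl h2, Finset.sum_add_distrib,
      Finset.sum_add_distrib, ih, ← Finset.sum_mul, sum_tail, Finset.sum_range_succ,
      Finset.sum_range_succ, ← Finset.sum_mul, Finset.sum_const, Finset.card_range, smul_eq_mul]
    ring

theorem denom_eq {q : ℝ} (hq : 1 < q) {K : ℕ} {L : Multiset ℕ} (h0 : 0 ∉ L)
    (hK : ∀ a ∈ L, a < K) :
    q ^ (2 * ∑ i ∈ Finset.range K, ∑ h ∈ Finset.range i, h * L.count h * L.count i
        + ∑ i ∈ Finset.range K, (i - 1) * L.count i ^ 2) *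
      ∏ i ∈ Finset.range K, glOrder q (L.count i) = denom q K L := by
  simp only [glOrder_eq hq, Finset.prod_mul_distrib, Finset.prod_pow_eq_pow_sum]
  rw [← mul_assoc, ← pow_add, add_assoc, ← Finset.sum_add_distrib, denom]
  congr 2
  simp only [colLen_eq_sum hK]
  rw [sum_tail_sq]
  congr 1
  refine Finset.sum_congr rfl fun i _ => ?_
  -- The term `i = 0`, where `i - 1` is truncated, vanishes because there are no zero parts.
  rcases i with _ | i
  · simp [Multiset.count_eq_zero_of_notMem h0]
  · rw [Nat.add_sub_cancel]
    ring

/-! ### Adding one box -/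

/-- The effect on `denom` of adjoining a whole row of length `s`. Adding a box in column
`t + 1 > 1` is then the passage from `t ::ₘ R` to `(t + 1) ::ₘ R`. -/
theorem denom_cons (q : ℝ) {K s : ℕ} (hs : s < K) (R : Multiset ℕ) :
    denom q K (s ::ₘ R) = denom q K R * q ^ (∑ j ∈ Finset.range s, (2 * colLen R (j + 1) + 1)) *
      (1 - 1 / q ^ (R.count s + 1)) := by
  have h1 : ∑ j ∈ Finset.range K, colLen (s ::ₘ R) (j + 1) ^ 2
      = ∑ j ∈ Finset.range K, colLen R (j + 1) ^ 2
        + ∑ j ∈ Finset.range s, (2 * colLen R (j + 1) + 1) := by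
    have : Finset.range s = (Finset.range K).filter (· + 1 ≤ s) := by
      ext j
      simp only [Finset.mem_filter, Finset.mem_range]
      omega
    rw [this, Finset.sum_filter, ← Finset.sum_add_distrib]
    refine Finset.sum_congr rfl fun j _ => ?_
    rw [colLen_cons]
    split_ifs <;> ring
  have h2 : ∏ i ∈ Finset.range K, poch q ((s ::ₘ R).count i)
      = (∏ i ∈ Finset.range K, poch q (R.count i)) * (1 - 1 / q ^ (R.count s + 1)) := by
    rw [← Finset.mul_prod_erase _ _ (Finset.mem_range.2 hs),
      ← Finset.mul_prod_erase _ (fun i => poch q (R.count i)) (Finset.mem_range.2 hs),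
      Multiset.count_cons_self, poch_succ]
    rw [Finset.prod_congr rfl fun i hi => by
      rw [Multiset.count_cons_of_ne (Finset.ne_of_mem_erase hi)]]
    ring
  rw [denom, denom, h1, h2, pow_add]
  ring

theorem weight_one (u q : ℝ) (R : Multiset ℕ) :
    weight u q R (1 ::ₘ R) =
      u / (q ^ Multiset.card R * (q ^ (Multiset.card R + 1) - 1)) := by
  rw [weight, if_pos rfl, Finset.sum_eq_zero, add_zero]
  intro t ht
  refine if_neg fun h => ?_
  have h1 := congrArg Multiset.card h.2
  have h2 := Multiset.card_erase_add_one (Multiset.mem_toFinset.1 ht)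
  simp only [Multiset.card_cons] at h1
  omega

theorem weight_succ (u q : ℝ) (R : Multiset ℕ) {t : ℕ} (ht : 0 < t) :
    weight u q (t ::ₘ R) ((t + 1) ::ₘ R) =
      u * (1 / q ^ colLen R (t + 1) - 1 / q ^ (colLen R (t + 1) + R.count t + 1)) /
        (q ^ (Multiset.card R + 1) - 1) := by
  rw [weight, if_neg, zero_add, Finset.sum_eq_single t]
  · rw [if_pos ⟨ht, by simp⟩, colLen_cons, colLen_cons, if_neg (by omega), if_pos le_rfl,
      colLen_succ R t, Multiset.card_cons, add_zero]
  · intro t' ht' hne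
    refine if_neg fun h => hne ?_
    have h1 := congrArg (fun X => t' ::ₘ X) h.2
    rw [Multiset.cons_swap t' (t' + 1), Multiset.cons_erase (Multiset.mem_toFinset.1 ht')] at h1
    have h2 := congrArg (Multiset.count t') h1
    by_contra hne
    simp only [Multiset.count_cons] at h2
    split_ifs at h2 <;> omega
  · intro h
    simp at h
  · intro h
    simpa using congrArg Multiset.card h

theorem pow_sub_pow_eq {q : ℝ} (hq : q ≠ 0) (a c : ℕ) :
    q ^ (a + c + 1) - q ^ a = q ^ (a + c + 1) * (1 - 1 / q ^ (c + 1)) := by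
  rw [add_assoc, pow_add]
  field_simp

theorem one_div_sub_eq {q : ℝ} (hq : q ≠ 0) (a c : ℕ) :
    1 / q ^ a - 1 / q ^ (a + c + 1) = 1 / q ^ a * (1 - 1 / q ^ (c + 1)) := by
  rw [add_assoc, pow_add]
  field_simp

/-- With `N(L) = u^{|L|} / denom L`, the contribution to `N(L)` of the chains whose last box goes
to column `s` is the proportion `(q^{L'_s} - q^{L'_{s+1}}) / (q^{L'_1} - 1)` of `N(L)`. -/
theorem step_eq {u q : ℝ} (hq : 1 < q) {K n : ℕ} {L : Multiset ℕ} (h0 : 0 ∉ L)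
    (hK : ∀ a ∈ L, a < K) {s : ℕ} (hs : s ∈ L) :
    u ^ n / denom q K (down L s) * weight u q (down L s) L =
      u ^ (n + 1) / denom q K L *
        ((q ^ colLen L s - q ^ colLen L (s + 1)) / (q ^ Multiset.card L - 1)) := by
  have hq0 : q ≠ 0 := by linarith
  obtain ⟨R, rfl⟩ := Multiset.exists_cons_of_mem hs
  have hsK := hK s hs
  have hR := (denom_pos hq K R).ne'
  have hc : q ^ (Multiset.card R + 1) - 1 ≠ 0 :=
    (sub_pos.2 (one_lt_pow₀ hq (by omega))).ne'
  have hR0 : 0 ∉ R := fun h => h0 (Multiset.mem_cons_of_mem h)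
  obtain _ | _ | t := s
  · exact absurd hs h0
  · have hd : down (1 ::ₘ R) 1 = R := by simp [down]
    have h1 := (one_sub_pos hq (R.count 1)).ne'
    simp only [zero_add] at *
    rw [hd, weight_one, denom_cons q hsK, colLen_cons, colLen_cons, Multiset.card_cons]
    have h2 := colLen_succ R 1
    rw [colLen_one hR0] at h2
    rw [if_pos le_rfl, if_neg (by omega), Finset.sum_range_one, zero_add, colLen_one hR0, add_zero]
    rw [h2] at hc ⊢
    rw [pow_sub_pow_eq hq0]
    generalize 1 - 1 / q ^ (R.count 1 + 1) = P at *
    field_simp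
    ring
  · have hd : down ((t + 1 + 1) ::ₘ R) (t + 1 + 1) = (t + 1) ::ₘ R := by simp [down]
    have h1 := (one_sub_pos hq (R.count (t + 1))).ne'
    have h2 := (one_sub_pos hq (R.count (t + 1 + 1))).ne'
    have hE : q ^ (∑ x ∈ Finset.range (t + 1), (2 * colLen R (x + 1) + 1)) ≠ 0 :=
      pow_ne_zero _ hq0
    rw [hd, weight_succ u q R (by omega), denom_cons q hsK, denom_cons q (by omega), colLen_cons,
      colLen_cons, Multiset.card_cons, Finset.sum_range_succ _ (t + 1), if_pos le_rfl,
      if_neg (by omega), colLen_succ R (t + 1 + 1)]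
    rw [one_div_sub_eq hq0, add_zero, pow_sub_pow_eq hq0, pow_add q (∑ x ∈ _, _)]
    generalize 1 - 1 / q ^ (R.count (t + 1) + 1) = P at *
    generalize 1 - 1 / q ^ (R.count (t + 1 + 1) + 1) = P' at *
    generalize q ^ (∑ x ∈ Finset.range (t + 1), (2 * colLen R (x + 1) + 1)) = E at *
    field_simp
    ring

theorem sum_step {q : ℝ} (hq : 1 < q) {K : ℕ} {L : Multiset ℕ} (h0 : 0 ∉ L)
    (hK : ∀ a ∈ L, a < K) (hL : L ≠ 0) :
    ∑ s ∈ L.toFinset, (q ^ colLen L s - q ^ colLen L (s + 1)) / (q ^ Multiset.card L - 1) = 1 := by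
  have hc : q ^ Multiset.card L - 1 ≠ 0 :=
    (sub_pos.2 (one_lt_pow₀ hq (by simpa using hL))).ne'
  have hsub : L.toFinset ⊆ Finset.range K := fun a ha =>
    Finset.mem_range.2 (hK a (Multiset.mem_toFinset.1 ha))
  rw [← Finset.sum_div, div_eq_one_iff_eq hc, Finset.sum_subset hsub,
    Finset.sum_range_sub' (fun s => q ^ colLen L s), colLen_succ L 0, zero_add, colLen_one h0,
    Multiset.count_eq_zero_of_notMem h0]
  · have : colLen L K = 0 := by
      rw [colLen, Multiset.card_eq_zero, Multiset.filter_eq_nil]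
      intro a ha
      have := hK a ha
      omega
    simp [this]
  · intro s _ hs
    rw [colLen_succ L s, Multiset.count_eq_zero_of_notMem (by simpa using hs)]
    simp

/-! ### Splitting chains at the last step -/

theorem covers_down {L : Multiset ℕ} (h0 : 0 ∉ L) {s : ℕ} (hs : s ∈ L) : Covers (down L s) L := by
  obtain ⟨R, rfl⟩ := Multiset.exists_cons_of_mem hs
  obtain _ | _ | t := s
  · exact absurd hs h0
  · left
    simp [down]
  · right
    exact ⟨t + 1, by omega, by simp [down], by simp [down]⟩

theorem zero_notMem_down {L : Multiset ℕ} (h0 : 0 ∉ L) {s : ℕ} (hs : s ∈ L) :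
    0 ∉ down L s := by
  have hs0 : s ≠ 0 := fun h => h0 (h ▸ hs)
  unfold down
  split_ifs with h
  · exact fun h => h0 (Multiset.mem_of_mem_erase h)
  · rw [Multiset.mem_cons, not_or]
    exact ⟨by omega, fun h => h0 (Multiset.mem_of_mem_erase h)⟩

theorem sum_down {L : Multiset ℕ} (h0 : 0 ∉ L) {s : ℕ} (hs : s ∈ L) :
    (down L s).sum + 1 = L.sum := by
  have hs0 : s ≠ 0 := fun h => h0 (h ▸ hs)
  obtain ⟨R, rfl⟩ := Multiset.exists_cons_of_mem hs
  unfold down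
  split_ifs with h
  · subst h
    simp [add_comm]
  · simp
    omega

theorem down_bijective {L : Multiset ℕ} (h0 : 0 ∉ L) :
    Function.Bijective (fun s : L.toFinset =>
      (⟨down L s, covers_down h0 (Multiset.mem_toFinset.1 s.2)⟩ : {M // Covers M L})) := by
  constructor
  · rintro ⟨s, hs⟩ ⟨t, ht⟩ h
    rw [Multiset.mem_toFinset] at hs ht
    have h1 : down L s = down L t := congrArg Subtype.val h
    have hs0 : s ≠ 0 := fun h => h0 (h ▸ hs)
    have ht0 : t ≠ 0 := fun h => h0 (h ▸ ht)
    have hsc := Multiset.card_erase_add_one hs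
    have htc := Multiset.card_erase_add_one ht
    have hcard := congrArg Multiset.card h1
    rw [Subtype.mk.injEq]
    unfold down at h1 hcard
    -- Compare the multiplicities of `s` on both sides.
    have h2 := congrArg (Multiset.count s) h1
    have h3 := Multiset.count_pos.2 hs
    by_contra hne
    split_ifs at h1 h2 hcard with hs1 ht1 ht1
    · omega
    · subst hs1
      simp only [Multiset.card_cons] at hcard
      omega
    · subst ht1
      simp only [Multiset.card_cons] at hcard
      omega
    · rw [Multiset.count_cons, Multiset.count_cons, Multiset.count_erase_self,
        Multiset.count_erase_of_ne hne] at h2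
      split_ifs at h2 <;> omega
  · rintro ⟨M, hM⟩
    rcases hM with rfl | ⟨t, ht, htM, rfl⟩
    · exact ⟨⟨1, by simp⟩, Subtype.ext (by simp [down])⟩
    · refine ⟨⟨t + 1, by simp⟩, Subtype.ext ?_⟩
      simp [down, ht.ne', Multiset.cons_erase htM]

/-- Extending a chain by one more cover. -/
def extend (n : ℕ) (L : Multiset ℕ) (p : Σ M : {M // Covers M L}, Chain n M.1) :
    Chain (n + 1) L :=
  ⟨Fin.snoc (α := fun _ => Multiset ℕ) p.2.1 L, by
    obtain ⟨⟨M, hM⟩, ⟨g, hg0, hgl, hg⟩⟩ := p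
    refine ⟨?_, by simp, ?_⟩
    · exact (Fin.snoc_castSucc (α := fun _ => Multiset ℕ) L g 0).trans hg0
    · intro i
      induction i using Fin.lastCases with
      | last => simpa [Fin.succ_last, hgl] using hM
      | cast i => simpa only [Fin.succ_castSucc, Fin.snoc_castSucc] using hg i⟩

theorem extend_bijective (n : ℕ) (L : Multiset ℕ) : Function.Bijective (extend n L) := by
  constructor
  · rintro ⟨⟨M, hM⟩, ⟨g, hg0, hgl, hg⟩⟩ ⟨⟨M', hM'⟩, ⟨g', hg0', hgl', hg'⟩⟩ h
    dsimp only at hgl hgl'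
    have h1 : (Fin.snoc (α := fun _ => Multiset ℕ) g L) = Fin.snoc g' L := congrArg Subtype.val h
    have h2 : g = g' := by
      funext i
      simpa only [Fin.snoc_castSucc] using congrFun h1 i.castSucc
    subst h2 hgl hgl'
    rfl
  · rintro ⟨g, hg0, rfl, hg⟩
    refine ⟨⟨⟨g (Fin.last n).castSucc, hg (Fin.last n)⟩,
      ⟨fun i => g i.castSucc, by simpa using hg0, rfl, fun i => hg i.castSucc⟩⟩, ?_⟩
    refine Subtype.ext ?_
    exact Fin.snoc_init_self g

theorem prod_extend (u q : ℝ) (n : ℕ) (L : Multiset ℕ)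
    (p : Σ M : {M // Covers M L}, Chain n M.1) :
    ∏ i : Fin (n + 1), weight u q ((extend n L p).1 i.castSucc) ((extend n L p).1 i.succ) =
      (∏ i : Fin n, weight u q (p.2.1 i.castSucc) (p.2.1 i.succ)) * weight u q p.1.1 L := by
  rw [Fin.prod_univ_castSucc]
  simp only [extend, Fin.succ_castSucc, Fin.snoc_castSucc, Fin.succ_last, Fin.snoc_last, p.2.2.2.1]

theorem chain_sum {u q : ℝ} (hq : 1 < q) {K : ℕ} (n : ℕ) :
    ∀ L : Multiset ℕ, 0 ∉ L → L.sum = n → n < K → Finite (Chain n L) ∧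
      ∑' γ : Chain n L, ∏ i : Fin n, weight u q (γ.1 i.castSucc) (γ.1 i.succ)
        = u ^ n / denom q K L := by
  induction n with
  | zero =>
    intro L h0 hsum _
    have hL : L = 0 := by
      refine Multiset.eq_zero_of_forall_notMem fun a ha => ?_
      have := Multiset.le_sum_of_mem ha
      obtain rfl : a = 0 := by omega
      exact h0 ha
    subst hL
    let c : Chain 0 0 := ⟨fun _ => 0, rfl, rfl, fun i => i.elim0⟩
    have hc : ∀ γ : Chain 0 0, γ = c := by
      rintro ⟨g, hg0, _⟩
      refine Subtype.ext (funext fun i => ?_)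
      obtain rfl : i = 0 := by omega
      exact hg0
    let _ : Unique (Chain 0 0) := ⟨⟨c⟩, hc⟩
    refine ⟨inferInstance, ?_⟩
    rw [tsum_fintype]
    simp [denom, colLen, poch]
  | succ n ih =>
    intro L h0 hsum hn
    have hK : ∀ a ∈ L, a < K := fun a ha => by
      have := Multiset.le_sum_of_mem ha
      omega
    have hL : L ≠ 0 := by
      rintro rfl
      simp at hsum
    have key : ∀ s ∈ L, Finite (Chain n (down L s)) ∧
        ∑' γ : Chain n (down L s), ∏ i : Fin n, weight u q (γ.1 i.castSucc) (γ.1 i.succ)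
          = u ^ n / denom q K (down L s) := fun s hs =>
      ih _ (zero_notMem_down h0 hs) (by have := sum_down h0 hs; omega) (by omega)
    let e := Equiv.ofBijective _ (down_bijective h0)
    have : Finite {M // Covers M L} := Finite.of_equiv _ e
    have : ∀ M : {M // Covers M L}, Finite (Chain n M.1) := by
      intro M
      obtain ⟨s, rfl⟩ := e.surjective M
      exact (key s (Multiset.mem_toFinset.1 s.2)).1
    let e' := Equiv.ofBijective _ (extend_bijective n L)
    refine ⟨Finite.of_equiv _ e', ?_⟩
    rw [← e'.tsum_eq]
    simp only [e', Equiv.ofBijective_apply, prod_extend]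
    rw [Summable.of_finite.tsum_sigma]
    simp only [tsum_mul_right]
    rw [← e.tsum_eq]
    have hterm : ∀ s : L.toFinset,
        (∑' γ : Chain n (e s).1, ∏ i : Fin n, weight u q (γ.1 i.castSucc) (γ.1 i.succ))
            * weight u q (e s).1 L
          = u ^ (n + 1) / denom q K L *
            ((q ^ colLen L s - q ^ colLen L (s + 1)) / (q ^ Multiset.card L - 1)) := by
      intro s
      have hs := Multiset.mem_toFinset.1 s.2
      rw [← step_eq hq h0 hK hs, ← (key s hs).2]
      rfl
    rw [tsum_congr hterm, tsum_mul_left, Finset.tsum_subtype L.toFinset fun s =>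
      (q ^ colLen L s - q ^ colLen L (s + 1)) / (q ^ Multiset.card L - 1), sum_step hq h0 hK hL,
      mul_one]

theorem statement5 (u q : ℝ) (hq : 1 < q) (hu0 : 0 < u) (hu1 : u < 1)
    (n : ℕ) (lam : Nat.Partition n) :
    measureM u q ⟨n, lam⟩ =
      (∏' r : ℕ, (1 - u / q ^ (r + 1))) *
        ∑' γ : {g : Fin (n + 1) → Multiset ℕ //
            g 0 = 0 ∧ g (Fin.last n) = lam.parts ∧
            ∀ i : Fin n, Covers (g i.castSucc) (g i.succ)},
          ∏ i : Fin n, weight u q (γ.1 i.castSucc) (γ.1 i.succ) := by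
  have h0 : 0 ∉ lam.parts := fun h => absurd (lam.parts_pos h) (lt_irrefl 0)
  have hK : ∀ a ∈ lam.parts, a < n + 1 := fun a ha =>
    Nat.lt_succ_of_le ((Multiset.le_sum_of_mem ha).trans_eq lam.parts_sum)
  rw [(chain_sum hq (K := n + 1) n lam.parts h0 lam.parts_sum (Nat.lt_succ_self n)).2, measureM]
  simp only
  rw [denom_eq hq h0 hK, mul_div_assoc]
end

section
/- For all real numbers u, q with q > 1 and 0 < u < 1: the sum of the weights m_{λ,Λ} over all partitions Λ covering a fixed nonempty partition λ equals u·q/(q^{λ'_1+1} − 1), and the sum of the weights out of the empty partition equals u/(q − 1). Moreover, if in addition q ≥ 2, each of these totals is strictly less than 1. -/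
/-!
The weight of a pair is a finite sum of point masses, one for the box added in column 1 and one for
each distinct part `t` of `lam` (box added in column `t + 1`), so the total weight is the sum of the
masses (`hasSum_weight`).  With `k = lam'_1`, the terms `q^{-lam'_{t+1}} - q^{-lam'_t}` vanish unless
`t` is a part, so their sum over the parts telescopes to `1 - q^{-k}` (`sum_colLen_telescope`).
Hence the columns `s > 1` contribute `u / q^k`, and
`u / q^k + u / (q^k (q^{k+1} - 1)) = u q / (q^{k+1} - 1)`.
The bounds for `q ≥ 2` follow from `q^{k+1} - 1 ≥ q^2 - 1 > q` when `k ≥ 1`, and from `q - 1 ≥ 1 > u`.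
-/

open scoped BigOperators

theorem colLen_zero (lam : Multiset ℕ) : colLen lam 0 = Multiset.card lam := by
  simp [colLen]

theorem colLen_succ_of_notMem {lam : Multiset ℕ} {t : ℕ} (ht : t ∉ lam) :
    colLen lam (t + 1) = colLen lam t := by
  unfold colLen
  congr 1
  refine Multiset.filter_congr fun p hp => ?_
  have : p ≠ t := fun h => ht (h ▸ hp)
  omega

/-- Summing the increments of `g (lam'_s)` over the distinct parts of `lam` telescopes, because the
column length only changes across a part. -/
theorem sum_colLen_telescope (lam : Multiset ℕ) (g : ℕ → ℝ) :
    ∑ t ∈ lam.toFinset, (g (colLen lam (t + 1)) - g (colLen lam t))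
      = g 0 - g (Multiset.card lam) := by
  -- `lam.toFinset.sup id` is the largest part, so the next column is empty.
  have hsub : lam.toFinset ⊆ Finset.range (lam.toFinset.sup id + 1) := fun t ht =>
    Finset.mem_range.2 (Nat.lt_succ_of_le (Finset.le_sup (f := id) ht))
  have hlast : colLen lam (lam.toFinset.sup id + 1) = 0 := by
    unfold colLen
    rw [Multiset.card_eq_zero, Multiset.filter_eq_nil]
    intro p hp
    have := Finset.mem_range.1 (hsub (Multiset.mem_toFinset.2 hp))
    omega
  rw [Finset.sum_subset hsub fun t _ ht => by
    rw [colLen_succ_of_notMem (by simpa using ht), sub_self]]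
  rw [Finset.sum_range_sub (fun s => g (colLen lam s)), hlast, colLen_zero]

/-- A point mass at a covering partition, as a function on all covering partitions. -/
theorem hasSum_pointMass {lam L : Multiset ℕ} (hL : Covers lam L) (c : ℝ) :
    HasSum (fun Lam : {L : Multiset ℕ // Covers lam L} => if Lam.1 = L then c else 0) c := by
  simpa [Subtype.ext_iff] using hasSum_ite_eq (⟨L, hL⟩ : {L : Multiset ℕ // Covers lam L}) c

/-- The weights out of `lam` sum to the column-1 mass plus the masses attached to the distinct
parts of `lam`.  Distinct parts need not be shown to give distinct covers, as masses simply add. -/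
theorem hasSum_weight (u q : ℝ) {lam : Multiset ℕ} (h0 : ∀ t ∈ lam, 0 < t) :
    HasSum (fun Lam : {L : Multiset ℕ // Covers lam L} => weight u q lam Lam.1)
      (u / (q ^ Multiset.card lam * (q ^ (Multiset.card lam + 1) - 1)) +
        ∑ t ∈ lam.toFinset, u * (1 / q ^ colLen lam (t + 1) - 1 / q ^ colLen lam t) /
          (q ^ Multiset.card lam - 1)) := by
  unfold weight
  refine (hasSum_pointMass (Or.inl rfl) _).add (hasSum_sum fun t ht => ?_)
  have ht' := Multiset.mem_toFinset.1 ht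
  simp only [h0 t ht', true_and]
  exact hasSum_pointMass (Or.inr ⟨t, h0 t ht', ht', rfl⟩) _

theorem card_parts_ne_zero {n : ℕ} (hn : n ≠ 0) (lam : Nat.Partition n) :
    Multiset.card lam.parts ≠ 0 := by
  intro h
  have := lam.parts_sum
  rw [Multiset.card_eq_zero.1 h] at this
  exact hn (by simpa using this.symm)

theorem statement6 (u q : ℝ) (hq : 1 < q) (hu0 : 0 < u) (hu1 : u < 1) :
    (∀ n : ℕ, n ≠ 0 → ∀ lam : Nat.Partition n,
        ∑' Lam : {L : Multiset ℕ // Covers lam.parts L}, weight u q lam.parts Lam.1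
          = u * q / (q ^ (Multiset.card lam.parts + 1) - 1)) ∧
    (∑' Lam : {L : Multiset ℕ // Covers (0 : Multiset ℕ) L}, weight u q 0 Lam.1
        = u / (q - 1)) ∧
    (2 ≤ q →
      (∀ n : ℕ, n ≠ 0 → ∀ lam : Nat.Partition n,
          u * q / (q ^ (Multiset.card lam.parts + 1) - 1) < 1) ∧
      u / (q - 1) < 1) := by
  refine ⟨fun n hn lam => ?_, ?_, fun hq2 => ⟨fun n hn lam => ?_, ?_⟩⟩
  · rw [(hasSum_weight u q fun t ht => lam.parts_pos ht).tsum_eq, ← Finset.sum_div,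
      ← Finset.mul_sum, sum_colLen_telescope lam.parts fun m => 1 / q ^ m]
    have hk := card_parts_ne_zero hn lam
    set k := Multiset.card lam.parts
    have h1 : 1 < q ^ k := one_lt_pow₀ hq hk
    have h2 : 1 < q ^ (k + 1) := one_lt_pow₀ hq k.succ_ne_zero
    have h3 : q ^ k - 1 ≠ 0 := by linarith
    have h4 : q ^ (k + 1) - 1 ≠ 0 := by linarith
    have h5 : q ^ k ≠ 0 := by positivity
    rw [pow_succ] at *
    field_simp
    ring
  · rw [(hasSum_weight u q (lam := 0) (by simp)).tsum_eq]
    simp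
  · have hk := card_parts_ne_zero hn lam
    have h : q ^ 2 ≤ q ^ (Multiset.card lam.parts + 1) :=
      pow_le_pow_right₀ hq.le (by omega)
    rw [div_lt_one (by nlinarith)]
    nlinarith
  · rw [div_lt_one (by linarith)]
    linarith
end

section
/- For every prime power q and every integer n ≥ 1, the number of unipotent elements of GL(n,q) is exactly q^{n(n−1)}. -/
/-! Subtracting the identity turns unipotent elements into nilpotent matrices, so the theorem is the
Fine–Herstein count: an `n`-dimensional space `V` over `F_q` has `q ^ (n (n - 1))` nilpotent
endomorphisms.

The proof counts pairs `(T, v)` with `T` a nilpotent endomorphism of `V` and `v ∈ V` in two ways.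
There are `N_n q ^ n` of them, where `N_n` is the number sought. On the other hand, let `k` be
least with `T ^ k v = 0`; then `v, T v, …, T ^ (k - 1) v` are linearly independent. Given a linearly
independent tuple `s` of length `k`, the nilpotent `T` shifting `s` are, in a decomposition of `V`
into the span of `s` and a complement of dimension `n - k`, the block triangular endomorphisms
whose first diagonal block is the shift, whose second one is nilpotent and whose off-diagonal block
is arbitrary (`card_nilpotent_extending`, `card_nilpotent_shifting`). Hence
`N_n q ^ n = ∑ k ≤ n, L(n, k) q ^ (k (n - k)) N_(n - k)` with `L(n, k) = ∏ j < k, (q ^ n - q ^ j)`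
the number of linearly independent `k`-tuples (`card_nilpotent_recursion`). The term `k = 0` is
`N_n`, so this determines `N_n` by strong induction, and substituting `q ^ (m (m - 1))` for `N_m`
makes the sum telescope (`telescoping_sum`).
-/

open Module

/-! ### Nilpotent extensions of a nilpotent endomorphism of a subspace -/

section Blocks

variable {F W U V : Type*} [Field F] [AddCommGroup W] [Module F W] [AddCommGroup U] [Module F U]
  [AddCommGroup V] [Module F V]

/-- The block upper triangular endomorphism of `W × U` with diagonal blocks `S`, `D` and
off-diagonal block `B`. -/
def blockEnd (S : End F W) (B : U →ₗ[F] W) (D : End F U) : End F (W × U) :=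
  (LinearMap.inl F W U ∘ₗ S).coprod (B.prod D)

lemma blockEnd_apply (S : End F W) (B : U →ₗ[F] W) (D : End F U) (x : W × U) :
    blockEnd S B D x = (S x.1 + B x.2, D x.2) := by
  simp [blockEnd]

lemma blockEnd_pow_snd (S : End F W) (B : U →ₗ[F] W) (D : End F U) (m : ℕ) (x : W × U) :
    ((blockEnd S B D ^ m) x).2 = (D ^ m) x.2 := by
  induction m with
  | zero => simp
  | succ m ih => rw [pow_succ', pow_succ', Module.End.mul_apply, Module.End.mul_apply,
      blockEnd_apply, ih]

lemma blockEnd_pow_inl (S : End F W) (B : U →ₗ[F] W) (D : End F U) (m : ℕ) (w : W) :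
    (blockEnd S B D ^ m) (w, 0) = ((S ^ m) w, 0) := by
  induction m with
  | zero => simp
  | succ m ih => rw [pow_succ', pow_succ', Module.End.mul_apply, Module.End.mul_apply,
      ih, blockEnd_apply]; simp

lemma isNilpotent_blockEnd {S : End F W} (hS : IsNilpotent S) (B : U →ₗ[F] W) (D : End F U) :
    IsNilpotent (blockEnd S B D) ↔ IsNilpotent D := by
  constructor
  · rintro ⟨m, hm⟩
    refine ⟨m, LinearMap.ext fun u => ?_⟩
    have := blockEnd_pow_snd S B D m (0, u)
    rw [hm] at this
    simpa using this.symm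
  · rintro ⟨m, hm⟩
    obtain ⟨l, hl⟩ := hS
    refine ⟨l + m, LinearMap.ext fun x => ?_⟩
    -- the `m`-th power lands in `W`, on which the endomorphism is `S`
    have h2 : (blockEnd S B D ^ m) x = (((blockEnd S B D ^ m) x).1, 0) := by
      ext
      · rfl
      · rw [blockEnd_pow_snd, hm]; rfl
    rw [pow_add, Module.End.mul_apply, h2, blockEnd_pow_inl, hl]
    rfl

/-- The nilpotent endomorphisms of `W × U` extending a nilpotent `S` on `W` correspond to an
arbitrary map `U → W` together with a nilpotent endomorphism of `U`. -/
def nilpotentExtEquiv {S : End F W} (hS : IsNilpotent S) :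
    {T : End F (W × U) // IsNilpotent T ∧ T ∘ₗ LinearMap.inl F W U = LinearMap.inl F W U ∘ₗ S} ≃
      (U →ₗ[F] W) × {D : End F U // IsNilpotent D} :=
  have key : ∀ T : End F (W × U), T ∘ₗ LinearMap.inl F W U = LinearMap.inl F W U ∘ₗ S →
      blockEnd S (LinearMap.fst F W U ∘ₗ T ∘ₗ LinearMap.inr F W U)
        (LinearMap.snd F W U ∘ₗ T ∘ₗ LinearMap.inr F W U) = T := by
    intro T hT
    apply LinearMap.prod_ext
    · rw [hT]; simp [blockEnd]
    · ext x <;> simp [blockEnd]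
  { toFun := fun T =>
      (LinearMap.fst F W U ∘ₗ T.1 ∘ₗ LinearMap.inr F W U,
        ⟨LinearMap.snd F W U ∘ₗ T.1 ∘ₗ LinearMap.inr F W U, by
          rw [← isNilpotent_blockEnd hS, key T.1 T.2.2]; exact T.2.1⟩)
    invFun := fun p => ⟨blockEnd S p.1 p.2.1, (isNilpotent_blockEnd hS _ _).2 p.2.2, by
      simp [blockEnd]⟩
    left_inv := fun T => Subtype.ext (key T.1 T.2.2)
    right_inv := fun p => by
      refine Prod.ext ?_ (Subtype.ext ?_)
      · ext x; simp [blockEnd]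
      · ext x; simp [blockEnd] }

lemma card_nilpotent_congr (e : W ≃ₗ[F] V) :
    Nat.card {T : End F W // IsNilpotent T} = Nat.card {T : End F V // IsNilpotent T} := by
  refine Nat.card_congr (e.conjRingEquiv.toEquiv.subtypeEquiv fun T => ?_)
  exact (IsNilpotent.map_iff (f := e.conjRingEquiv) e.conjRingEquiv.injective).symm

/-- A nilpotent endomorphism of a `k`-dimensional subspace (the image of `i`) of an
`n`-dimensional space has `q ^ (k (n - k)) * N_(n - k)` nilpotent extensions: after the choice of a
complement they are block triangular. -/
lemma card_nilpotent_extending [Finite F] [FiniteDimensional F V] [FiniteDimensional F W]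
    (i : W →ₗ[F] V) (hi : Function.Injective i) {S : End F W} (hS : IsNilpotent S) :
    Nat.card {T : End F V // IsNilpotent T ∧ T ∘ₗ i = i ∘ₗ S} =
      Nat.card F ^ (finrank F W * (finrank F V - finrank F W)) *
        Nat.card {D : End F (Fin (finrank F V - finrank F W) → F) // IsNilpotent D} := by
  obtain ⟨Q, hQ⟩ := Submodule.exists_isCompl (LinearMap.range i)
  let e : (W × Q) ≃ₗ[F] V :=
    ((LinearEquiv.ofInjective i hi).prodCongr (LinearEquiv.refl F Q)).trans
      (Submodule.prodEquivOfIsCompl _ Q hQ)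
  have he : ∀ w, e (w, 0) = i w := by intro w; simp [e]
  have hdim : finrank F Q = finrank F V - finrank F W := by
    have := e.finrank_eq
    rw [Module.finrank_prod] at this
    omega
  have h1 : Nat.card {T : End F V // IsNilpotent T ∧ T ∘ₗ i = i ∘ₗ S} =
      Nat.card {T : End F (W × Q) //
        IsNilpotent T ∧ T ∘ₗ LinearMap.inl F W Q = LinearMap.inl F W Q ∘ₗ S} := by
    symm
    refine Nat.card_congr (e.conjRingEquiv.toEquiv.subtypeEquiv fun T => and_congr ?_ ?_)
    · exact (IsNilpotent.map_iff (f := e.conjRingEquiv) e.conjRingEquiv.injective).symm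
    · have hs : ∀ w, e.symm (i w) = (w, 0) := fun w => by rw [← he, e.symm_apply_apply]
      rw [LinearMap.ext_iff, LinearMap.ext_iff]
      refine forall_congr' fun w => ?_
      change T (w, 0) = (S w, 0) ↔ e (T (e.symm (i w))) = i (S w)
      rw [hs, ← he, e.injective.eq_iff]
  have : Finite (Q →ₗ[F] W) := Module.finite_of_finite F
  rw [h1, Nat.card_congr (nilpotentExtEquiv hS), Nat.card_prod,
    Module.natCard_eq_pow_finrank (K := F), Module.finrank_linearMap, hdim, mul_comm (finrank F W),
    card_nilpotent_congr (LinearEquiv.ofFinrankEq Q (Fin (finrank F V - finrank F W) → F)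
      (by simp [hdim]))]

end Blocks

/-! ### Orbits of vectors under nilpotent endomorphisms -/

section Shift

variable {F V : Type*} [Field F] [AddCommGroup V] [Module F V]

/-- The nilpotent Jordan block sending each standard basis vector of `F ^ k` to the next one, and
the last one to `0`. -/
def shiftEnd (F : Type*) [Field F] (k : ℕ) : End F (Fin k → F) where
  toFun x i := if 0 < i.1 then x ⟨i.1 - 1, by omega⟩ else 0
  map_add' x y := by ext i; by_cases h : 0 < i.1 <;> simp [h]
  map_smul' c x := by ext i; by_cases h : 0 < i.1 <;> simp [h]

lemma shiftEnd_apply (k : ℕ) (x : Fin k → F) (i : Fin k) :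
    shiftEnd F k x i = if 0 < i.1 then x ⟨i.1 - 1, by omega⟩ else 0 := rfl

lemma shiftEnd_isNilpotent (k : ℕ) : IsNilpotent (shiftEnd F k) := by
  have h : ∀ (m : ℕ) (x : Fin k → F) (i : Fin k), i.1 < m → (shiftEnd F k ^ m) x i = 0 := by
    intro m
    induction m with
    | zero => intro x i hi; omega
    | succ m ih =>
      intro x i hi
      rw [pow_succ', Module.End.mul_apply, shiftEnd_apply]
      split_ifs with h
      · exact ih _ _ (by simp only; omega)
      · rfl
  exact ⟨k, LinearMap.ext fun x => funext fun i => h k x i i.2⟩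

/-- A finite tuple extended by zero to a sequence. -/
def padZero {k : ℕ} (s : Fin k → V) (i : ℕ) : V := if h : i < k then s ⟨i, h⟩ else 0

lemma linearCombination_shiftEnd {k : ℕ} (s : Fin k → V) (i : Fin k) :
    Fintype.linearCombination F s (shiftEnd F k (Pi.single i 1)) = padZero s (i + 1) := by
  rw [padZero]
  split_ifs with h
  · have : shiftEnd F k (Pi.single i 1) = Pi.single ⟨i + 1, h⟩ 1 := by
      ext j
      rw [shiftEnd_apply]
      simp only [Pi.single_apply, Fin.ext_iff]
      split_ifs <;> first | rfl | omega
    rw [this, Fintype.linearCombination_apply_single, one_smul]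
  · have : shiftEnd F k (Pi.single i 1) = 0 := by
      ext j
      rw [shiftEnd_apply]
      simp only [Pi.single_apply, Fin.ext_iff, Pi.zero_apply]
      split_ifs <;> first | rfl | omega
    rw [this, map_zero]

/-- Shifting a linearly independent tuple `s` means extending the Jordan block `shiftEnd`,
transported to the span of `s`, so these endomorphisms are counted by
`card_nilpotent_extending`. -/
lemma card_nilpotent_shifting [Finite F] [FiniteDimensional F V] {k : ℕ} {s : Fin k → V}
    (hs : LinearIndependent F s) :
    Nat.card {T : End F V // IsNilpotent T ∧ ∀ i : Fin k, T (s i) = padZero s (i + 1)} =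
      Nat.card F ^ (k * (finrank F V - k)) *
        Nat.card {D : End F (Fin (finrank F V - k) → F) // IsNilpotent D} := by
  have h := card_nilpotent_extending (Fintype.linearCombination F s)
    (linearIndependent_iff_injective_fintypeLinearCombination.1 hs) (shiftEnd_isNilpotent (F := F) k)
  rw [Module.finrank_fin_fun] at h
  rw [← h]
  refine Nat.card_congr (Equiv.subtypeEquivRight fun T => and_congr Iff.rfl ?_)
  constructor
  · intro hT
    refine LinearMap.pi_ext' fun i => LinearMap.ext_ring ?_
    simp only [LinearMap.comp_apply, LinearMap.single_apply, linearCombination_shiftEnd,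
      Fintype.linearCombination_apply_single, one_smul]
    exact hT i
  · intro hT i
    have := LinearMap.congr_fun hT (Pi.single i 1)
    simpa only [LinearMap.comp_apply, linearCombination_shiftEnd,
      Fintype.linearCombination_apply_single, one_smul] using this

/-- If `k` is least with `T ^ k v = 0`, then `v, T v, …, T ^ (k - 1) v` are linearly independent. -/
lemma linearIndependent_orbit (T : End F V) (k : ℕ) (v : V) (h0 : (T ^ k) v = 0)
    (h1 : ∀ i < k, (T ^ i) v ≠ 0) : LinearIndependent F fun i : Fin k => (T ^ (i : ℕ)) v := by
  induction k generalizing v with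
  | zero => exact linearIndependent_empty_type
  | succ k ih =>
    have hk : ∀ i, (T ^ i) (T v) = (T ^ (i + 1)) v := fun i => by
      rw [pow_succ, Module.End.mul_apply]
    have hc : (fun i : Fin (k + 1) => (T ^ (i : ℕ)) v) =
        Fin.cons v (fun i : Fin k => (T ^ (i : ℕ)) (T v)) := by
      ext i
      refine Fin.cases ?_ (fun j => ?_) i
      · simp
      · simp [hk]
    rw [hc, linearIndependent_finCons]
    refine ⟨ih (T v) (by rw [hk, h0]) fun i hi => by rw [hk]; exact h1 _ (by omega), fun hv => ?_⟩
    -- `T ^ k` kills the span of the later vectors, but not `v`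
    have hle : Submodule.span F (Set.range fun i : Fin k => (T ^ (i : ℕ)) (T v)) ≤
        LinearMap.ker (T ^ k) := by
      rw [Submodule.span_le]
      rintro _ ⟨i, rfl⟩
      simp only [SetLike.mem_coe, LinearMap.mem_ker]
      rw [hk, ← Module.End.mul_apply, ← pow_add, show k + (i.1 + 1) = i.1 + (k + 1) by omega,
        pow_add, Module.End.mul_apply, h0, map_zero]
    exact h1 k (by omega) (hle hv)

lemma pow_apply_padZero {k : ℕ} {s : Fin k → V} {T : End F V}
    (h : ∀ i : Fin k, T (s i) = padZero s (i + 1)) (i : ℕ) (hi : i ≤ k) :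
    (T ^ i) (padZero s 0) = padZero s i := by
  induction i with
  | zero => simp
  | succ i ih =>
    rw [pow_succ', Module.End.mul_apply, ih (by omega), ← h ⟨i, by omega⟩]
    simp [padZero, show i < k by omega]

/-- A nilpotent endomorphism with a vector is the same as a linearly independent tuple (the orbit
of the vector until it reaches `0`) with a nilpotent endomorphism shifting it. The length of the
tuple is bounded by a given `n ≥ dim V`, to keep the index type finite. -/
noncomputable def orbitEquiv [FiniteDimensional F V] (n : ℕ) (hn : finrank F V ≤ n) :
    (Σ k : Fin (n + 1), Σ s : {s : Fin k → V // LinearIndependent F s},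
      {T : End F V // IsNilpotent T ∧ ∀ i : Fin k, T (s.1 i) = padZero s.1 (i + 1)}) ≃
    {T : End F V // IsNilpotent T} × V :=
  Equiv.ofBijective (fun p => (⟨p.2.2.1, p.2.2.2.1⟩, padZero p.2.1.1 0)) <| by
    constructor
    · rintro ⟨⟨k, hk⟩, ⟨s, hs⟩, ⟨T, hT, hTs⟩⟩ ⟨⟨l, hl⟩, ⟨t, ht⟩, ⟨T', hT', hTt⟩⟩ h
      simp only [Prod.mk.injEq, Subtype.mk.injEq] at h
      obtain ⟨rfl, hv⟩ := h
      dsimp only at s hs hTs t ht hTt hv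
      have hs0 : ∀ i (hi : i < k), padZero s i = s ⟨i, hi⟩ := fun i hi => by simp [padZero, hi]
      have ht0 : ∀ i (hi : i < l), padZero t i = t ⟨i, hi⟩ := fun i hi => by simp [padZero, hi]
      have hsk : padZero s k = 0 := by simp [padZero]
      have htl : padZero t l = 0 := by simp [padZero]
      have e1 := pow_apply_padZero hTs
      have e2 := pow_apply_padZero hTt
      rw [hv] at e1
      -- both lengths are the first exponent at which the orbit vanishes
      have hkl : k = l := by
        rcases lt_trichotomy k l with h | h | h
        · exact absurd (by rw [← ht0 k h, ← e2 k h.le, e1 k le_rfl, hsk]) (ht.ne_zero ⟨k, h⟩)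
        · exact h
        · exact absurd (by rw [← hs0 l h, ← e1 l h.le, e2 l le_rfl, htl]) (hs.ne_zero ⟨l, h⟩)
      subst hkl
      have hst : s = t := by
        ext i
        rw [← hs0 i i.2, ← ht0 i i.2, ← e1 i i.2.le, ← e2 i i.2.le]
      subst hst
      rfl
    · rintro ⟨⟨T, hT⟩, v⟩
      classical
      have hex : ∃ k, (T ^ k) v = 0 := by
        obtain ⟨k, hk⟩ := hT
        exact ⟨k, by rw [hk]; rfl⟩
      have h0 := Nat.find_spec hex
      have h1 : ∀ i < Nat.find hex, (T ^ i) v ≠ 0 := fun i hi => Nat.find_min hex hi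
      generalize Nat.find hex = k at h0 h1
      have hli := linearIndependent_orbit T k v h0 h1
      have hkn : k ≤ finrank F V := by simpa using hli.fintype_card_le_finrank
      have hpad : ∀ i ≤ k, padZero (fun i : Fin k => (T ^ (i : ℕ)) v) i = (T ^ i) v := by
        intro i hi
        rcases hi.lt_or_eq with h | rfl
        · simp [padZero, h]
        · simp [padZero, h0]
      refine ⟨⟨⟨k, by omega⟩, ⟨_, hli⟩, ⟨T, hT, fun i => ?_⟩⟩, ?_⟩
      · rw [hpad _ i.2, pow_succ', Module.End.mul_apply]
      · have := hpad 0 (Nat.zero_le k)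
        rw [pow_zero] at this
        exact Prod.ext rfl this

end Shift

/-! ### The recursion and its solution -/

/-- Counting pairs of a nilpotent endomorphism of `F ^ n` and a vector by the length of the orbit
of the vector. -/
lemma card_nilpotent_recursion (F : Type*) [Field F] [Finite F] (n : ℕ) :
    Nat.card {T : End F (Fin n → F) // IsNilpotent T} * Nat.card F ^ n =
      ∑ k ∈ Finset.range (n + 1), (∏ j ∈ Finset.range k, (Nat.card F ^ n - Nat.card F ^ j)) *
        (Nat.card F ^ (k * (n - k)) *
          Nat.card {T : End F (Fin (n - k) → F) // IsNilpotent T}) := by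
  have := Fintype.ofFinite F
  have hfin : Finite (End F (Fin n → F)) := Module.finite_of_finite F
  have h := Nat.card_congr (orbitEquiv (F := F) (V := Fin n → F) n (by simp))
  rw [Nat.card_prod, Nat.card_sigma] at h
  rw [Nat.card_fun, Nat.card_fin] at h
  rw [← h, Finset.sum_range]
  refine Finset.sum_congr rfl fun k _ => ?_
  have := Fintype.ofFinite {s : Fin k → (Fin n → F) // LinearIndependent F s}
  rw [Nat.card_sigma, Finset.sum_congr rfl fun s _ => card_nilpotent_shifting s.2,
    Finset.sum_const, Finset.card_univ, ← Nat.card_eq_fintype_card,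
    card_linearIndependent (by simpa using Nat.le_of_lt_succ k.2), smul_eq_mul,
    Finset.prod_range, Nat.card_eq_fintype_card (α := F), Module.finrank_fin_fun]

/-- The recursion holds for `q ^ (m (m - 1))`: writing `L k` for the product, the `k`-th term is
`L k * q ^ (n (n - k)) - L (k + 1) * q ^ (n (n - k - 1))`. -/
lemma telescoping_sum (q n : ℕ) (hq : 1 ≤ q) :
    ∑ k ∈ Finset.range (n + 1), (∏ j ∈ Finset.range k, (q ^ n - q ^ j)) *
      (q ^ (k * (n - k)) * q ^ ((n - k) * (n - k - 1))) = q ^ (n * n) := by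
  have hterm : ∀ m ≤ n, ∑ k ∈ Finset.range m, (∏ j ∈ Finset.range k, (q ^ n - q ^ j)) *
      (q ^ (k * (n - k)) * q ^ ((n - k) * (n - k - 1))) +
        (∏ j ∈ Finset.range m, (q ^ n - q ^ j)) * q ^ (n * (n - m)) = q ^ (n * n) := by
    intro m
    induction m with
    | zero => simp
    | succ m ih =>
      intro hm
      rw [← ih (by omega), Finset.sum_range_succ, Finset.prod_range_succ, add_assoc]
      congr 1
      rw [mul_assoc, ← mul_add]
      congr 1
      obtain ⟨d, rfl⟩ : ∃ d, n = m + 1 + d := ⟨n - (m + 1), by omega⟩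
      have e1 : m + 1 + d - m = d + 1 := by omega
      have e2 : m + 1 + d - (m + 1) = d := by omega
      have hle : q ^ m ≤ q ^ (m + 1 + d) := Nat.pow_le_pow_right hq (by omega)
      rw [e1, e2, Nat.add_sub_cancel]
      zify [hle]
      ring
  rw [Finset.sum_range_succ]
  simpa using hterm n le_rfl

/-- The Fine–Herstein theorem on the number of nilpotent endomorphisms. -/
theorem card_nilpotent_end (F : Type*) [Field F] [Finite F] (n : ℕ) :
    Nat.card {T : End F (Fin n → F) // IsNilpotent T} = Nat.card F ^ (n * (n - 1)) := by
  induction n using Nat.strong_induction_on with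
  | _ n ih =>
    rcases Nat.eq_zero_or_pos n with rfl | hn
    · have : Subsingleton (End F (Fin 0 → F)) := inferInstance
      have : Unique {T : End F (Fin 0 → F) // IsNilpotent T} :=
        { default := ⟨0, IsNilpotent.zero⟩
          uniq := fun _ => Subsingleton.elim _ _ }
      simp
    have hq : 1 < Nat.card F := Finite.one_lt_card
    have h1 := card_nilpotent_recursion F n
    have h2 := telescoping_sum (Nat.card F) n hq.le
    rw [Finset.sum_range_succ'] at h1 h2
    rw [Finset.sum_congr rfl fun k hk => by
      rw [ih (n - (k + 1)) (by omega)]] at h1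
    simp only [Finset.range_zero, Finset.prod_empty, zero_mul, pow_zero, one_mul,
      Nat.sub_zero] at h1 h2
    have hp : 1 < Nat.card F ^ n := Nat.one_lt_pow (by omega) hq
    have e : Nat.card F ^ (n * n) = Nat.card F ^ (n * (n - 1)) * Nat.card F ^ n := by
      rw [← pow_add, ← Nat.mul_succ, Nat.succ_eq_add_one, Nat.sub_add_cancel hn]
    rw [e] at h2
    -- both sides solve `x * q ^ n = c + x` with the same `c`, and `q ^ n ≠ 1`
    zify at h1 h2 hp ⊢
    have : ((Nat.card {T : End F (Fin n → F) // IsNilpotent T} : ℤ) -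
        (Nat.card F : ℤ) ^ (n * (n - 1))) * ((Nat.card F : ℤ) ^ n - 1) = 0 := by
      linear_combination h1 + h2
    rcases mul_eq_zero.1 this with h | h
    · linarith
    · linarith

/-! ### From nilpotent endomorphisms to unipotent matrices -/

/-- An `n × n` matrix is nilpotent exactly when its `n`-th power vanishes. -/
lemma matrix_pow_eq_zero_iff {F : Type*} [Field F] {n : ℕ} (A : Matrix (Fin n) (Fin n) F) :
    A ^ n = 0 ↔ IsNilpotent A := by
  refine ⟨fun h => ⟨n, h⟩, fun h => ?_⟩
  have h' : A.charpoly = Polynomial.X ^ n := by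
    simpa [sub_eq_zero] using (Matrix.isNilpotent_charpoly_sub_pow_of_isNilpotent h).eq_zero
  simpa [h'] using A.aeval_self_charpoly

/-- The number of unipotent elements of `GL(n,q)` is `q^(n(n-1))`. -/
theorem statement7 (q : ℕ) (hq : IsPrimePow q) (n : ℕ) (hn : 1 ≤ n)
    (F : Type) [Field F] [Fintype F] (hF : Fintype.card F = q) :
    Nat.card {A : Matrix.GeneralLinearGroup (Fin n) F //
        ((A : Matrix (Fin n) (Fin n) F) - 1) ^ n = 0} = q ^ (n * (n - 1)) := by
  rw [← hF, ← Nat.card_eq_fintype_card, ← card_nilpotent_end F n]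
  refine Nat.card_congr (Equiv.ofBijective (fun A => ⟨Matrix.toLinAlgEquiv'
    ((A.1 : Matrix (Fin n) (Fin n) F) - 1),
    IsNilpotent.map ((matrix_pow_eq_zero_iff _).1 A.2) Matrix.toLinAlgEquiv'⟩) ⟨?_, ?_⟩)
  · intro A B h
    have := Matrix.toLinAlgEquiv'.injective (Subtype.ext_iff.1 h)
    exact Subtype.ext (Units.ext (sub_left_injective this))
  · rintro ⟨T, hT⟩
    have hN : IsNilpotent (Matrix.toLinAlgEquiv'.symm T) := hT.map Matrix.toLinAlgEquiv'.symm
    obtain ⟨u, hu⟩ := hN.isUnit_one_add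
    have hu' : (u : Matrix (Fin n) (Fin n) F) - 1 = Matrix.toLinAlgEquiv'.symm T := by
      rw [hu, add_sub_cancel_left]
    refine ⟨⟨u, by rw [hu', matrix_pow_eq_zero_iff]; exact hN⟩, Subtype.ext ?_⟩
    simp only [hu', AlgEquiv.apply_symm_apply]
end

section
/- For every prime power q and every integer n ≥ 1, the number of unipotent elements of the finite unitary group U(n,q) is exactly q^{n(n−1)}. -/
/-!
Let `star x = x ^ q` on `F`. The Cayley transform `H ↦ (1 + a H) (1 + a* H)⁻¹`, for a fixed `a` with
`star a ≠ a`, is a bijection from nilpotent Hermitian matrices to unipotent unitary matrices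
(`card_cayley`), so the task is to show that a nondegenerate Hermitian space `V` of dimension `n`
over `F` has `q ^ (n² - n)` nilpotent self-adjoint operators (`nilCount_eq`). This is proved by
strong induction on `n`, by evaluating in two ways the sum of `mob (dim W)` over all pairs `(W, N)`
with `W` a totally isotropic subspace and `N` a nilpotent self-adjoint operator vanishing on `W`,
where `mob k = (-1) ^ k * q ^ (k (k - 1))` is the Möbius function of the lattice of subspaces.

* For fixed `N ≠ 0`, choose `e = N y ≠ 0` with `N e = 0`. Then `e` is a vector of `ker N` orthogonal
  to `ker N`, and the totally isotropic subspaces of `ker N` that do not contain `e` cancel against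
  those that do (`sum_mob_isotropic_le`). So only `N = 0` contributes.
* For fixed `W` of dimension `k`, the self-adjoint operators vanishing on `W` are `q ^ (n - k)²` in
  number (`card_selfAdjoint`); they induce all self-adjoint operators of `W^⊥ / W`, and are
  nilpotent exactly when the induced operator is (`nilCount_reduction`). For `k > 0` the induction
  hypothesis therefore gives the proportion of nilpotent ones, namely `q ^ -(n - 2 * k)`.

Hence the count for `W = 0` is determined by the numbers of totally isotropic subspaces of each
dimension. These have the classical product formula (`isoCount_eq`), deduced from the number of
isotropic vectors (`card_isotropic`), and the resulting numerical identity is `sum_mob_eq`; both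
sides of it satisfy the same two-step recursion in `n`.
-/

open Matrix

section

open Module

/-! ### Finite fields with an involution -/

/-- All fibres of a surjective additive homomorphism have the same size. -/
lemma card_fiber_mul {A B : Type*} [AddCommGroup A] [AddCommGroup B] [Finite A]
    (f : A →+ B) (hf : Function.Surjective f) (b : B) :
    Nat.card {a // f a = b} * Nat.card B = Nat.card A := by
  obtain ⟨a₀, rfl⟩ := hf b
  have e : {a // f a = f a₀} ≃ f.ker :=
    { toFun := fun a => ⟨a - a₀, by simp [AddMonoidHom.mem_ker, a.2]⟩
      invFun := fun a => ⟨a + a₀, by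
        have := a.2
        rw [AddMonoidHom.mem_ker] at this
        simp [this]⟩
      left_inv := fun a => by simp
      right_inv := fun a => by simp }
  rw [Nat.card_congr e, ← Nat.card_congr (QuotientAddGroup.quotientKerEquivOfSurjective f hf).toEquiv,
    mul_comm, ← AddSubgroup.card_eq_card_quotient_mul_card_addSubgroup]

lemma one_lt_of_card {F : Type} [Field F] [Fintype F] {q : ℕ} (hF : Fintype.card F = q ^ 2) : 1 < q := by
  have := Fintype.one_lt_card (α := F)
  rw [hF] at this
  by_contra h
  interval_cases q <;> simp at this

section Field

variable {F : Type} [Field F] [StarRing F]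

/-- A conjugate-linear involution `τ` preserving a subspace `X` has exactly `√|X|` fixed points
in `X`: with `star a ≠ a`, every `x ∈ X` is uniquely `h₁ + a • h₂` with `h₁`, `h₂` fixed. -/
lemma card_fixed_sq {M : Type} [AddCommGroup M] [Module F M] (X : Submodule F M)
    (a : F) (ha : star a ≠ a) (τ : M → M) (hadd : ∀ x y, τ (x + y) = τ x + τ y)
    (hsmul : ∀ (c : F) x, τ (c • x) = star c • τ x) (hinv : ∀ x ∈ X, τ (τ x) = x)
    (hX : ∀ x ∈ X, τ x ∈ X) :
    Nat.card {x // x ∈ X ∧ τ x = x} ^ 2 = Nat.card X := by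
  have hd : a - star a ≠ 0 := fun h => ha (sub_eq_zero.1 h).symm
  have hd' : star a - a ≠ 0 := fun h => ha (sub_eq_zero.1 h)
  have hneg : ∀ x, τ (-x) = - τ x := fun x => by
    have := hsmul (-1) x
    simpa using this
  have hsub : ∀ x y, τ (x - y) = τ x - τ y := fun x y => by
    rw [sub_eq_add_neg, hadd, hneg, ← sub_eq_add_neg]
  have e : {x // x ∈ X ∧ τ x = x} × {x // x ∈ X ∧ τ x = x} ≃ X :=
    { toFun := fun p => ⟨p.1.1 + a • p.2.1, X.add_mem p.1.2.1 (X.smul_mem _ p.2.2.1)⟩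
      invFun := fun x =>
        (⟨(star a - a)⁻¹ • (star a • x.1 - a • τ x.1),
          X.smul_mem _ (X.sub_mem (X.smul_mem _ x.2) (X.smul_mem _ (hX _ x.2))), by
            rw [hsmul, hsub, hsmul, hsmul, hinv _ x.2, star_star, star_inv₀, star_sub, star_star,
              ← neg_sub (star a) a, inv_neg, neg_smul, ← smul_neg, neg_sub]⟩,
         ⟨(a - star a)⁻¹ • (x.1 - τ x.1), X.smul_mem _ (X.sub_mem x.2 (hX _ x.2)), by
            rw [hsmul, hsub, hinv _ x.2, star_inv₀, star_sub, star_star,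
              ← neg_sub a (star a), inv_neg, neg_smul, ← smul_neg, neg_sub]⟩)
      left_inv := by
        rintro ⟨⟨x, hx, hx'⟩, ⟨y, hy, hy'⟩⟩
        ext
        · simp only [hadd, hsmul, hx', hy']
          rw [inv_smul_eq_iff₀ hd']
          module
        · simp only [hadd, hsmul, hx', hy']
          rw [inv_smul_eq_iff₀ hd]
          module
      right_inv := by
        rintro ⟨x, hx⟩
        ext
        simp only
        rw [← neg_sub (star a) a, inv_neg, neg_smul, smul_neg, smul_comm a, ← sub_eq_add_neg,
          ← smul_sub, inv_smul_eq_iff₀ hd']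
        module }
  rw [sq, ← Nat.card_prod, Nat.card_congr e]

variable [Fintype F] {q : ℕ}

lemma exists_star_ne (hF : Fintype.card F = q ^ 2) (hs : ∀ x : F, star x = x ^ q) :
    ∃ a : F, star a ≠ a := by
  by_contra! h
  have hq := one_lt_of_card hF
  have hle := Polynomial.card_roots' (Polynomial.X ^ q - Polynomial.X : Polynomial F)
  rw [FiniteField.X_pow_card_sub_X_natDegree_eq F hq] at hle
  have h2 : (Finset.univ : Finset F).val ≤
      (Polynomial.X ^ q - Polynomial.X : Polynomial F).roots := by
    rw [Multiset.le_iff_subset Finset.univ.nodup]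
    intro x _
    rw [Polynomial.mem_roots (FiniteField.X_pow_card_sub_X_ne_zero F hq)]
    simp [← hs, h]
  have h3 := Multiset.card_le_card h2
  simp only [Finset.card_val, Finset.card_univ, hF] at h3
  nlinarith

lemma card_star_fixed (hF : Fintype.card F = q ^ 2) (hs : ∀ x : F, star x = x ^ q) :
    Nat.card {x : F // star x = x} = q := by
  obtain ⟨a, ha⟩ := exists_star_ne hF hs
  have := card_fixed_sq (⊤ : Submodule F F) a ha star star_add (fun c x => by simp)
    (fun x _ => star_star x) (fun _ _ => trivial)
  rw [Nat.card_congr (Submodule.topEquiv (R := F) (M := F)).toEquiv,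
    Nat.card_eq_fintype_card (α := F), hF] at this
  simpa using Nat.pow_left_injective (n := 2) (by norm_num) this

/-- Every fibre of a trace map `c ↦ c * b + star (c * b)` over a `star`-fixed element has `q`
elements. -/
lemma card_trace_fiber (hF : Fintype.card F = q ^ 2) (hs : ∀ x : F, star x = x ^ q)
    (b : F) (hb : b ≠ 0) (t : F) (ht : star t = t) :
    Nat.card {c : F // c * b + star (c * b) = t} = q := by
  have hq := one_lt_of_card hF
  obtain ⟨a, ha⟩ := exists_star_ne hF hs
  let K : AddSubgroup F := (AddMonoidHom.id F).eqLocus (starAddEquiv (R := F)).toAddMonoidHom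
  have hK : ∀ x, x ∈ K ↔ star x = x := fun x => eq_comm
  have hKc : Nat.card K = q := by
    rw [← card_star_fixed hF hs]
    exact Nat.card_congr (Equiv.subtypeEquivRight hK)
  let f : F →+ K :=
    { toFun := fun c => ⟨c * b + star (c * b), by rw [hK]; simp [add_comm, mul_comm]⟩
      map_zero' := by ext; simp
      map_add' := fun x y => by ext; simp [add_mul]; ring }
  -- `a / (a - star a)` has trace one, so a fixed `s` is the trace of `s * (a / (a - star a))`
  have hd : a - star a ≠ 0 := fun h => ha (sub_eq_zero.1 h).symm
  have hd' : star a - a ≠ 0 := fun h => ha (sub_eq_zero.1 h)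
  have hf : Function.Surjective f := by
    rintro ⟨s, hsK⟩
    rw [hK] at hsK
    refine ⟨s * (a / (a - star a)) / b, ?_⟩
    ext
    simp only [f, AddMonoidHom.coe_mk, ZeroHom.coe_mk]
    rw [div_mul_cancel₀ _ hb]
    simp only [star_mul', star_div₀, star_sub, star_star, hsK]
    rw [← neg_sub a (star a)]
    field_simp
    ring
  have := card_fiber_mul f hf ⟨t, (hK t).2 ht⟩
  rw [hKc, Nat.card_eq_fintype_card (α := F), hF, sq] at this
  have h2 := Nat.eq_of_mul_eq_mul_right (by omega) this
  rw [← h2]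
  exact Nat.card_congr (Equiv.subtypeEquivRight fun c => by simp [f, Subtype.ext_iff])

/-- The norm `c ↦ star c * c` is surjective onto the `star`-fixed elements. -/
lemma exists_star_mul_self_eq (hF : Fintype.card F = q ^ 2) (hs : ∀ x : F, star x = x ^ q)
    (t : F) (ht : star t = t) : ∃ c : F, star c * c = t := by
  have hq := one_lt_of_card hF
  rcases eq_or_ne t 0 with rfl | h0
  · exact ⟨0, by simp⟩
  obtain ⟨g, hg⟩ := IsCyclic.exists_generator (α := Fˣ)
  have hord : orderOf g = (q - 1) * (q + 1) := by
    rw [orderOf_eq_card_of_forall_mem_zpowers hg, Nat.card_units, Nat.card_eq_fintype_card,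
      hF]
    obtain ⟨r, rfl⟩ := Nat.exists_eq_add_of_lt hq
    simp only [Nat.add_sub_cancel]
    rw [Nat.sub_eq_iff_eq_add (Nat.one_le_pow _ _ (by omega))]
    ring_nf
  obtain ⟨k, hk⟩ := (mem_powers_iff_mem_zpowers).2 (hg (Units.mk0 t h0))
  simp only at hk
  have h1 : (g ^ k) ^ (q - 1) = 1 := by
    rw [hk]
    ext
    have : t ^ (q - 1) * t = 1 * t := by
      rw [← pow_succ, Nat.sub_add_cancel hq.le, ← hs, ht, one_mul]
    simpa using mul_right_cancel₀ h0 this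
  rw [← pow_mul, ← orderOf_dvd_iff_pow_eq_one, hord, mul_comm k] at h1
  obtain ⟨j, rfl⟩ := Nat.dvd_of_mul_dvd_mul_left (by omega) h1
  refine ⟨((g ^ j : Fˣ) : F), ?_⟩
  have := congrArg Units.val hk
  rw [Units.val_mk0] at this
  rw [hs, ← pow_succ, ← this]
  push_cast
  ring

end Field

/-! ### Hermitian spaces -/

section Hermitian

variable {F : Type} [Field F] [StarRing F] {V : Type} [AddCommGroup V] [Module F V]

/-- A nondegenerate Hermitian form, conjugate-linear in the first variable. -/
structure IsHerm (B : V →ₗ⋆[F] V →ₗ[F] F) : Prop where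
  symm : ∀ x y, star (B x y) = B y x
  nondeg : ∀ x, (∀ y, B x y = 0) → x = 0

/-- The orthogonal complement of a subspace with respect to `B`. -/
abbrev perp (B : V →ₗ⋆[F] V →ₗ[F] F) (W : Submodule F V) : Submodule F V := W.orthogonalBilin B

/-- The restriction of `B` to a subspace. -/
abbrev restr (B : V →ₗ⋆[F] V →ₗ[F] F) (U : Submodule F V) : U →ₗ⋆[F] U →ₗ[F] F :=
  B.domRestrict₁₂ U U

variable {B : V →ₗ⋆[F] V →ₗ[F] F}

lemma mem_perp {W : Submodule F V} {y : V} : y ∈ perp B W ↔ ∀ w ∈ W, B w y = 0 := Iff.rfl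

lemma IsHerm.swap (hB : IsHerm B) {x y : V} (h : B x y = 0) : B y x = 0 := by
  rw [← hB.symm, h, star_zero]

lemma le_perp_perp (hB : IsHerm B) (W : Submodule F V) : W ≤ perp B (perp B W) :=
  fun _ hx _ hy => hB.swap (hy _ hx)

lemma restr_isHerm_of_disjoint (hB : IsHerm B) (U : Submodule F V)
    (h : U ⊓ perp B U = ⊥) : IsHerm (restr B U) where
  symm x y := hB.symm x y
  nondeg x hx := by
    have : (x : V) ∈ U ⊓ perp B U := ⟨x.2, fun w hw => hB.swap (hx ⟨w, hw⟩)⟩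
    rw [h] at this
    exact Subtype.ext this

variable [Finite F] [Module.Finite F V]

lemma IsHerm.bijective (hB : IsHerm B) : Function.Bijective B := by
  have : Finite V := Module.finite_of_finite F
  have : Finite (Dual F V) := Module.finite_of_finite F
  rw [Nat.bijective_iff_injective_and_card]
  refine ⟨(injective_iff_map_eq_zero B).2 fun x hx => hB.nondeg x fun y => by simp [hx], ?_⟩
  rw [natCard_eq_pow_finrank (K := F), natCard_eq_pow_finrank (K := F) (V := Dual F V),
    Subspace.dual_finrank_eq]

lemma finrank_perp (hB : IsHerm B) (W : Submodule F V) :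
    finrank F (perp B W) + finrank F W = finrank F V := by
  have : Finite V := Module.finite_of_finite F
  have : Finite (Dual F W) := Module.finite_of_finite F
  let f : V →+ Dual F W :=
    { toFun := fun x => (B x).comp W.subtype
      map_zero' := by ext; simp
      map_add' := fun x y => by ext; simp }
  have hf : Function.Surjective f := by
    intro φ
    obtain ⟨g, hg⟩ := LinearMap.exists_extend φ
    obtain ⟨x, hx⟩ := hB.bijective.2 g
    exact ⟨x, by simp only [f, AddMonoidHom.coe_mk, ZeroHom.coe_mk, hx, hg]⟩
  have h := card_fiber_mul f hf 0
  have e : {x // f x = 0} ≃ perp B W := Equiv.subtypeEquivRight fun x => by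
    rw [mem_perp]
    constructor
    · intro h w hw
      exact hB.swap (LinearMap.congr_fun h ⟨w, hw⟩)
    · intro h
      ext w
      exact hB.swap (h w w.2)
  rw [Nat.card_congr e, natCard_eq_pow_finrank (K := F) (V := perp B W),
    natCard_eq_pow_finrank (K := F) (V := Dual F W), natCard_eq_pow_finrank (K := F) (V := V),
    Subspace.dual_finrank_eq, ← pow_add] at h
  exact Nat.pow_right_injective (Finite.one_lt_card (α := F)) h

lemma perp_perp (hB : IsHerm B) (W : Submodule F V) : perp B (perp B W) = W := by
  have h1 := finrank_perp hB W
  have h2 := finrank_perp hB (perp B W)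
  exact (Submodule.eq_of_le_of_finrank_eq (le_perp_perp hB W) (by omega)).symm

lemma two_mul_finrank_le (hB : IsHerm B) {W : Submodule F V} (hW : W ≤ perp B W) :
    2 * finrank F W ≤ finrank F V := by
  have h1 := finrank_perp hB W
  have h2 := Submodule.finrank_mono hW
  omega

/-- A complement `U` of a totally isotropic `W` in `W^⊥` is a concrete model of the Hermitian space
`W^⊥ / W`. -/
lemma exists_reduction (hB : IsHerm B) {W : Submodule F V} (hW : W ≤ perp B W) :
    ∃ U : Submodule F V, W ⊔ U = perp B W ∧ W ⊓ U = ⊥ ∧ U ⊓ perp B U = ⊥ ∧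
      finrank F U + 2 * finrank F W = finrank F V := by
  obtain ⟨U, hd, hs⟩ := IsModularLattice.exists_disjoint_and_sup_eq hW
  have hd' : W ⊓ U = ⊥ := hd.eq_bot
  refine ⟨U, hs, hd', ?_, ?_⟩
  · rw [eq_bot_iff]
    rintro u ⟨hu, hu'⟩
    have : u ∈ perp B (perp B W) := by
      rw [← hs]
      intro y hy
      obtain ⟨w, hw, v, hv, rfl⟩ := Submodule.mem_sup.1 hy
      have hup : u ∈ perp B W := hs ▸ (le_sup_right : U ≤ W ⊔ U) hu
      rw [map_add, LinearMap.add_apply, hup w hw, hu' v hv, add_zero]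
    rw [perp_perp hB] at this
    exact hd' ▸ ⟨this, hu⟩
  · have h1 := Submodule.finrank_sup_add_finrank_inf_eq W U
    rw [hs, hd', finrank_bot] at h1
    have h2 := finrank_perp hB W
    omega

/-- Two-dimensional Hermitian spaces over a finite field contain isotropic vectors. -/
lemma exists_isotropic [Fintype F] {q : ℕ} (hF : Fintype.card F = q ^ 2)
    (hs : ∀ x : F, star x = x ^ q) (hB : IsHerm B) (hn : 2 ≤ finrank F V) :
    ∃ e : V, e ≠ 0 ∧ B e e = 0 := by
  have : Nontrivial V := Module.nontrivial_of_finrank_pos (R := F) (by omega)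
  obtain ⟨x, hx⟩ := exists_ne (0 : V)
  by_cases hxx : B x x = 0
  · exact ⟨x, hx, hxx⟩
  have h1 := finrank_perp hB (F ∙ x)
  rw [finrank_span_singleton hx] at h1
  have : Nontrivial (perp B (F ∙ x)) := Module.nontrivial_of_finrank_pos (R := F) (by omega)
  obtain ⟨⟨y, hy⟩, hy0⟩ := exists_ne (0 : perp B (F ∙ x))
  have hy0 : y ≠ 0 := fun h => hy0 (Subtype.ext h)
  have hxy : B x y = 0 := hy x (Submodule.mem_span_singleton_self x)
  obtain ⟨c, hc⟩ := exists_star_mul_self_eq hF hs (- B y y / B x x)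
    (by rw [star_div₀, star_neg, hB.symm, hB.symm])
  refine ⟨c • x + y, ?_, ?_⟩
  · intro h
    have h2 : B x (c • x + y) = 0 := by rw [h, map_zero]
    rw [map_add, map_smul, hxy, add_zero, smul_eq_mul, mul_eq_zero, or_iff_left hxx] at h2
    rw [h2, zero_smul, zero_add] at h
    exact hy0 h
  · simp only [map_add, LinearMap.map_smulₛₗ, LinearMap.add_apply, LinearMap.smul_apply,
      smul_eq_mul, hxy, hB.swap hxy, RingHom.id_apply, starRingEnd_apply]
    have : c * (star c * B x x) = - B y y := by
      rw [← mul_assoc, mul_comm c, hc, div_mul_cancel₀ _ hxx]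
    linear_combination this

end Hermitian

/-! ### Counting isotropic vectors -/

section Isotropic

variable {F : Type} [Field F] [StarRing F] {V : Type} [AddCommGroup V] [Module F V]
  {B : V →ₗ⋆[F] V →ₗ[F] F}

lemma mem_perp_span {e y : V} : y ∈ perp B (F ∙ e) ↔ B e y = 0 := by
  rw [mem_perp]
  refine ⟨fun h => h e (Submodule.mem_span_singleton_self e), fun h w hw => ?_⟩
  obtain ⟨c, rfl⟩ := Submodule.mem_span_singleton.1 hw
  simp [h]

lemma span_le_perp {e : V} (he : B e e = 0) : F ∙ e ≤ perp B (F ∙ e) := by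
  rw [Submodule.span_singleton_le_iff_mem, mem_perp_span, he]

lemma apply_smul_add_self (hB : IsHerm B) {e u : V} (he : B e e = 0) (hu : B e u = 0) (c : F) :
    B (c • e + u) (c • e + u) = B u u := by
  simp [he, hu, hB.swap hu]

/-- The isotropic vectors in `e^⊥` fibre over those of `U ≅ e^⊥ / e`, with fibres of size `|F|`. -/
lemma card_isotropic_perp (hB : IsHerm B) {e : V} (he0 : e ≠ 0) (he : B e e = 0)
    {U : Submodule F V} (hsup : F ∙ e ⊔ U = perp B (F ∙ e)) (hinf : F ∙ e ⊓ U = ⊥) :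
    Nat.card {x : V // B x x = 0 ∧ B e x = 0} =
      Nat.card F * Nat.card {u : U // restr B U u u = 0} := by
  have hU : ∀ u ∈ U, B e u = 0 := fun u hu =>
    mem_perp_span.1 (hsup ▸ (le_sup_right : U ≤ F ∙ e ⊔ U) hu)
  rw [← Nat.card_prod]
  symm
  refine Nat.card_congr (Equiv.ofBijective (fun p => ⟨p.1 • e + p.2.1, ?_, ?_⟩) ⟨?_, ?_⟩)
  · rw [apply_smul_add_self hB he (hU _ p.2.1.2)]
    exact p.2.2
  · rw [map_add, map_smul, he, hU _ p.2.1.2, smul_zero, add_zero]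
  · rintro ⟨c, u, hu⟩ ⟨c', u', hu'⟩ h
    simp only [Subtype.mk.injEq] at h
    have h1 : (c - c') • e = u' - u := by
      rw [sub_smul, sub_eq_sub_iff_add_eq_add, h, add_comm]
    have h2 : (c - c') • e ∈ F ∙ e ⊓ U :=
      ⟨Submodule.smul_mem _ _ (Submodule.mem_span_singleton_self e), h1 ▸ U.sub_mem u'.2 u.2⟩
    rw [hinf, Submodule.mem_bot] at h2
    have h3 : c = c' := by
      rcases smul_eq_zero.1 h2 with h | h
      · exact sub_eq_zero.1 h
      · exact absurd h he0
    subst h3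
    have h4 : (u : V) = u' := add_left_cancel h
    simp only [Prod.mk.injEq, true_and, Subtype.mk.injEq]
    exact Subtype.ext h4
  · rintro ⟨x, hx, hex⟩
    have : x ∈ F ∙ e ⊔ U := hsup ▸ mem_perp_span.2 hex
    obtain ⟨y, hy, u, hu, rfl⟩ := Submodule.mem_sup.1 this
    obtain ⟨c, rfl⟩ := Submodule.mem_span_singleton.1 hy
    rw [apply_smul_add_self hB he (hU u hu)] at hx
    exact ⟨⟨c, ⟨⟨u, hu⟩, hx⟩⟩, rfl⟩

variable [Fintype F] [Module.Finite F V] {q : ℕ}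

/-- On each line `x + F e` outside `e^⊥`, exactly `q` of the `q²` vectors are isotropic. -/
lemma card_isotropic_not_perp (hF : Fintype.card F = q ^ 2) (hs : ∀ x : F, star x = x ^ q)
    (hB : IsHerm B) {e : V} (he : B e e = 0) :
    Nat.card {x : V // B x x = 0 ∧ B e x ≠ 0} * q = Nat.card {x : V // B e x ≠ 0} := by
  have : Finite V := Module.finite_of_finite F
  have : Fintype {x : V // B e x ≠ 0} := Fintype.ofFinite _
  have hq := one_lt_of_card hF
  have e1 : {x : V // B x x = 0 ∧ B e x ≠ 0} × F ≃
      Σ x : {x : V // B e x ≠ 0}, {c : F // B (x.1 + c • e) (x.1 + c • e) = 0} :=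
    { toFun := fun p => ⟨⟨p.1.1 - p.2 • e, by simpa [he] using p.1.2.2⟩,
        ⟨p.2, by rw [sub_add_cancel]; exact p.1.2.1⟩⟩
      invFun := fun p => ⟨⟨p.1.1 + p.2.1 • e, p.2.2, by simpa [he] using p.1.2⟩, p.2.1⟩
      left_inv := by
        rintro ⟨⟨x, hx⟩, c⟩
        simp
      right_inv := by
        rintro ⟨⟨x, hx⟩, ⟨c, hc⟩⟩
        have : x + c • e - c • e = x := by abel
        simp only
        congr! 2
        simp [this] }
  have h := Nat.card_congr e1
  have : ∀ x : {x : V // B e x ≠ 0},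
      Nat.card {c : F // B (x.1 + c • e) (x.1 + c • e) = 0} = q := by
    rintro ⟨x, hx⟩
    have hxe : B x e ≠ 0 := fun h => hx (hB.swap h)
    rw [← card_trace_fiber hF hs _ hxe (- B x x) (by rw [star_neg, hB.symm])]
    refine Nat.card_congr (Equiv.subtypeEquivRight fun c => ?_)
    rw [eq_neg_iff_add_eq_zero, star_mul', hB.symm]
    simp only [map_add, map_smul, LinearMap.map_smulₛₗ, LinearMap.add_apply, LinearMap.smul_apply,
      smul_eq_mul, he, starRingEnd_apply]
    constructor <;> intro h <;> linear_combination h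
  rw [Nat.card_prod, Nat.card_sigma, Finset.sum_congr rfl fun x _ => this x, Finset.sum_const,
    Finset.card_univ, smul_eq_mul, ← Nat.card_eq_fintype_card, Nat.card_eq_fintype_card (α := F),
    hF, sq, ← mul_assoc] at h
  exact Nat.eq_of_mul_eq_mul_right (by omega) h

/-- `isoNum q n` is the number of nonzero isotropic vectors of an `n`-dimensional Hermitian
space over the field of `q²` elements, that is `(qⁿ - (-1)ⁿ) (qⁿ⁻¹ + (-1)ⁿ)`. -/
def isoNum (q n : ℕ) : ℚ := ((q : ℚ) ^ n - (-1) ^ n) * ((q : ℚ) ^ n + (-1) ^ n * q) / q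

lemma isoNum_zero (q : ℕ) : isoNum q 0 = 0 := by simp [isoNum]

lemma isoNum_one (q : ℕ) : isoNum q 1 = 0 := by simp [isoNum]

lemma isoNum_add_two {q : ℕ} (hq : q ≠ 0) (n : ℕ) :
    1 + isoNum q (n + 2) =
      (q : ℚ) ^ 2 * (1 + isoNum q n) + ((q : ℚ) ^ 2) ^ n * (q ^ 4 - q ^ 2) / q := by
  have hq' : (q : ℚ) ≠ 0 := by exact_mod_cast hq
  have h1 : ((-1 : ℚ) ^ n) ^ 2 = 1 := by rw [← pow_mul, mul_comm, pow_mul]; simp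
  unfold isoNum
  rw [pow_add, pow_add, ← pow_mul, mul_comm 2 n, pow_mul]
  generalize (-1 : ℚ) ^ n = s at *
  generalize (q : ℚ) ^ n = x
  field_simp
  linear_combination (q ^ 2 - 1 : ℚ) * h1

/-- The induction goes down by two dimensions: for an isotropic `e ≠ 0`, the isotropic vectors inside
and outside `e^⊥` are counted separately. -/
theorem card_isotropic (hF : Fintype.card F = q ^ 2) (hs : ∀ x : F, star x = x ^ q) (n : ℕ) :
    ∀ (V : Type) [AddCommGroup V] [Module F V] [Module.Finite F V] (B : V →ₗ⋆[F] V →ₗ[F] F),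
      IsHerm B → finrank F V = n → (Nat.card {x : V // B x x = 0} : ℚ) = 1 + isoNum q n := by
  have hq := one_lt_of_card hF
  induction n using Nat.strong_induction_on with
  | _ n ih =>
  intro V _ _ _ B hB hn
  have : Finite V := Module.finite_of_finite F
  by_cases h : ∃ e : V, e ≠ 0 ∧ B e e = 0
  · obtain ⟨e, he0, he⟩ := h
    obtain ⟨U, hsup, hinf, hU, hdim⟩ := exists_reduction hB (span_le_perp he)
    rw [finrank_span_singleton he0, hn] at hdim
    obtain ⟨m, rfl⟩ : ∃ m, n = m + 2 := ⟨finrank F U, by omega⟩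
    have hm : finrank F U = m := by omega
    have h1 := ih m (by omega) U (restr B U) (restr_isHerm_of_disjoint hB U hU) hm
    have h2 := card_isotropic_perp hB he0 he hsup hinf
    have h3 := card_isotropic_not_perp hF hs hB he
    have h4 : Nat.card {x : V // B x x = 0} = Nat.card {x : V // B x x = 0 ∧ B e x = 0} +
        Nat.card {x : V // B x x = 0 ∧ B e x ≠ 0} := by
      classical
      rw [← Nat.card_sum]
      exact Nat.card_congr (((Equiv.sumCompl fun x : {x : V // B x x = 0} => B e x = 0).symm).trans
        (Equiv.sumCongr (Equiv.subtypeSubtypeEquivSubtypeInter (fun x => B x x = 0) fun x => B e x = 0)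
          (Equiv.subtypeSubtypeEquivSubtypeInter (fun x => B x x = 0) fun x => ¬ B e x = 0)))
    have h5 : Nat.card V = Nat.card (perp B (F ∙ e)) + Nat.card {x : V // B e x ≠ 0} := by
      classical
      rw [← Nat.card_sum]
      exact Nat.card_congr ((Equiv.sumCompl fun x : V => B e x = 0).symm.trans
        (Equiv.sumCongr (Equiv.subtypeEquivRight fun x => mem_perp_span.symm) (Equiv.refl _)))
    have h6 := finrank_perp hB (F ∙ e)
    rw [finrank_span_singleton he0, hn] at h6
    rw [natCard_eq_pow_finrank (K := F), natCard_eq_pow_finrank (K := F) (V := perp B (F ∙ e)), hn,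
      show finrank F (perp B (F ∙ e)) = m + 1 by omega, Nat.card_eq_fintype_card, hF, ← h3] at h5
    rw [Nat.card_eq_fintype_card (α := F), hF] at h2
    rw [h4, h2, isoNum_add_two (by omega)]
    push_cast
    rw [h1]
    have hq' : (q : ℚ) ≠ 0 := by exact_mod_cast (by omega : q ≠ 0)
    have h5' : ((q : ℚ) ^ 2) ^ (m + 2) = (q ^ 2) ^ (m + 1) +
      Nat.card {x : V // B x x = 0 ∧ B e x ≠ 0} * q := by exact_mod_cast h5
    rw [pow_add, pow_add] at h5'
    congr 1
    rw [eq_div_iff hq']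
    linear_combination -h5'
  · have hn2 : n < 2 := by
      by_contra hn2
      exact h (exists_isotropic hF hs hB (by omega))
    push Not at h
    have : Nat.card {x : V // B x x = 0} = 1 := by
      rw [Nat.card_eq_one_iff_unique]
      refine ⟨⟨fun x y => ?_⟩, ⟨0, by simp⟩⟩
      have : ∀ x : {x : V // B x x = 0}, x.1 = 0 := fun x => by
        by_contra hx
        exact h x.1 hx x.2
      exact Subtype.ext ((this x).trans (this y).symm)
    rw [this]
    interval_cases n <;> simp [isoNum_zero, isoNum_one]

end Isotropic

/-! ### Counting totally isotropic subspaces -/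

section Subspaces

variable {F : Type} [Field F] [StarRing F] {V : Type} [AddCommGroup V] [Module F V]
  {B : V →ₗ⋆[F] V →ₗ[F] F}

/-- The number of totally isotropic subspaces of dimension `k`. -/
noncomputable def isoCount (B : V →ₗ⋆[F] V →ₗ[F] F) (k : ℕ) : ℕ :=
  Nat.card {W : Submodule F V // W ≤ perp B W ∧ finrank F W = k}

/-- The totally isotropic subspaces through `e` correspond to those of `U ≅ e^⊥ / e`. -/
lemma card_isotropic_containing [Finite F] [Module.Finite F V] (hB : IsHerm B) {e : V}
    (he0 : e ≠ 0) (he : B e e = 0) {U : Submodule F V} (hsup : F ∙ e ⊔ U = perp B (F ∙ e))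
    (hinf : F ∙ e ⊓ U = ⊥) (k : ℕ) :
    Nat.card {W : Submodule F V // (W ≤ perp B W ∧ finrank F W = k + 1) ∧ e ∈ W} =
      isoCount (restr B U) k := by
  have hU : ∀ u ∈ U, B e u = 0 := fun u hu =>
    mem_perp_span.1 (hsup ▸ (le_sup_right : U ≤ F ∙ e ⊔ U) hu)
  have hfr : ∀ W : Submodule F U, finrank F (F ∙ e ⊔ W.map U.subtype : Submodule F V) =
      finrank F W + 1 := by
    intro W
    have h1 := Submodule.finrank_sup_add_finrank_inf_eq (F ∙ e) (W.map U.subtype)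
    have h2 : F ∙ e ⊓ W.map U.subtype = ⊥ := by
      rw [eq_bot_iff, ← hinf]
      exact inf_le_inf_left _ (Submodule.map_subtype_le _ _)
    rw [h2, finrank_bot, finrank_span_singleton he0,
      Submodule.finrank_map_subtype_eq] at h1
    omega
  have hmod : ∀ W : Submodule F V, W ≤ perp B W → e ∈ W →
      F ∙ e ⊔ (W.comap U.subtype).map U.subtype = W := by
    intro W hW heW
    have hle : F ∙ e ≤ W := (Submodule.span_singleton_le_iff_mem _ _).2 heW
    rw [Submodule.map_comap_subtype, ← sup_inf_assoc_of_le U hle, hsup]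
    refine inf_eq_right.2 fun w hw => ?_
    exact mem_perp_span.2 (hW hw e heW)
  symm
  refine Nat.card_congr
    { toFun := fun W => ⟨F ∙ e ⊔ W.1.map U.subtype, ⟨?_, ?_⟩, ?_⟩
      invFun := fun W => ⟨W.1.comap U.subtype, ?_, ?_⟩
      left_inv := ?_
      right_inv := ?_ }
  · intro x hx y hy
    obtain ⟨x₁, hx₁, _, ⟨u, hu, rfl⟩, rfl⟩ := Submodule.mem_sup.1 hx
    obtain ⟨y₁, hy₁, _, ⟨v, hv, rfl⟩, rfl⟩ := Submodule.mem_sup.1 hy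
    obtain ⟨c, rfl⟩ := Submodule.mem_span_singleton.1 hx₁
    obtain ⟨d, rfl⟩ := Submodule.mem_span_singleton.1 hy₁
    have h1 : B v u = 0 := W.2.1 hu v hv
    have h2 : B e u = 0 := hU u u.2
    have h3 : B v e = 0 := hB.swap (hU v v.2)
    simp [he, h1, h2, h3]
  · rw [hfr, W.2.2]
  · exact (le_sup_left : F ∙ e ≤ _) (Submodule.mem_span_singleton_self e)
  · intro x hx y hy
    exact W.2.1.1 hx y hy
  · have h := hfr (W.1.comap U.subtype)
    rw [hmod W.1 W.2.1.1 W.2.2, W.2.1.2] at h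
    omega
  · rintro ⟨W, hW⟩
    ext x
    simp only [Submodule.mem_comap, Submodule.subtype_apply]
    constructor
    · intro hx
      obtain ⟨y, hy, _, ⟨u, hu, rfl⟩, h⟩ := Submodule.mem_sup.1 hx
      have h2 : y ∈ F ∙ e ⊓ U := by
        refine ⟨hy, ?_⟩
        rw [← eq_sub_iff_add_eq] at h
        rw [h]
        exact U.sub_mem x.2 u.2
      rw [hinf, Submodule.mem_bot] at h2
      rw [h2, zero_add] at h
      have h3 : u = x := Subtype.ext h
      exact h3 ▸ hu
    · intro hx
      exact (le_sup_right : _ ≤ F ∙ e ⊔ W.map U.subtype) ⟨x, hx, rfl⟩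
  · rintro ⟨W, hW⟩
    exact Subtype.ext (hmod W hW.1.1 hW.2)

/-- `isoSub q n k` is the number of `k`-dimensional totally isotropic subspaces of an
`n`-dimensional Hermitian space over the field of `q²` elements. -/
def isoSub (q : ℕ) : ℕ → ℕ → ℚ
  | _, 0 => 1
  | n, k + 1 => isoNum q n / (((q : ℚ) ^ 2) ^ (k + 1) - 1) * isoSub q (n - 2) k

/-- Double counting of the pairs (nonzero isotropic vector, totally isotropic subspace through
it). -/
theorem isoCount_eq [Fintype F] {q : ℕ} (hF : Fintype.card F = q ^ 2)
    (hs : ∀ x : F, star x = x ^ q) (k : ℕ) :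
    ∀ (n : ℕ) (V : Type) [AddCommGroup V] [Module F V] [Module.Finite F V]
      (B : V →ₗ⋆[F] V →ₗ[F] F),
      IsHerm B → finrank F V = n → (isoCount B k : ℚ) = isoSub q n k := by
  classical
  have hq := one_lt_of_card hF
  induction k with
  | zero =>
    intro n V _ _ _ B hB hn
    have : isoCount B 0 = 1 := by
      rw [isoCount, Nat.card_eq_one_iff_unique]
      refine ⟨⟨fun W W' => Subtype.ext ?_⟩, ⟨⊥, by simp⟩⟩
      rw [Submodule.finrank_eq_zero.1 W.2.2, Submodule.finrank_eq_zero.1 W'.2.2]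
    simp [this, isoSub]
  | succ k ih =>
    intro n V _ _ _ B hB hn
    have : Finite V := Module.finite_of_finite F
    have : Fintype V := Fintype.ofFinite V
    have : Fintype (Submodule F V) := Fintype.ofFinite _
    let s : Finset V := {e | e ≠ 0 ∧ B e e = 0}
    let t : Finset (Submodule F V) := {W | W ≤ perp B W ∧ finrank F W = k + 1}
    have hcount := Finset.sum_card_bipartiteAbove_eq_sum_card_bipartiteBelow
      (s := s) (t := t) (fun (e : V) (W : Submodule F V) => e ∈ W)
    have ht : t.card = isoCount B (k + 1) := by
      rw [isoCount, Nat.card_eq_fintype_card, Fintype.card_subtype]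
    have hsc : (s.card : ℚ) = isoNum q n := by
      have h1 := card_isotropic hF hs n V B hB hn
      have h2 : Nat.card {x : V // B x x = 0} = s.card + 1 := by
        rw [Nat.card_eq_fintype_card, Fintype.card_subtype,
          ← Finset.card_erase_add_one (a := (0 : V)) (by simp)]
        congr 2
        ext x
        simp [s]
      rw [h2] at h1
      push_cast at h1
      linear_combination h1
    have hA : ∀ e ∈ s, ((t.bipartiteAbove (fun (e : V) (W : Submodule F V) => e ∈ W) e).card : ℚ) =
        isoSub q (n - 2) k := by
      intro e hes
      obtain ⟨he0, he⟩ := (Finset.mem_filter.1 hes).2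
      obtain ⟨U, hsup, hinf, hU, hdim⟩ := exists_reduction hB (span_le_perp he)
      rw [finrank_span_singleton he0, hn] at hdim
      rw [← ih (n - 2) U (restr B U) (restr_isHerm_of_disjoint hB U hU) (by omega),
        ← card_isotropic_containing hB he0 he hsup hinf, Nat.card_eq_fintype_card,
        Fintype.card_subtype, Finset.bipartiteAbove, Finset.filter_filter]
    have hB' : ∀ W ∈ t, ((s.bipartiteBelow (fun (e : V) (W : Submodule F V) => e ∈ W) W).card : ℚ) =
        ((q : ℚ) ^ 2) ^ (k + 1) - 1 := by
      intro W hW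
      obtain ⟨hiso, hdim⟩ := (Finset.mem_filter.1 hW).2
      have h1 : Nat.card W = (q ^ 2) ^ (k + 1) := by
        rw [natCard_eq_pow_finrank (K := F), hdim, Nat.card_eq_fintype_card, hF]
      have h2 : Nat.card W = (s.bipartiteBelow (fun (e : V) (W : Submodule F V) => e ∈ W) W).card
          + 1 := by
        rw [Nat.card_eq_fintype_card, Fintype.card_subtype,
          ← Finset.card_erase_add_one (a := (0 : V)) (by simp)]
        congr 2
        ext x
        simp only [Finset.mem_erase, Finset.mem_filter, Finset.mem_univ, true_and,
          Finset.bipartiteBelow, s]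
        exact ⟨fun h => ⟨⟨h.1, hiso h.2 x h.2⟩, h.2⟩, fun h => ⟨h.1.1, h.2⟩⟩
      rw [h2] at h1
      have h3 : ((s.bipartiteBelow (fun (e : V) (W : Submodule F V) => e ∈ W) W).card : ℚ) + 1 =
        (q ^ 2) ^ (k + 1) := by exact_mod_cast h1
      linear_combination h3
    have hcount' := congrArg (Nat.cast : ℕ → ℚ) hcount
    rw [Nat.cast_sum, Nat.cast_sum, Finset.sum_congr rfl hA, Finset.sum_congr rfl hB',
      Finset.sum_const, Finset.sum_const, nsmul_eq_mul, nsmul_eq_mul, hsc, ht] at hcount'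
    have hne : ((q : ℚ) ^ 2) ^ (k + 1) - 1 ≠ 0 := by
      have : (1 : ℚ) < ((q : ℚ) ^ 2) ^ (k + 1) := by
        rw [← pow_mul]
        exact one_lt_pow₀ (by exact_mod_cast hq) (by omega)
      linarith
    rw [isoSub, div_mul_eq_mul_div, eq_div_iff hne, hcount']

end Subspaces

/-! ### Weighted sums of subspace numbers -/

section Numeric

/-- The Möbius function `(-1)ᵏ q^(k(k-1))` of the lattice of subspaces of a `k`-dimensional space
over the field of `q²` elements. -/
def mob (q k : ℕ) : ℚ := (-1) ^ k * (q : ℚ) ^ (k * (k - 1))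

lemma mob_zero (q : ℕ) : mob q 0 = 1 := by simp [mob]

lemma mob_succ (q k : ℕ) : mob q (k + 1) = - ((q : ℚ) ^ 2) ^ k * mob q k := by
  rcases k with _ | k
  · simp [mob]
  · simp only [mob, Nat.add_sub_cancel]
    ring

variable {q : ℕ}

lemma sq_pow_sub_one_ne_zero (hq : 1 < q) (k : ℕ) : ((q : ℚ) ^ 2) ^ (k + 1) - 1 ≠ 0 := by
  have : (1 : ℚ) < ((q : ℚ) ^ 2) ^ (k + 1) := by
    rw [← pow_mul]
    exact one_lt_pow₀ (by exact_mod_cast hq) (by omega)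
  linarith

lemma isoSub_eq_zero (k : ℕ) : ∀ n, n < 2 * k → isoSub q n k = 0 := by
  induction k with
  | zero => intro n hn; omega
  | succ k ih =>
    intro n hn
    rw [isoSub]
    by_cases h : n < 2
    · interval_cases n <;> simp [isoNum_zero, isoNum_one]
    · rw [ih (n - 2) (by omega), mul_zero]

/-- The last factor of `isoSub q n (k + 1)` is the number of isotropic lines in dimension
`n - 2 * k`. -/
lemma isoSub_succ (hq : 1 < q) (k : ℕ) : ∀ n, isoSub q n (k + 1) = isoSub q n k *
    (((q : ℚ) ^ n / (q ^ 2) ^ k - (-1) ^ n) * ((q : ℚ) ^ n / (q ^ 2) ^ k + (-1) ^ n * q) / q) /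
      (((q : ℚ) ^ 2) ^ (k + 1) - 1) := by
  have hq' : (q : ℚ) ≠ 0 := by exact_mod_cast (by omega : q ≠ 0)
  induction k with
  | zero => intro n; simp [isoSub, isoNum]
  | succ k ih =>
    intro n
    by_cases h : n < 2
    · rw [isoSub_eq_zero (k + 1 + 1) n (by omega), isoSub_eq_zero (k + 1) n (by omega)]
      simp
    · obtain ⟨m, rfl⟩ : ∃ m, n = m + 2 := ⟨n - 2, by omega⟩
      rw [isoSub, Nat.add_sub_cancel, ih, isoSub, Nat.add_sub_cancel]
      have h1 : (q : ℚ) ^ (m + 2) / (q ^ 2) ^ (k + 1) = (q : ℚ) ^ m / (q ^ 2) ^ k := by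
        rw [pow_add, pow_succ ((q : ℚ) ^ 2)]
        field_simp
      have h2 : (-1 : ℚ) ^ (m + 2) = (-1) ^ m := by rw [pow_add]; simp
      rw [h1, h2]
      ring

/-- Two-step recursion in the dimension for the numbers of totally isotropic subspaces. -/
lemma isoSub_rec (hq : 1 < q) (n k : ℕ) : isoSub q (n + 2) (k + 1) =
    (1 + (q : ℚ) ^ (2 * n + 1) / (q ^ 2) ^ k) * isoSub q n k +
      (q ^ 2) ^ (k + 1) * isoSub q n (k + 1) := by
  have hq' : (q : ℚ) ≠ 0 := by exact_mod_cast (by omega : q ≠ 0)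
  have h1 : ((-1 : ℚ) ^ n) ^ 2 = 1 := by rw [← pow_mul, mul_comm, pow_mul]; simp
  have hne := sq_pow_sub_one_ne_zero hq k
  have h2 : (-1 : ℚ) ^ (n + 2) = (-1) ^ n := by rw [pow_add]; simp
  have h3 : isoSub q (n + 2) (k + 1) =
      isoNum q (n + 2) / (((q : ℚ) ^ 2) ^ (k + 1) - 1) * isoSub q n k := rfl
  rw [h3, isoSub_succ hq k n, isoNum, h2, div_mul_eq_mul_div, div_eq_iff hne,
    add_mul, mul_assoc _ _ (_ - _), mul_assoc _ (_ / _) (_ - _), div_mul_cancel₀ _ hne,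
    pow_succ _ (2 * n), mul_comm 2 n, pow_mul, pow_add _ n 2, pow_succ _ k]
  have hk : ((q : ℚ) ^ 2) ^ k ≠ 0 := by positivity
  generalize isoSub q n k = I
  generalize ((q : ℚ) ^ 2) ^ k = y at *
  generalize (q : ℚ) ^ n = x
  generalize (-1 : ℚ) ^ n = s at *
  generalize (q : ℚ) = r at *
  field_simp
  linear_combination (r ^ 2 * y - 1) * I * y * h1

/-- The common value of the two weighted sums over totally isotropic subspaces. -/
def eul (q : ℕ) : ℕ → ℚ
  | 0 => 1
  | 1 => 1
  | n + 2 => - (q : ℚ) ^ (2 * n + 1) * eul q n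

/-- A family of weights compatible with the recursion for the number of totally isotropic
subspaces has weighted sum `eul`. -/
lemma sum_isoSub (hq : 1 < q) (c : ℕ → ℕ → ℚ) (h0 : ∀ n, n ≤ 1 → c n 0 = 1)
    (hc : ∀ n k, c (n + 2) (k + 1) * (1 + (q : ℚ) ^ (2 * n + 1) / (q ^ 2) ^ k) +
      (q ^ 2) ^ k * c (n + 2) k = - (q : ℚ) ^ (2 * n + 1) * c n k) (n : ℕ) :
    ∀ N, n < 2 * N → ∑ k ∈ Finset.range N, c n k * isoSub q n k = eul q n := by
  have hbase : ∀ n ≤ 1, ∀ N, n < 2 * N → ∑ k ∈ Finset.range N, c n k * isoSub q n k = 1 := by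
    intro n hn N hN
    obtain ⟨M, rfl⟩ : ∃ M, N = M + 1 := ⟨N - 1, by omega⟩
    rw [Finset.sum_range_succ', Finset.sum_eq_zero, h0 n hn, isoSub]
    · simp
    · intro k _
      rw [isoSub_eq_zero (k + 1) n (by omega), mul_zero]
  induction n using Nat.twoStepInduction with
  | zero => exact hbase 0 (by omega)
  | one => exact hbase 1 (by omega)
  | more n ih _ =>
    intro N hN
    obtain ⟨M, rfl⟩ : ∃ M, N = M + 1 := ⟨N - 1, by omega⟩
    have h1 : ∑ k ∈ Finset.range M, c (n + 2) (k + 1) * ((q ^ 2) ^ (k + 1) * isoSub q n (k + 1)) +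
        c (n + 2) 0 = ∑ k ∈ Finset.range M, c (n + 2) k * ((q ^ 2) ^ k * isoSub q n k) := by
      have h2 := Finset.sum_range_succ' (fun k => c (n + 2) k * ((q ^ 2) ^ k * isoSub q n k)) M
      rw [Finset.sum_range_succ, isoSub_eq_zero M n (by omega)] at h2
      simpa [isoSub] using h2.symm
    rw [Finset.sum_range_succ', eul, ← ih M (by omega), Finset.mul_sum]
    have h3 : ∀ k ∈ Finset.range M, c (n + 2) (k + 1) * isoSub q (n + 2) (k + 1) =
        c (n + 2) (k + 1) * (1 + (q : ℚ) ^ (2 * n + 1) / (q ^ 2) ^ k) * isoSub q n k +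
        c (n + 2) (k + 1) * ((q ^ 2) ^ (k + 1) * isoSub q n (k + 1)) := fun k _ => by
      rw [isoSub_rec hq]
      ring
    rw [Finset.sum_congr rfl h3, Finset.sum_add_distrib, add_assoc, isoSub, mul_one, h1,
      ← Finset.sum_add_distrib]
    refine Finset.sum_congr rfl fun k _ => ?_
    linear_combination isoSub q n k * hc n k

/-- Weighted sums of numbers of isotropic subspaces: the left-hand weights come from counting
nilpotent operators vanishing on a subspace, the right-hand ones from the zero operator. -/
lemma sum_mob_eq (hq : 1 < q) (n N : ℕ) (hN : n < 2 * N) :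
    ∑ k ∈ Finset.range N, mob q k * ((q : ℚ) ^ (n ^ 2 + k ^ 2 + 2 * k) / q ^ (2 * n * k + n)) *
      isoSub q n k = ∑ k ∈ Finset.range N, mob q k * isoSub q n k := by
  have hq' : (q : ℚ) ≠ 0 := by exact_mod_cast (by omega : q ≠ 0)
  rw [sum_isoSub hq (fun _ k => mob q k) (fun _ _ => mob_zero q) _ n N hN,
    sum_isoSub hq (fun n k => mob q k * ((q : ℚ) ^ (n ^ 2 + k ^ 2 + 2 * k) / q ^ (2 * n * k + n)))
    _ _ n N hN]
  · intro n hn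
    interval_cases n <;> simp [mob_zero, hq']
  · intro n k
    simp only [mob_succ]
    field_simp
    ring
  · intro n k
    simp only [mob_succ]
    field_simp
    ring

end Numeric

/-! ### Counting nilpotent self-adjoint operators -/

section Nilpotent

/-- If `f` is a surjective additive homomorphism, then the density of a property pulled back along
`f` equals its density in the target. -/
lemma card_preimage_mul {A B : Type*} [AddCommGroup A] [AddCommGroup B] [Finite A] [Finite B]
    (f : A →+ B) (hf : Function.Surjective f) (P : B → Prop) :
    Nat.card {a // P (f a)} * Nat.card B = Nat.card {b // P b} * Nat.card A := by
  classical
  have e : {a // P (f a)} ≃ Σ b : {b // P b}, {a // f a = b} :=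
    { toFun := fun a => ⟨⟨f a, a.2⟩, ⟨a, rfl⟩⟩
      invFun := fun x => ⟨x.2.1, by rw [x.2.2]; exact x.1.2⟩
      left_inv := fun a => rfl
      right_inv := by
        rintro ⟨⟨b, hb⟩, ⟨a, ha⟩⟩
        have ha' : f a = b := ha
        subst ha'
        rfl }
  have : Fintype {b // P b} := Fintype.ofFinite _
  rw [Nat.card_congr e, Nat.card_sigma, Finset.sum_mul,
    Finset.sum_congr rfl fun (b : {b // P b}) _ => card_fiber_mul f hf b.1, Finset.sum_const, smul_eq_mul,
    Finset.card_univ, Nat.card_eq_fintype_card (α := {b // P b})]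

/-- A subspace `W₁` of dimension `j + 1` has `|F| ^ j` complements of a given line `F e`,
parametrized as kernels of the functionals `f` with `f e = 1`. -/
lemma card_complements {F V : Type} [Field F] [Fintype F] [AddCommGroup V] [Module F V]
    [Module.Finite F V] {e : V} (he : e ≠ 0) {W₁ : Submodule F V} (heW : e ∈ W₁) {j : ℕ}
    (hj : finrank F W₁ = j + 1) :
    Nat.card {W₀ : Submodule F V // e ∉ W₀ ∧ W₀ ⊔ F ∙ e = W₁} = Fintype.card F ^ j := by
  have : Finite (Dual F W₁) := Module.finite_of_finite F
  let e' : W₁ := ⟨e, heW⟩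
  have he' : e' ≠ 0 := fun h => he (congrArg Subtype.val h)
  let ev : Dual F W₁ →+ F := (LinearMap.applyₗ e').toAddMonoidHom
  have hev : ∀ f, ev f = f e' := fun _ => rfl
  have hsurj : Function.Surjective ev := by
    obtain ⟨f, hf, -⟩ := Submodule.exists_dual_map_eq_bot_of_notMem (p := (⊥ : Submodule F W₁))
      (x := e') (by simpa using he') inferInstance
    exact fun c => ⟨(c / f e') • f, by simp [hev, hf]⟩
  have h1 := card_fiber_mul ev hsurj 1
  rw [natCard_eq_pow_finrank (K := F) (V := Dual F W₁), Subspace.dual_finrank_eq, hj, pow_succ,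
    Nat.card_eq_fintype_card (α := F)] at h1
  rw [← Nat.eq_of_mul_eq_mul_right Fintype.card_pos h1]
  have hdecomp : ∀ (f : Dual F W₁), f e' = 1 → ∀ x : W₁, f (x - f x • e') = 0 := fun f hf x => by
    simp [hf]
  have hker : ∀ f : Dual F W₁, ev f = 1 → e ∉ (LinearMap.ker f).map W₁.subtype ∧
      (LinearMap.ker f).map W₁.subtype ⊔ F ∙ e = W₁ := by
    refine fun f hf => ⟨?_, le_antisymm ?_ fun x hx => ?_⟩
    · rintro ⟨x, hx, hxe⟩
      have hx' : x = e' := Subtype.ext hxe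
      rw [hev, ← hx', LinearMap.mem_ker.1 hx] at hf
      exact zero_ne_one hf
    · rw [sup_le_iff, Submodule.span_singleton_le_iff_mem]
      exact ⟨Submodule.map_subtype_le _ _, heW⟩
    · refine Submodule.mem_sup.2 ⟨_, ⟨_, hdecomp f hf ⟨x, hx⟩, rfl⟩, _,
        Submodule.smul_mem _ (f ⟨x, hx⟩) (Submodule.mem_span_singleton_self e), ?_⟩
      simp [e']
  refine (Nat.card_congr (Equiv.ofBijective (fun f : {f // ev f = 1} =>
    ⟨(LinearMap.ker f.1).map W₁.subtype, hker f.1 f.2⟩) ⟨?_, ?_⟩)).symm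
  · rintro ⟨f, hf⟩ ⟨g, hg⟩ h
    have h' : LinearMap.ker f = LinearMap.ker g :=
      Submodule.map_injective_of_injective W₁.injective_subtype (congrArg Subtype.val h)
    ext x
    have hx : x - f x • e' ∈ LinearMap.ker g := h' ▸ hdecomp f hf x
    rw [LinearMap.mem_ker, map_sub, map_smul, ← hev g, hg, smul_eq_mul, mul_one,
      sub_eq_zero] at hx
    exact hx.symm
  · rintro ⟨W₀, h0, hW⟩
    obtain ⟨f, hf, hf'⟩ := Submodule.exists_dual_map_eq_bot_of_notMem
      (p := W₀.comap W₁.subtype) (x := e') h0 inferInstance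
    refine ⟨⟨(f e')⁻¹ • f, by simp [hev, hf]⟩, Subtype.ext (le_antisymm ?_ fun w hw => ?_)⟩
    · rintro _ ⟨x, hx, rfl⟩
      have hx : f x = 0 := by simpa [hf] using hx
      obtain ⟨w, hw, y, hy, hwy⟩ := Submodule.mem_sup.1 (hW ▸ x.2 : (x : V) ∈ W₀ ⊔ F ∙ e)
      obtain ⟨c, rfl⟩ := Submodule.mem_span_singleton.1 hy
      have hwW : w ∈ W₁ := hW ▸ (le_sup_left : W₀ ≤ W₀ ⊔ F ∙ e) hw
      have hfw : f ⟨w, hwW⟩ = 0 := by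
        have : f ⟨w, hwW⟩ ∈ (W₀.comap W₁.subtype).map f := ⟨_, hw, rfl⟩
        rwa [hf', Submodule.mem_bot] at this
      have hxe : x = ⟨w, hwW⟩ + c • e' := Subtype.ext hwy.symm
      rw [hxe, map_add, hfw, zero_add, map_smul, smul_eq_mul, mul_eq_zero, or_iff_left hf] at hx
      rw [hxe, hx, zero_smul, add_zero]
      exact hw
    · have hwW : w ∈ W₁ := hW ▸ (le_sup_left : W₀ ≤ W₀ ⊔ F ∙ e) hw
      have hfw : f ⟨w, hwW⟩ = 0 := by
        have : f ⟨w, hwW⟩ ∈ (W₀.comap W₁.subtype).map f := ⟨_, hw, rfl⟩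
        rwa [hf', Submodule.mem_bot] at this
      exact ⟨⟨w, hwW⟩, by simp [hfw], rfl⟩

lemma exists_apply_ne_zero_apply_apply_eq_zero {F V : Type} [Field F] [AddCommGroup V]
    [Module F V] {N : End F V} (hN : IsNilpotent N) (h0 : N ≠ 0) :
    ∃ y, N y ≠ 0 ∧ N (N y) = 0 := by
  by_contra! h
  obtain ⟨y, hy⟩ : ∃ y, N y ≠ 0 := by
    by_contra! h'
    exact h0 (LinearMap.ext h')
  have : ∀ k, (N ^ (k + 1)) y ≠ 0 := by
    intro k
    induction k with
    | zero => simpa using hy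
    | succ k ih =>
      rw [pow_succ', Module.End.mul_apply] at ih ⊢
      rw [pow_succ', Module.End.mul_apply]
      exact h _ ih
  obtain ⟨k, hk⟩ := hN
  exact this k (by rw [pow_succ, hk]; simp)

variable {F : Type} [Field F] [StarRing F] {V : Type} [AddCommGroup V] [Module F V]
  {B : V →ₗ⋆[F] V →ₗ[F] F}

/-- The operator `N` is self-adjoint for the form `B`. -/
def SA (B : V →ₗ⋆[F] V →ₗ[F] F) (N : End F V) : Prop := ∀ x y, B (N x) y = B x (N y)

lemma SA.apply_mem_perp {N : End F V} (hN : SA B N) {W : Submodule F V}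
    (hW : W ≤ LinearMap.ker N) (y : V) : N y ∈ perp B W := fun w hw => by
  rw [← hN, LinearMap.mem_ker.1 (hW hw)]
  simp

section

variable [Finite F] [Module.Finite F V]

lemma exists_adjoint (hB : IsHerm B) (N : End F V) :
    ∃ M : End F V, ∀ x y, B (M x) y = B x (N y) := by
  choose f hf using fun x => hB.bijective.2 ((B x).comp N)
  refine ⟨{ toFun := f, map_add' := fun x y => ?_, map_smul' := fun c x => ?_ }, fun x y => ?_⟩
  · apply hB.bijective.1
    rw [map_add, hf, hf, hf, map_add, LinearMap.add_comp]
  · apply hB.bijective.1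
    rw [LinearMap.map_smulₛₗ, hf, hf, RingHom.id_apply, LinearMap.map_smulₛₗ, LinearMap.smul_comp]
  · simp [hf]

/-- The adjoint acts as a conjugate-linear involution on the operators which vanish on `W` and map
into `W^⊥`; its fixed points are the self-adjoint operators vanishing on `W`. -/
lemma card_selfAdjoint [Fintype F] {q : ℕ} (hF : Fintype.card F = q ^ 2)
    (hs : ∀ x : F, star x = x ^ q) (hB : IsHerm B) (W : Submodule F V) {m : ℕ}
    (hm : m + finrank F W = finrank F V) :
    Nat.card {N : End F V // SA B N ∧ W ≤ LinearMap.ker N} = q ^ m ^ 2 := by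
  choose τ hτ using exists_adjoint hB
  have ext' : ∀ {N M : End F V}, (∀ x y, B (N x) y = B (M x) y) → N = M := fun h =>
    LinearMap.ext fun x => hB.bijective.1 (LinearMap.ext (h x))
  obtain ⟨a, ha⟩ := exists_star_ne hF hs
  let T : ((V ⧸ W) →ₗ[F] perp B W) →ₗ[F] End F V :=
    { toFun := fun g => (perp B W).subtype ∘ₗ g ∘ₗ W.mkQ
      map_add' := fun _ _ => rfl
      map_smul' := fun _ _ => rfl }
  have hT : Function.Injective T := by
    intro g g' h
    ext x
    exact LinearMap.congr_fun h x
  have hX : ∀ N, N ∈ LinearMap.range T ↔ W ≤ LinearMap.ker N ∧ ∀ y, N y ∈ perp B W := by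
    intro N
    constructor
    · rintro ⟨g, rfl⟩
      refine ⟨fun w hw => ?_, fun y => (g (W.mkQ y)).2⟩
      change ((g (Submodule.Quotient.mk w) : perp B W) : V) = 0
      rw [(Submodule.Quotient.mk_eq_zero W).2 hw, map_zero, Submodule.coe_zero]
    · rintro ⟨h1, h2⟩
      refine ⟨(W.liftQ N h1).codRestrict _ fun c => ?_, ?_⟩
      · obtain ⟨y, rfl⟩ := W.mkQ_surjective c
        exact h2 y
      · ext x
        rfl
  have h := card_fixed_sq (LinearMap.range T) a ha τ
    (fun N M => ext' fun x y => by simp [hτ])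
    (fun c N => ext' fun x y => by simp [hτ, starRingEnd_apply])
    (fun N _ => ext' fun x y => by rw [hτ, ← hB.symm, hτ, hB.symm])
    (fun N hN => by
      rw [hX] at hN ⊢
      refine ⟨fun w hw => ?_, fun y w hw => hB.swap ?_⟩
      · exact hB.nondeg _ fun y => by rw [hτ]; exact hN.2 y w hw
      · rw [hτ, LinearMap.mem_ker.1 (hN.1 hw), map_zero])
  have e : {N : End F V // SA B N ∧ W ≤ LinearMap.ker N} ≃
      {N // N ∈ LinearMap.range T ∧ τ N = N} := Equiv.subtypeEquivRight fun N => by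
    rw [hX]
    constructor
    · rintro ⟨h1, h2⟩
      exact ⟨⟨h2, h1.apply_mem_perp h2⟩, ext' fun x y => by rw [hτ, h1]⟩
    · rintro ⟨⟨h1, _⟩, h2⟩
      exact ⟨fun x y => by rw [← hτ, h2], h1⟩
  have h1 := finrank_perp hB W
  have h2 := W.finrank_quotient_add_finrank
  rw [← Nat.card_congr e, natCard_eq_pow_finrank (K := F) (V := LinearMap.range T),
    LinearMap.finrank_range_of_inj hT,
    Module.finrank_linearMap, (by omega : finrank F (V ⧸ W) = m),
    (by omega : finrank F (perp B W) = m), Nat.card_eq_fintype_card (α := F), hF, ← pow_mul, mul_comm 2,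
    pow_mul, ← sq] at h
  exact Nat.pow_left_injective (n := 2) (by norm_num) h

/-- The additive group of self-adjoint operators vanishing on `W`. -/
def saSub (B : V →ₗ⋆[F] V →ₗ[F] F) (W : Submodule F V) : AddSubgroup (End F V) where
  carrier := {N | SA B N ∧ W ≤ LinearMap.ker N}
  zero_mem' := ⟨fun x y => by simp, fun w _ => by simp⟩
  add_mem' := by
    rintro N M ⟨h1, h2⟩ ⟨h3, h4⟩
    exact ⟨fun x y => by simp [h1 x y, h3 x y], fun w hw => by
      simp [LinearMap.mem_ker.1 (h2 hw), LinearMap.mem_ker.1 (h4 hw)]⟩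
  neg_mem' := by
    rintro N ⟨h1, h2⟩
    exact ⟨fun x y => by simp [h1 x y], fun w hw => by simp [LinearMap.mem_ker.1 (h2 hw)]⟩

/-- The number of nilpotent self-adjoint operators vanishing on `W`. -/
noncomputable def nilCount (B : V →ₗ⋆[F] V →ₗ[F] F) (W : Submodule F V) : ℕ :=
  Nat.card {N : saSub B W // IsNilpotent N.1}

lemma exists_orthogonal_projection (hB : IsHerm B) (U : Submodule F V) (hU : U ⊓ perp B U = ⊥) :
    ∃ p : V →ₗ[F] U, (∀ u : U, p u = u) ∧ ∀ (u : U) x, B u (p x) = B u x := by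
  have hc : IsCompl U (perp B U) := by
    refine ⟨disjoint_iff.2 hU, codisjoint_iff.2 (Submodule.eq_top_of_finrank_eq ?_)⟩
    have h1 := Submodule.finrank_sup_add_finrank_inf_eq U (perp B U)
    have h2 := finrank_perp hB U
    rw [hU, finrank_bot] at h1
    omega
  refine ⟨U.projectionOnto (perp B U) hc, fun u => ?_, fun u x => ?_⟩
  · simp
  · rw [← sub_eq_zero, ← map_sub]
    have : U.projectionOnto (perp B U) hc ((U.projectionOnto (perp B U) hc x : U) - x) = 0 := by
      rw [map_sub, Submodule.projectionOnto_apply_left, sub_self]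
    exact (Submodule.projectionOnto_apply_eq_zero_iff hc).1 this u u.2

/-- Compression to `U ≅ W^⊥ / W` maps the self-adjoint operators vanishing on `W` onto the
self-adjoint operators of `U`, and both preserves and detects nilpotency, since such operators
map `V` into `W^⊥`. -/
lemma nilCount_reduction [Fintype F] {q : ℕ} (hF : Fintype.card F = q ^ 2)
    (hs : ∀ x : F, star x = x ^ q) (hB : IsHerm B) {W U : Submodule F V}
    (hsup : W ⊔ U = perp B W) (hU : U ⊓ perp B U = ⊥)
    (hdim : finrank F U + 2 * finrank F W = finrank F V) :
    nilCount B W * q ^ finrank F U ^ 2 =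
      nilCount (restr B U) ⊥ * q ^ (finrank F U + finrank F W) ^ 2 := by
  obtain ⟨p, hpU, hp⟩ := exists_orthogonal_projection hB U hU
  have hBU := restr_isHerm_of_disjoint hB U hU
  have hp' : ∀ (u : U) x, B (p x) u = B x u := fun u x => by
    rw [← hB.symm, hp, hB.symm]
  have hUW : ∀ u ∈ U, ∀ w ∈ W, B u w = 0 := fun u hu w hw =>
    hB.swap ((hsup ▸ (le_sup_right : U ≤ W ⊔ U)) hu w hw)
  have hpW : ∀ w ∈ W, p w = 0 := fun w hw => hBU.nondeg _ fun u => by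
    change B (p w) u = 0
    rw [hp']
    exact hB.swap (hUW u u.2 w hw)
  have hpW' : ∀ y ∈ perp B W, y - p y ∈ W := by
    intro y hy
    rw [← hsup] at hy
    obtain ⟨w, hw, u, hu, rfl⟩ := Submodule.mem_sup.1 hy
    have : p u = ⟨u, hu⟩ := hpU ⟨u, hu⟩
    rw [map_add, hpW w hw, this]
    simpa using hw
  let Φ : saSub B W →+ saSub (restr B U) ⊥ :=
    { toFun := fun N => ⟨p ∘ₗ N.1 ∘ₗ U.subtype, fun x y => by
          change B (p (N.1 x)) y = B x (p (N.1 y))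
          rw [hp, hp', N.2.1], bot_le⟩
      map_zero' := by
        ext
        simp
      map_add' := fun N M => by
        ext
        simp }
  have hΦ : Function.Surjective Φ := by
    rintro ⟨M, hM, -⟩
    refine ⟨⟨U.subtype ∘ₗ M ∘ₗ p, fun x y => ?_, fun w hw => ?_⟩, ?_⟩
    · change B (M (p x)) y = B x (M (p y))
      rw [← hp (M (p x)) y, ← hp' (M (p y)) x]
      exact hM (p x) (p y)
    · simp [hpW w hw]
    · ext u
      simp [Φ, hpU]
  have : Finite (End F V) := Module.finite_of_finite F
  have : Finite (End F U) := Module.finite_of_finite F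
  have key := card_preimage_mul Φ hΦ (fun M => IsNilpotent M.1)
  have hnil : ∀ N : saSub B W, IsNilpotent (Φ N).1 ↔ IsNilpotent N.1 := by
    rintro ⟨N, hN, hNW⟩
    have hmem : ∀ y, N y ∈ perp B W := hN.apply_mem_perp hNW
    have hpow : ∀ k x, x ∈ perp B W → (N ^ k) x ∈ perp B W ∧
        p ((N ^ k) x) = ((Φ ⟨N, hN, hNW⟩).1 ^ k) (p x) := by
      intro k
      induction k with
      | zero => intro x hx; exact ⟨hx, rfl⟩
      | succ k ih =>
        intro x hx
        obtain ⟨h1, h2⟩ := ih (N x) (hmem x)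
        rw [pow_succ, pow_succ, Module.End.mul_apply, Module.End.mul_apply, h2]
        refine ⟨h1, ?_⟩
        congr 1
        change p (N x) = p (N (p x))
        rw [← sub_eq_zero, ← map_sub, ← map_sub, LinearMap.mem_ker.1 (hNW (hpW' x hx)), map_zero]
    constructor
    · rintro ⟨k, hk⟩
      refine ⟨k + 1 + 1, LinearMap.ext fun x => ?_⟩
      obtain ⟨h1, h2⟩ := hpow k (N x) (hmem x)
      rw [hk, LinearMap.zero_apply] at h2
      have h3 := hpW' _ h1
      rw [h2, Submodule.coe_zero, sub_zero] at h3
      rw [pow_succ, pow_succ', Module.End.mul_apply, Module.End.mul_apply]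
      exact hNW h3
    · rintro ⟨k, hk⟩
      refine ⟨k, LinearMap.ext fun u => ?_⟩
      have h2 := (hpow k u (hsup ▸ (le_sup_right : U ≤ W ⊔ U) u.2)).2
      change N ^ k = 0 at hk
      rw [hk, hpU, LinearMap.zero_apply, map_zero] at h2
      exact h2.symm
  have c1 : Nat.card (saSub B W) = q ^ (finrank F U + finrank F W) ^ 2 :=
    card_selfAdjoint hF hs hB W (by omega)
  have c2 : Nat.card (saSub (restr B U) ⊥) = q ^ finrank F U ^ 2 :=
    card_selfAdjoint hF hs hBU ⊥ (by simp)
  rw [c1, c2, Nat.card_congr (Equiv.subtypeEquivRight hnil)] at key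
  exact key

end

/-- The weights `mob` sum to zero over the totally isotropic subspaces of `K`, provided that some
nonzero `e ∈ K` is orthogonal to `K`: the subspaces `W` not containing `e` cancel against `W + F e`.
-/
lemma sum_mob_isotropic_le [Fintype F] [Module.Finite F V] {q : ℕ} (hF : Fintype.card F = q ^ 2) (hB : IsHerm B)
    {K : Submodule F V} [Fintype (Submodule F V)]
    [DecidablePred fun W : Submodule F V => W ≤ perp B W ∧ W ≤ K] {e : V} (he : e ≠ 0) (heK : e ∈ K) (heK' : e ∈ perp B K) :
    ∑ W : Submodule F V with W ≤ perp B W ∧ W ≤ K, mob q (finrank F W) = 0 := by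
  classical
  set S : Finset (Submodule F V) := {W | W ≤ perp B W ∧ W ≤ K} with hS
  have hmem : ∀ W, W ∈ S ↔ W ≤ perp B W ∧ W ≤ K := fun W => by simp [hS]
  have hle : ∀ W₀ W₁, W₀ ≤ W₁ → W₁ ∈ S → W₀ ∈ S := fun W₀ W₁ h h1 => by
    rw [hmem] at h1 ⊢
    exact ⟨fun x hx y hy => h1.1 (h hx) y (h hy), h.trans h1.2⟩
  have hsup : ∀ W ∈ S, W ⊔ F ∙ e ∈ S := by
    intro W hW
    rw [hmem] at hW ⊢
    refine ⟨fun x hx y hy => ?_, sup_le hW.2 ((Submodule.span_singleton_le_iff_mem _ _).2 heK)⟩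
    obtain ⟨w, hw, u, hu, rfl⟩ := Submodule.mem_sup.1 hx
    obtain ⟨w', hw', u', hu', rfl⟩ := Submodule.mem_sup.1 hy
    obtain ⟨c, rfl⟩ := Submodule.mem_span_singleton.1 hu
    obtain ⟨c', rfl⟩ := Submodule.mem_span_singleton.1 hu'
    simp [hW.1 hw w' hw', heK' w' (hW.2 hw'), hB.swap (heK' w (hW.2 hw)), heK' e heK]
  have hdim : ∀ W₀ : Submodule F V, e ∉ W₀ →
      finrank F (W₀ ⊔ F ∙ e : Submodule F V) = finrank F W₀ + 1 := by
    intro W₀ h0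
    have h1 := Submodule.finrank_sup_add_finrank_inf_eq W₀ (F ∙ e)
    have h2 : W₀ ⊓ F ∙ e = ⊥ := by
      rw [← disjoint_iff, Submodule.disjoint_span_singleton' he]
      exact h0
    rwa [h2, finrank_bot, finrank_span_singleton he, add_zero] at h1
  rw [← Finset.sum_filter_add_sum_filter_not S (fun W => e ∈ W),
    ← Finset.sum_fiberwise_of_maps_to (s := S.filter (fun W => e ∉ W))
      (t := S.filter (fun W => e ∈ W)) (g := fun W => W ⊔ F ∙ e), ← Finset.sum_add_distrib]
  · refine Finset.sum_eq_zero fun W₁ hW₁ => ?_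
    obtain ⟨hW₁, heW₁⟩ := Finset.mem_filter.1 hW₁
    have hpos : 0 < finrank F W₁ := by
      have : Nontrivial W₁ := ⟨⟨e, heW₁⟩, 0, fun h => he (congrArg Subtype.val h)⟩
      exact finrank_pos
    obtain ⟨j, hj⟩ : ∃ j, finrank F W₁ = j + 1 := ⟨finrank F W₁ - 1, by omega⟩
    have hfib : (S.filter (fun W => e ∉ W)).filter (fun W => W ⊔ F ∙ e = W₁) =
        ({W₀ | e ∉ W₀ ∧ W₀ ⊔ F ∙ e = W₁} : Finset (Submodule F V)) := by
      ext W₀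
      simp only [Finset.mem_filter, Finset.mem_univ, true_and, and_assoc]
      exact ⟨fun h => h.2, fun h => ⟨hle _ _ (h.2 ▸ le_sup_left) hW₁, h⟩⟩
    have hcard := card_complements he heW₁ hj
    rw [Nat.card_eq_fintype_card, Fintype.card_subtype, hF] at hcard
    rw [hfib, Finset.sum_congr rfl (g := fun _ => mob q j), Finset.sum_const, hcard, hj, mob_succ,
      nsmul_eq_mul]
    · push_cast
      ring
    · intro W₀ hW₀
      obtain ⟨h0, h1⟩ := (Finset.mem_filter.1 hW₀).2
      have h2 := hdim W₀ h0
      rw [h1, hj] at h2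
      rw [Nat.add_right_cancel h2]
  · intro W hW
    rw [Finset.mem_filter] at hW ⊢
    exact ⟨hsup W hW.1, Submodule.mem_sup_right (Submodule.mem_span_singleton_self e)⟩

/-- The value of `nilCount B W` for `W` totally isotropic of dimension `k`, where `m` is the
dimension of `W^⊥ / W`, obtained from `nilCount_reduction` (`h1`) and the count `h2` in dimension
`m`. -/
lemma nilCount_arith {q : ℕ} (hq : (q : ℚ) ≠ 0) {a b m k n : ℕ} (hn : m + 2 * k = n)
    (h1 : a * q ^ m ^ 2 = b * q ^ (m + k) ^ 2) (h2 : b * q ^ m = q ^ m ^ 2) :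
    (a : ℚ) = q ^ (n ^ 2 + k ^ 2 + 2 * k) / q ^ (2 * n * k + n) := by
  subst hn
  have h1' : (a : ℚ) * q ^ m ^ 2 = b * q ^ (m + k) ^ 2 := by exact_mod_cast h1
  have h2' : (b : ℚ) * q ^ m = q ^ m ^ 2 := by exact_mod_cast h2
  have h3 : (q : ℚ) ^ (m + k) ^ 2 * q ^ (2 * (m + 2 * k) * k + (m + 2 * k)) =
      q ^ ((m + 2 * k) ^ 2 + k ^ 2 + 2 * k) * q ^ m := by
    rw [← pow_add, ← pow_add]
    ring_nf
  rw [eq_div_iff (pow_ne_zero _ hq)]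
  apply mul_right_cancel₀ (pow_ne_zero (m ^ 2) hq)
  apply mul_right_cancel₀ (pow_ne_zero m hq)
  linear_combination (q : ℚ) ^ (2 * (m + 2 * k) * k + (m + 2 * k)) * q ^ m * h1' +
    (q : ℚ) ^ (m + k) ^ 2 * q ^ (2 * (m + 2 * k) * k + (m + 2 * k)) * h2' + q ^ m ^ 2 * h3

/-- A nondegenerate Hermitian space of dimension `n` has `q ^ (n² - n)` nilpotent self-adjoint
operators: the weighted count of pairs (totally isotropic `W`, nilpotent self-adjoint `N` vanishing
on `W`), computed by fixing `N` or by fixing `W`, determines the term `W = 0`. -/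
theorem nilCount_eq [Fintype F] {q : ℕ} (hF : Fintype.card F = q ^ 2)
    (hs : ∀ x : F, star x = x ^ q) (n : ℕ) :
    ∀ (V : Type) [AddCommGroup V] [Module F V] [Module.Finite F V] (B : V →ₗ⋆[F] V →ₗ[F] F),
      IsHerm B → finrank F V = n → nilCount B ⊥ * q ^ n = q ^ n ^ 2 := by
  classical
  have hq := one_lt_of_card hF
  have hq0 : (q : ℚ) ≠ 0 := by exact_mod_cast (by omega : q ≠ 0)
  induction n using Nat.strong_induction_on with
  | _ n ih =>
  intro V _ _ _ B hB hn
  have : Finite V := Module.finite_of_finite F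
  have : Fintype V := Fintype.ofFinite V
  have : Fintype (Submodule F V) := Fintype.ofFinite _
  have : Finite (End F V) := Module.finite_of_finite F
  have : Fintype (End F V) := Fintype.ofFinite _
  let I : Finset (Submodule F V) := {W | W ≤ perp B W}
  let 𝒩 : Finset (End F V) := {N | SA B N ∧ IsNilpotent N}
  have hcnt : ∀ W : Submodule F V, nilCount B W = (𝒩.filter fun N => W ≤ LinearMap.ker N).card := by
    intro W
    have e : {N : saSub B W // IsNilpotent N.1} ≃
        {N : End F V // N ∈ 𝒩.filter fun N => W ≤ LinearMap.ker N} :=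
      { toFun := fun N => ⟨N.1.1, by simpa [𝒩] using ⟨⟨N.1.2.1, N.2⟩, N.1.2.2⟩⟩
        invFun := fun N => ⟨⟨N.1, by
          have := N.2
          simp only [𝒩, Finset.mem_filter] at this
          exact ⟨this.1.2.1, this.2⟩⟩, by
          have := N.2
          simp only [𝒩, Finset.mem_filter] at this
          exact this.1.2.2⟩
        left_inv := fun _ => rfl
        right_inv := fun _ => rfl }
    rw [nilCount, Nat.card_congr e, Nat.card_eq_fintype_card, Fintype.card_coe]
  -- only the zero operator contributes to the weighted count of pairs `(W, N)` with `N W = 0`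
  have hmain : ∑ W ∈ I, mob q (finrank F W) * nilCount B W = ∑ W ∈ I, mob q (finrank F W) := by
    have h1 : ∀ W : Submodule F V, mob q (finrank F W) * nilCount B W =
        ∑ N ∈ 𝒩, if W ≤ LinearMap.ker N then mob q (finrank F W) else 0 := by
      intro W
      rw [hcnt, ← Finset.sum_filter, Finset.sum_const, nsmul_eq_mul, mul_comm]
    rw [Finset.sum_congr rfl fun W _ => h1 W, Finset.sum_comm, Finset.sum_eq_single 0]
    · simp
    · intro N hN hN0
      obtain ⟨hSA, hnil⟩ := (Finset.mem_filter.1 hN).2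
      obtain ⟨y, hy, hyy⟩ := exists_apply_ne_zero_apply_apply_eq_zero hnil hN0
      rw [← Finset.sum_filter, Finset.filter_filter]
      refine sum_mob_isotropic_le hF hB hy hyy fun w hw => ?_
      rw [← hSA, LinearMap.mem_ker.1 hw, map_zero, LinearMap.zero_apply]
    · intro h
      exact absurd (Finset.mem_filter.2 ⟨Finset.mem_univ _, fun x y => by simp, IsNilpotent.zero⟩) h
  have hdim : ∀ W ∈ I, finrank F W ∈ Finset.range (n + 1) := fun W _ =>
    Finset.mem_range.2 (by have := Submodule.finrank_le W; omega)
  have hcard : ∀ k, ((I.filter fun W : Submodule F V => finrank F W = k).card : ℚ) = isoSub q n k := by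
    intro k
    rw [← isoCount_eq hF hs k n V B hB hn, isoCount, Nat.card_eq_fintype_card,
      Fintype.card_subtype, Finset.filter_filter]
  have hrhs : ∑ W ∈ I, mob q (finrank F W) =
      ∑ k ∈ Finset.range (n + 1), mob q k * isoSub q n k := by
    rw [← Finset.sum_fiberwise_of_maps_to hdim]
    refine Finset.sum_congr rfl fun k _ => ?_
    rw [Finset.sum_congr rfl (g := fun _ => mob q k), Finset.sum_const, nsmul_eq_mul, hcard,
      mul_comm]
    intro W hW
    rw [(Finset.mem_filter.1 hW).2]
  have hred : ∀ W ∈ I, 0 < finrank F W → (nilCount B W : ℚ) =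
      q ^ (n ^ 2 + finrank F W ^ 2 + 2 * finrank F W) / q ^ (2 * n * finrank F W + n) := by
    intro W hW hpos
    obtain ⟨U, hsup, -, hU, hUd⟩ := exists_reduction hB (Finset.mem_filter.1 hW).2
    have h1 := nilCount_reduction hF hs hB hsup hU hUd
    have h2 := ih (finrank F U) (by omega) U (restr B U) (restr_isHerm_of_disjoint hB U hU) rfl
    exact nilCount_arith hq0 (hUd.trans hn) h1 h2
  have hlhs : ∑ W ∈ I, mob q (finrank F W) * nilCount B W =
      ∑ k ∈ Finset.range n, mob q (k + 1) *
        ((q : ℚ) ^ (n ^ 2 + (k + 1) ^ 2 + 2 * (k + 1)) / q ^ (2 * n * (k + 1) + n)) *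
        isoSub q n (k + 1) + nilCount B ⊥ := by
    rw [← Finset.sum_fiberwise_of_maps_to hdim, Finset.sum_range_succ']
    congr 1
    · refine Finset.sum_congr rfl fun k _ => ?_
      rw [Finset.sum_congr rfl, Finset.sum_const, nsmul_eq_mul, hcard, mul_comm]
      intro W hW
      obtain ⟨hWI, hWk⟩ := Finset.mem_filter.1 hW
      rw [hred W hWI (by omega), hWk]
    · have h0 : I.filter (fun W : Submodule F V => finrank F W = 0) = {⊥} := by
        ext W
        simp only [I, Finset.mem_filter, Finset.mem_univ, true_and, Finset.mem_singleton,
          Submodule.finrank_eq_zero]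
        exact ⟨fun h => h.2, fun h => ⟨h ▸ bot_le, h⟩⟩
      rw [h0, Finset.sum_singleton, finrank_bot, mob_zero, one_mul]
  have hnum := sum_mob_eq hq n (n + 1) (by omega)
  rw [hlhs, hrhs, ← hnum, Finset.sum_range_succ', add_right_inj, mob_zero] at hmain
  simp only [isoSub, one_mul, mul_one, mul_zero, zero_add, add_zero, ne_eq, OfNat.ofNat_ne_zero,
    not_false_eq_true, zero_pow] at hmain
  rw [eq_div_iff (pow_ne_zero _ hq0)] at hmain
  exact_mod_cast hmain

end Nilpotent

/-! ### The Cayley transform -/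

section Cayley

variable {F R : Type} [Field F] [StarRing F] [Ring R] [StarRing R] [Algebra F R] [StarModule F R]
  [IsDedekindFiniteMonoid R]

/-- The Cayley transform `H ↦ (1 + a H) (1 + a* H)⁻¹` is a bijection from nilpotent self-adjoint
to unipotent unitary elements; the relation `A (1 + a* H) = 1 + a H` determines `A` from `H` and,
being equivalent to `(a - a* A) H = A - 1`, also `H` from `A`. -/
lemma card_cayley {a : F} (ha : star a ≠ a) :
    Nat.card {H : R // star H = H ∧ IsNilpotent H} =
      Nat.card {A : R // A * star A = 1 ∧ IsNilpotent (A - 1)} := by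
  have hd : a - star a ≠ 0 := fun h => ha (sub_eq_zero.1 h).symm
  have hrel : ∀ A H : R, A * (1 + star a • H) = 1 + a • H ↔
      (a • (1 : R) - star a • A) * H = A - 1 := by
    intro A H
    rw [← sub_eq_zero, ← sub_eq_zero (b := A - 1), ← neg_eq_zero]
    have : -(A * (1 + star a • H) - (1 + a • H)) = (a • (1 : R) - star a • A) * H - (A - 1) := by
      simp only [mul_add, sub_mul, mul_one, one_mul, smul_mul_assoc, mul_smul_comm]
      abel
    rw [this]
  have hunit : ∀ H : R, IsNilpotent H → IsUnit (1 + star a • H) := fun H hH =>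
    (hH.smul _).isUnit_one_add
  have hunit' : ∀ A : R, IsNilpotent (A - 1) → IsUnit (a • (1 : R) - star a • A) := by
    intro A hA
    have h1 : a • (1 : R) - star a • A =
        (a - star a) • (1 - ((a - star a)⁻¹ * star a) • (A - 1)) := by
      rw [smul_sub (a - star a), smul_smul, mul_inv_cancel_left₀ hd]
      module
    rw [h1]
    exact ((hA.smul _).isUnit_one_sub).smul (Units.mk0 _ hd)
  have hAH : ∀ H : R, star H = H → IsNilpotent H →
      ∃ A : R, (A * star A = 1 ∧ IsNilpotent (A - 1)) ∧ A * (1 + star a • H) = 1 + a • H := by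
    intro H hH hnil
    obtain ⟨P, hP⟩ := hunit H hnil
    have hcomm : Commute H P := by
      rw [hP]
      exact (Commute.one_right H).add_right ((Commute.refl H).smul_right _)
    have hcomm' : Commute H (↑P⁻¹ : R) := hcomm.units_inv_right
    have hsP : star (P : R) = 1 + a • H := by
      rw [hP, star_add, star_one, star_smul, star_star, hH]
    have hsP' : star (1 + a • H) = (P : R) := by rw [← hsP, star_star]
    refine ⟨(1 + a • H) * ↑P⁻¹, ⟨?_, ?_⟩, by rw [← hP, mul_assoc, Units.inv_mul, mul_one]⟩
    · have h1 : Commute (1 + a • H) (↑P⁻¹ : R) :=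
        (Commute.one_left _).add_left (hcomm'.smul_left _)
      have h2 : star (P : R) * P = P * star (P : R) := by
        rw [hsP]
        exact (((Commute.one_left _).add_left (hcomm.smul_left _)).eq)
      rw [h1.eq, ← hsP, star_mul, star_star, mul_assoc, ← mul_assoc (star _), h2, mul_assoc,
        ← mul_assoc, Units.inv_mul, one_mul, ← star_mul, Units.inv_mul, star_one]
    · have h1 : (1 + a • H) * ↑P⁻¹ - 1 = (a - star a) • (H * ↑P⁻¹) := by
        apply P.isUnit.mul_right_cancel
        rw [sub_mul, mul_assoc, Units.inv_mul, smul_mul_assoc, mul_assoc, Units.inv_mul, hP]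
        simp only [mul_one, one_mul]
        module
      rw [h1]
      exact (hcomm'.isNilpotent_mul_right hnil).smul _
  have hHA : ∀ A : R, A * star A = 1 → IsNilpotent (A - 1) →
      ∃ H : R, (star H = H ∧ IsNilpotent H) ∧ A * (1 + star a • H) = 1 + a • H := by
    intro A hA hnil
    obtain ⟨D, hD⟩ := hunit' A hnil
    have hcomm : Commute (↑D⁻¹ : R) (A - 1) := by
      refine Commute.units_inv_left ?_
      rw [hD]
      exact (((Commute.one_left A).smul_left _).sub_left ((Commute.refl A).smul_left _)).sub_right
        (Commute.one_right _)
    refine ⟨↑D⁻¹ * (A - 1), ⟨?_, hcomm.isNilpotent_mul_left hnil⟩, ?_⟩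
    · have hA' : star A * A = 1 := mul_eq_one_symm hA
      have h1 : star (D : R) * (A - 1) = (star A - 1) * D := by
        rw [hD]
        simp only [star_sub, star_smul, star_one, star_star, mul_sub, sub_mul, smul_mul_assoc,
          mul_smul_comm, hA', mul_one, one_mul]
        module
      apply (D.isUnit.star).mul_left_cancel
      rw [hcomm.eq, ← mul_assoc, h1, mul_assoc, Units.mul_inv, mul_one, star_mul, ← mul_assoc,
        ← star_mul, Units.inv_mul, star_one, one_mul, star_sub, star_one]
    · rw [hrel, ← hD, ← mul_assoc, Units.mul_inv, one_mul]
  choose f hf hf' using fun H : {H : R // star H = H ∧ IsNilpotent H} => hAH H.1 H.2.1 H.2.2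
  refine Nat.card_congr (Equiv.ofBijective (fun H => ⟨f H, hf H⟩) ⟨?_, ?_⟩)
  · intro H H' h
    have h : f H = f H' := congrArg Subtype.val h
    have h1 := (hrel _ _).1 (hf' H)
    have h2 := (hrel _ _).1 (hf' H')
    rw [← h] at h2
    exact Subtype.ext ((hunit' _ (hf H).2).mul_left_cancel (h1.trans h2.symm))
  · rintro ⟨A, hA, hnil⟩
    obtain ⟨H, hH, hrelH⟩ := hHA A hA hnil
    exact ⟨⟨H, hH⟩,
      Subtype.ext ((hunit H hH.2).mul_right_cancel ((hf' ⟨H, hH⟩).trans hrelH.symm))⟩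

end Cayley

/-! ### Unipotent unitary matrices -/

section Main

/-- By Cayley–Hamilton, the nilpotency exponent of an `n × n` matrix is at most `n`. -/
lemma isNilpotent_matrix_iff {F : Type} [Field F] {n : ℕ} (A : Matrix (Fin n) (Fin n) F) :
    A ^ n = 0 ↔ IsNilpotent A := by
  refine ⟨fun h => ⟨n, h⟩, fun h => ?_⟩
  have h1 : IsNilpotent (Matrix.toLin' A) := h.map (Matrix.toLinAlgEquiv' (R := F) (n := Fin n))
  have h2 := (Matrix.toLin' A).aeval_self_charpoly
  rw [h1.charpoly_eq_X_pow_finrank, map_pow, Polynomial.aeval_X, Module.finrank_fin_fun] at h2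
  apply Matrix.toLin'.injective
  rw [Matrix.toLin'_pow, h2, map_zero]

/-- The standard Hermitian form `∑ i, star (x i) * y i`. -/
def stdForm (F : Type) [Field F] [StarRing F] (n : ℕ) :
    (Fin n → F) →ₗ⋆[F] (Fin n → F) →ₗ[F] F :=
  LinearMap.mk₂'ₛₗ (starRingEnd F) (RingHom.id F) (fun x y => star x ⬝ᵥ y)
    (fun x y z => by rw [star_add, add_dotProduct])
    (fun c x y => by rw [star_smul, smul_dotProduct]; rfl)
    (fun x y z => by rw [dotProduct_add])
    (fun c x y => by rw [dotProduct_smul]; rfl)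

lemma stdForm_apply {F : Type} [Field F] [StarRing F] {n : ℕ} (x y : Fin n → F) :
    stdForm F n x y = star x ⬝ᵥ y := rfl

lemma stdForm_isHerm (F : Type) [Field F] [StarRing F] (n : ℕ) : IsHerm (stdForm F n) where
  symm x y := by
    rw [stdForm_apply, stdForm_apply, ← star_dotProduct_star, star_star, dotProduct_comm]
  nondeg x hx := by
    funext i
    have := hx (Pi.single i 1)
    rw [stdForm_apply, dotProduct_single, mul_one, Pi.star_apply, star_eq_zero] at this
    exact this

lemma card_hermitian_nilpotent {F : Type} [Field F] [StarRing F] [Fintype F] {q : ℕ}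
    (hF : Fintype.card F = q ^ 2) (hs : ∀ x : F, star x = x ^ q) (n : ℕ) :
    Nat.card {H : Matrix (Fin n) (Fin n) F // star H = H ∧ IsNilpotent H} * q ^ n = q ^ n ^ 2 := by
  rw [← nilCount_eq hF hs n (Fin n → F) (stdForm F n) (stdForm_isHerm F n) (by simp)]
  congr 1
  have hSA : ∀ H : Matrix (Fin n) (Fin n) F, star H = H ↔ SA (stdForm F n) (Matrix.toLin' H) := by
    intro H
    have h1 : ∀ x y, stdForm F n (Matrix.toLin' H x) y = star x ⬝ᵥ (star H *ᵥ y) := by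
      intro x y
      rw [stdForm_apply, Matrix.toLin'_apply, Matrix.star_mulVec, Matrix.star_eq_conjTranspose,
        Matrix.dotProduct_mulVec]
    constructor
    · intro h x y
      rw [h1, h]
      rfl
    · intro h
      refine Matrix.toLin'.injective (LinearMap.ext fun y => ?_)
      funext i
      have := h (Pi.single i 1) y
      rw [h1, stdForm_apply, ← Pi.single_star, star_one, single_one_dotProduct,
        single_one_dotProduct] at this
      exact this
  have hnil : ∀ H : Matrix (Fin n) (Fin n) F, IsNilpotent (Matrix.toLin' H) ↔ IsNilpotent H :=
    fun H => IsNilpotent.map_iff (f := Matrix.toLinAlgEquiv' (R := F) (n := Fin n))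
      (Matrix.toLinAlgEquiv' (R := F) (n := Fin n)).injective
  have e : {H : Matrix (Fin n) (Fin n) F // star H = H ∧ IsNilpotent H} ≃
      {N : End F (Fin n → F) // SA (stdForm F n) N ∧ IsNilpotent N} :=
    Matrix.toLin'.toEquiv.subtypeEquiv fun H => and_congr (hSA H) (hnil H).symm
  have e' : {N : End F (Fin n → F) // SA (stdForm F n) N ∧ IsNilpotent N} ≃
      {N : saSub (stdForm F n) ⊥ // IsNilpotent N.1} :=
    { toFun := fun N => ⟨⟨N.1, N.2.1, bot_le⟩, N.2.2⟩
      invFun := fun N => ⟨N.1.1, N.1.2.1, N.2⟩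
      left_inv := fun _ => rfl
      right_inv := fun _ => rfl }
  exact Nat.card_congr (e.trans e')

/-- The involution `x ↦ x ^ q` of the field with `q²` elements. -/
abbrev frobeniusStar {q : ℕ} (hq : IsPrimePow q) (F : Type) [Field F] [Fintype F]
    (hF : Fintype.card F = q ^ 2) : StarRing F where
  star x := x ^ q
  star_involutive x := by
    change (x ^ q) ^ q = x
    rw [← pow_mul, ← sq, ← hF, FiniteField.pow_card]
  star_mul x y := by
    change (x * y) ^ q = y ^ q * x ^ q
    rw [mul_pow, mul_comm]
  star_add x y := by
    change (x + y) ^ q = x ^ q + y ^ q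
    obtain ⟨p, k, hp, -, rfl⟩ := hq
    have : Fact p.Prime := ⟨hp.nat_prime⟩
    have : CharP F p := charP_of_card_eq_prime_pow (f := k * 2) (by rw [hF, pow_mul])
    exact add_pow_char_pow x y p k

end Main

end

/-- The number of unipotent elements of the finite unitary group `U(n,q)` is `q^(n(n-1))`.
Here `U(n,q)` consists of the matrices `A` over the field of `q^2` elements with
`A * (A^{(q)})ᵀ = 1`, where `A^{(q)}` raises each entry to the `q`-th power. -/
theorem statement8 (q : ℕ) (hq : IsPrimePow q) (n : ℕ) (hn : 1 ≤ n)
    (F : Type) [Field F] [Fintype F] (hF : Fintype.card F = q ^ 2) :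
    Nat.card {A : Matrix (Fin n) (Fin n) F //
        A * (A.map (fun x => x ^ q))ᵀ = 1 ∧ (A - 1) ^ n = 0} = q ^ (n * (n - 1)) := by
  let _ := frobeniusStar hq F hF
  have hs : ∀ x : F, star x = x ^ q := fun _ => rfl
  obtain ⟨a, ha⟩ := exists_star_ne hF hs
  have h1 := card_hermitian_nilpotent hF hs n
  rw [card_cayley ha] at h1
  have e : {A : Matrix (Fin n) (Fin n) F //
      A * (A.map (fun x => x ^ q))ᵀ = 1 ∧ (A - 1) ^ n = 0} ≃
      {A : Matrix (Fin n) (Fin n) F // A * star A = 1 ∧ IsNilpotent (A - 1)} :=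
    Equiv.subtypeEquivRight fun A => and_congr Iff.rfl (isNilpotent_matrix_iff _)
  rw [Nat.card_congr e]
  have hq0 : 0 < q := hq.pos
  apply Nat.eq_of_mul_eq_mul_right (pow_pos hq0 n)
  obtain ⟨m, rfl⟩ : ∃ m, n = m + 1 := ⟨n - 1, by omega⟩
  rw [h1, ← pow_add, Nat.add_sub_cancel]
  congr 1
  ring
end

section
/- For every prime power q, every integer n ≥ 0 and every integer k with 0 ≤ k ≤ n, the proportion of elements α ∈ GL(n,q) whose fixed space has dimension k satisfies P_{GL,n}(k,q) = (1/|GL(k,q)|) · Σ_{i=0}^{n−k} (−1)^i · q^{i(i−1)/2} / (q^{k·i} · |GL(i,q)|), as an identity of rational numbers. -/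
/-!
The group `GL(n,q)` acts transitively on the linearly independent `m`-tuples of vectors of `F^n`
when `m ≤ n`, since any linear isomorphism between two subspaces extends to the whole space. The
tuples fixed by `α` are the linearly independent `m`-tuples of its fixed space; if that space has
dimension `d`, there are `e(m,d) = ∏_{j<m} (q^d - q^j)` of them (`fallQ`). Burnside's lemma
therefore gives the `q`-factorial moments of the fixed-space dimension: the average of `e(m,d(α))`
over `GL(n,q)` is `1` for every `m ≤ n` (`sum_fallQ_fixedDim`).

These moments are inverted by means of the factorisation `e(k+i,k+m) = e(k,k+m) q^{ki} e(i,m)`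
and the alternating sum `∑_i (-1)^i q^(i choose 2) e(i,m)/|GL(i,q)| = [m = 0]`, a case of the
`q`-binomial theorem: `e(i,m)/|GL(i,q)|` is a Gaussian binomial coefficient, and the partial sums
telescope by the `q`-Pascal rule (`alternating_sum`). Hence the linear combination of moments on
the right-hand side averages the indicator function of `d(α) = k` (`indicator_expansion`).
-/

/-- The order of `GL(m,q)` as a rational number: `∏_{j=0}^{m-1} (q^m - q^j)`. -/
def glOrderQ (q m : ℕ) : ℚ := ∏ j ∈ Finset.range m, ((q : ℚ) ^ m - (q : ℚ) ^ j)

/-- `∏_{j<m} (q^d - q^j)`, the number of linearly independent `m`-tuples in a `d`-dimensional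
space over `F_q`; it vanishes for `d < m`, and equals `glOrderQ q m` for `d = m`. -/
def fallQ (q m d : ℕ) : ℚ := ∏ j ∈ Finset.range m, ((q : ℚ) ^ d - (q : ℚ) ^ j)

theorem fallQ_self (q m : ℕ) : fallQ q m m = glOrderQ q m := rfl

theorem fallQ_eq_zero {q m d : ℕ} (h : d < m) : fallQ q m d = 0 :=
  Finset.prod_eq_zero (Finset.mem_range.2 h) (sub_self _)

theorem fallQ_succ_right (q m d : ℕ) :
    fallQ q (m + 1) d = fallQ q m d * ((q : ℚ) ^ d - (q : ℚ) ^ m) :=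
  Finset.prod_range_succ _ _

theorem fallQ_succ_succ (q m d : ℕ) :
    fallQ q (m + 1) (d + 1) = ((q : ℚ) ^ (d + 1) - 1) * ((q : ℚ) ^ m * fallQ q m d) := by
  have h : ∀ j : ℕ, (q : ℚ) ^ (d + 1) - (q : ℚ) ^ (j + 1) = q * ((q : ℚ) ^ d - (q : ℚ) ^ j) :=
    fun j => by ring
  rw [fallQ, Finset.prod_range_succ']
  simp only [h, Finset.prod_mul_distrib, Finset.prod_const, Finset.card_range, fallQ, pow_zero]
  ring

theorem fallQ_add (q k i m : ℕ) :
    fallQ q (k + i) (k + m) = fallQ q k (k + m) * ((q : ℚ) ^ (k * i) * fallQ q i m) := by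
  have h : ∀ j : ℕ, (q : ℚ) ^ (k + m) - (q : ℚ) ^ (k + j) = q ^ k * ((q : ℚ) ^ m - (q : ℚ) ^ j) :=
    fun j => by ring
  rw [fallQ, Finset.prod_range_add]
  simp only [h, Finset.prod_mul_distrib, Finset.prod_const, Finset.card_range, fallQ, pow_mul]

theorem pow_sub_one_ne_zero {q : ℕ} (hq : 2 ≤ q) (i : ℕ) : (q : ℚ) ^ (i + 1) - 1 ≠ 0 := by
  have h : (1 : ℚ) < q := by exact_mod_cast hq
  exact (sub_pos.2 (one_lt_pow₀ h (Nat.succ_ne_zero i))).ne'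

theorem glOrderQ_ne_zero {q : ℕ} (hq : 2 ≤ q) (m : ℕ) : glOrderQ q m ≠ 0 := by
  refine Finset.prod_ne_zero_iff.2 fun j hj => (sub_pos.2 ?_).ne'
  have h : (1 : ℚ) < q := by exact_mod_cast hq
  exact pow_lt_pow_right₀ h (Finset.mem_range.1 hj)

/-- The `q`-Pascal rule for the Gaussian binomials `fallQ q i m / glOrderQ q i`. -/
theorem fallQ_div_pascal {q : ℕ} (hq : 2 ≤ q) (i m : ℕ) :
    fallQ q (i + 1) (m + 1) / glOrderQ q (i + 1) =
      fallQ q i m / glOrderQ q i +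
        (q : ℚ) ^ (i + 1) * (fallQ q (i + 1) m / glOrderQ q (i + 1)) := by
  have h1 := pow_sub_one_ne_zero hq i
  have h2 := glOrderQ_ne_zero hq i
  have h3 : (q : ℚ) ≠ 0 := by
    have : q ≠ 0 := by omega
    exact_mod_cast this
  have h4 : glOrderQ q (i + 1) = ((q : ℚ) ^ (i + 1) - 1) * ((q : ℚ) ^ i * glOrderQ q i) :=
    fallQ_succ_succ q i i
  rw [h4, fallQ_succ_succ, fallQ_succ_right]
  field_simp
  ring

theorem succ_choose_exponent (i : ℕ) : (i + 1) * (i + 1 - 1) / 2 = i * (i - 1) / 2 + i := by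
  rw [← Finset.sum_range_id_mul_two, ← Finset.sum_range_id_mul_two,
    Nat.mul_div_cancel _ two_pos, Nat.mul_div_cancel _ two_pos, Finset.sum_range_succ]

/-- Partial sums of the alternating sum of Gaussian binomials, in closed form. -/
theorem alternating_partial_sum {q : ℕ} (hq : 2 ≤ q) (m M : ℕ) :
    ∑ i ∈ Finset.range (M + 1),
        (-1 : ℚ) ^ i * (q : ℚ) ^ (i * (i - 1) / 2) * (fallQ q i (m + 1) / glOrderQ q i) =
      (-1 : ℚ) ^ M * (q : ℚ) ^ (M * (M - 1) / 2 + M) * (fallQ q M m / glOrderQ q M) := by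
  induction M with
  | zero => simp [fallQ]
  | succ M ih =>
    rw [Finset.sum_range_succ, ih, fallQ_div_pascal hq, succ_choose_exponent]
    ring

theorem alternating_sum {q : ℕ} (hq : 2 ≤ q) {m N : ℕ} (h : m ≤ N) :
    ∑ i ∈ Finset.range (N + 1),
        (-1 : ℚ) ^ i * (q : ℚ) ^ (i * (i - 1) / 2) * (fallQ q i m / glOrderQ q i) =
      if m = 0 then 1 else 0 := by
  cases m with
  | zero =>
    rw [Finset.sum_range_succ']
    have h0 : fallQ q 0 0 = 1 := rfl
    simp [fallQ_eq_zero, h0, ← fallQ_self]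
  | succ m => simp [alternating_partial_sum hq, fallQ_eq_zero (Nat.lt_of_succ_le h)]

/-- Inversion of the `q`-factorial moments: for `d ≤ n`, the indicator of `d = k` as a combination
of the `fallQ q (k + i) d`. -/
theorem indicator_expansion {q : ℕ} (hq : 2 ≤ q) {n k d : ℕ} (hd : d ≤ n) :
    (1 / glOrderQ q k) * ∑ i ∈ Finset.range (n - k + 1),
        (-1 : ℚ) ^ i * (q : ℚ) ^ (i * (i - 1) / 2) / ((q : ℚ) ^ (k * i) * glOrderQ q i) *
          fallQ q (k + i) d =
      if d = k then 1 else 0 := by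
  rcases lt_or_ge d k with h | h
  · rw [if_neg h.ne]
    simp [fun i => fallQ_eq_zero (q := q) (show d < k + i by omega)]
  · obtain ⟨m, rfl⟩ := Nat.exists_eq_add_of_le h
    have h3 : (q : ℚ) ≠ 0 := by
      have : q ≠ 0 := by omega
      exact_mod_cast this
    have key : ∀ i : ℕ,
        (-1 : ℚ) ^ i * (q : ℚ) ^ (i * (i - 1) / 2) / ((q : ℚ) ^ (k * i) * glOrderQ q i) *
          fallQ q (k + i) (k + m) =
        fallQ q k (k + m) *
          ((-1 : ℚ) ^ i * (q : ℚ) ^ (i * (i - 1) / 2) * (fallQ q i m / glOrderQ q i)) := by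
      intro i
      have := glOrderQ_ne_zero hq i
      have := pow_ne_zero (k * i) h3
      rw [fallQ_add]
      field_simp
    simp only [key]
    rw [← Finset.mul_sum, alternating_sum hq (show m ≤ n - k by omega)]
    by_cases hm : m = 0
    · subst hm
      simp [fallQ_self, glOrderQ_ne_zero hq k]
    · simp [hm]

/-- The number of linearly independent `m`-tuples, without restriction on `m`. -/
theorem card_linearIndependent_eq_fallQ {F V : Type*} [Field F] [Fintype F] [AddCommGroup V]
    [Module F V] [Finite V] (m : ℕ) :
    (Nat.card {s : Fin m → V // LinearIndependent F s} : ℚ) =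
      fallQ (Fintype.card F) m (Module.finrank F V) := by
  rcases le_or_gt m (Module.finrank F V) with h | h
  · rw [card_linearIndependent h, fallQ, Nat.cast_prod,
      ← Fin.prod_univ_eq_prod_range
        (fun j => ((Fintype.card F : ℚ) ^ Module.finrank F V - (Fintype.card F : ℚ) ^ j))]
    refine Finset.prod_congr rfl fun i _ => ?_
    rw [Nat.cast_sub (Nat.pow_le_pow_right Fintype.card_pos (i.2.le.trans h))]
    simp
  · rw [fallQ_eq_zero h]
    have : IsEmpty {s : Fin m → V // LinearIndependent F s} :=
      ⟨fun s => by
        have := s.2.fintype_card_le_finrank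
        rw [Fintype.card_fin] at this
        omega⟩
    simp

section Action

variable {F : Type} [Field F]

theorem mulVec_linearIndependent {m n : ℕ} (A : Matrix.GeneralLinearGroup (Fin n) F)
    {v : Fin m → Fin n → F} (hv : LinearIndependent F v) :
    LinearIndependent F fun i => (A : Matrix (Fin n) (Fin n) F).mulVec (v i) :=
  hv.map' (Matrix.mulVecLin (A : Matrix (Fin n) (Fin n) F))
    (LinearMap.ker_eq_bot.2 (Matrix.mulVec_injective_of_isUnit A.isUnit))

/-- Linearly independent `m`-tuples of vectors in `F^n`. -/
def Frames (F : Type) [Field F] (m n : ℕ) : Type :=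
  {v : Fin m → Fin n → F // LinearIndependent F v}

/-- `GL(n,F)` acts on frames, vector by vector. -/
instance framesAction (m n : ℕ) :
    MulAction (Matrix.GeneralLinearGroup (Fin n) F) (Frames F m n) where
  smul A v := ⟨fun i => (A : Matrix (Fin n) (Fin n) F).mulVec (v.1 i),
    mulVec_linearIndependent A v.2⟩
  one_smul v := Subtype.ext <| funext fun i => Matrix.one_mulVec (v.1 i)
  mul_smul A B v := Subtype.ext <| funext fun i => (Matrix.mulVec_mulVec (v.1 i) A.1 B.1).symm

theorem frames_smul_val {m n : ℕ} (A : Matrix.GeneralLinearGroup (Fin n) F) (v : Frames F m n)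
    (i : Fin m) : (A • v).1 i = (A : Matrix (Fin n) (Fin n) F).mulVec (v.1 i) := rfl

instance frames_isPretransitive (m n : ℕ) :
    MulAction.IsPretransitive (Matrix.GeneralLinearGroup (Fin n) F) (Frames F m n) := by
  refine ⟨fun v w => ?_⟩
  let f := v.2.linearCombinationEquiv.symm ≪≫ₗ w.2.linearCombinationEquiv
  obtain ⟨g, hg⟩ := Submodule.exists_linearEquiv_restrict_eq f
  refine ⟨Matrix.GeneralLinearGroup.toLin.symm
    (LinearMap.GeneralLinearGroup.ofLinearEquiv g), Subtype.ext <| funext fun i => ?_⟩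
  have hv : (v.2.linearCombinationEquiv (Finsupp.single i 1) : Fin n → F) = v.1 i := by simp
  have hw : (w.2.linearCombinationEquiv (Finsupp.single i 1) : Fin n → F) = w.1 i := by simp
  have hgv : g (v.1 i) = w.1 i := by
    rw [← hv, ← hg, ← hw]
    simp [f]
  rw [frames_smul_val, ← hgv]
  have h := Matrix.toLin'_toMatrix' (g : (Fin n → F) →ₗ[F] (Fin n → F))
  exact congrArg (fun φ : (Fin n → F) →ₗ[F] (Fin n → F) => φ (v.1 i)) h

theorem frames_nonempty {m n : ℕ} (h : m ≤ n) : Nonempty (Frames F m n) :=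
  ⟨⟨fun i => Pi.basisFun F (Fin n) (Fin.castLE h i),
    (Pi.basisFun F (Fin n)).linearIndependent.comp _ (Fin.castLE_injective h)⟩⟩

/-- The dimension of the fixed space of an invertible matrix. -/
noncomputable def fixedDim {n : ℕ} (A : Matrix.GeneralLinearGroup (Fin n) F) : ℕ :=
  Module.finrank F (LinearMap.ker (Matrix.mulVecLin ((A : Matrix (Fin n) (Fin n) F) - 1)))

theorem fixedDim_le {n : ℕ} (A : Matrix.GeneralLinearGroup (Fin n) F) : fixedDim A ≤ n := by
  have := Submodule.finrank_le
    (LinearMap.ker (Matrix.mulVecLin ((A : Matrix (Fin n) (Fin n) F) - 1)))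
  simpa [fixedDim] using this

theorem mem_fixedSpace {n : ℕ} (A : Matrix.GeneralLinearGroup (Fin n) F) (x : Fin n → F) :
    x ∈ LinearMap.ker (Matrix.mulVecLin ((A : Matrix (Fin n) (Fin n) F) - 1)) ↔
      (A : Matrix (Fin n) (Fin n) F).mulVec x = x := by
  rw [LinearMap.mem_ker, Matrix.mulVecLin_apply, Matrix.sub_mulVec, Matrix.one_mulVec, sub_eq_zero]

/-- The frames fixed by `A` are the frames of its fixed space. -/
def fixedByEquiv {n : ℕ} (m : ℕ) (A : Matrix.GeneralLinearGroup (Fin n) F) :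
    MulAction.fixedBy (Frames F m n) A ≃
      {s : Fin m → LinearMap.ker (Matrix.mulVecLin ((A : Matrix (Fin n) (Fin n) F) - 1)) //
        LinearIndependent F s} where
  toFun v := ⟨fun i => ⟨v.1.1 i, (mem_fixedSpace A _).2
      ((frames_smul_val A v.1 i).symm.trans (congrArg (fun w : Frames F m n => w.1 i) v.2))⟩,
    LinearIndependent.of_comp (Submodule.subtype _) v.1.2⟩
  invFun s := ⟨⟨fun i => (s.1 i : Fin n → F),
      s.2.map' (Submodule.subtype _) (Submodule.ker_subtype _)⟩,
    Subtype.ext <| funext fun i => (mem_fixedSpace A _).1 (s.1 i).2⟩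
  left_inv _ := rfl
  right_inv _ := rfl

/-- The `q`-factorial moments of the fixed-space dimension, by Burnside's lemma. -/
theorem sum_fallQ_fixedDim [Fintype F] {m n : ℕ} (h : m ≤ n)
    [Fintype (Matrix.GeneralLinearGroup (Fin n) F)] :
    ∑ A : Matrix.GeneralLinearGroup (Fin n) F, fallQ (Fintype.card F) m (fixedDim A) =
      (Nat.card (Matrix.GeneralLinearGroup (Fin n) F) : ℚ) := by
  classical
  have : Finite (Frames F m n) := Subtype.finite
  have : Fintype (Frames F m n) := Fintype.ofFinite _
  have : Nonempty (Frames F m n) := frames_nonempty h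
  let Ω := MulAction.orbitRel.Quotient (Matrix.GeneralLinearGroup (Fin n) F) (Frames F m n)
  have : Fintype Ω := Fintype.ofFinite _
  have hΩ : Fintype.card Ω = 1 := by
    have : Subsingleton Ω := (MulAction.pretransitive_iff_subsingleton_quotient _ _).1 inferInstance
    have : Nonempty Ω := ‹Nonempty (Frames F m n)›.map (Quotient.mk _)
    exact Fintype.card_eq_one_iff_nonempty_unique.2 (unique_iff_subsingleton_and_nonempty Ω |>.2
      ⟨inferInstance, inferInstance⟩)
  have key := MulAction.sum_card_fixedBy_eq_card_orbits_mul_card_group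
    (Matrix.GeneralLinearGroup (Fin n) F) (Frames F m n)
  rw [hΩ, one_mul] at key
  rw [Nat.card_eq_fintype_card, ← key, Nat.cast_sum]
  refine Finset.sum_congr rfl fun A _ => ?_
  rw [← Nat.card_eq_fintype_card (α := MulAction.fixedBy (Frames F m n) A),
    Nat.card_congr (fixedByEquiv m A),
    card_linearIndependent_eq_fallQ, fixedDim]

end Action

/-- Rudvalis–Shinoda: the proportion of `α ∈ GL(n,q)` whose fixed space has dimension `k` is
`(1/|GL(k,q)|) Σ_{i=0}^{n-k} (-1)^i q^(i choose 2) / (q^{ki} |GL(i,q)|)`. -/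
theorem statement9 (q : ℕ) (hq : IsPrimePow q) (n k : ℕ) (hk : k ≤ n)
    (F : Type) [Field F] [Fintype F] (hF : Fintype.card F = q) :
    (Nat.card {A : Matrix.GeneralLinearGroup (Fin n) F //
        Module.finrank F
          (LinearMap.ker (Matrix.mulVecLin ((A : Matrix (Fin n) (Fin n) F) - 1))) = k} : ℚ) /
      (Nat.card (Matrix.GeneralLinearGroup (Fin n) F) : ℚ)
    = (1 / glOrderQ q k) *
        ∑ i ∈ Finset.range (n - k + 1),
          (-1 : ℚ) ^ i * (q : ℚ) ^ (i * (i - 1) / 2) /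
            ((q : ℚ) ^ (k * i) * glOrderQ q i) := by
  classical
  have hq2 : 2 ≤ q := hq.two_le
  have : Fintype (Matrix.GeneralLinearGroup (Fin n) F) := Fintype.ofFinite _
  have hG : (Nat.card (Matrix.GeneralLinearGroup (Fin n) F) : ℚ) ≠ 0 :=
    Nat.cast_ne_zero.2 Nat.card_pos.ne'
  have hcount : (Nat.card {A : Matrix.GeneralLinearGroup (Fin n) F // fixedDim A = k} : ℚ) =
      ∑ A : Matrix.GeneralLinearGroup (Fin n) F, if fixedDim A = k then (1 : ℚ) else 0 := by
    rw [Nat.card_eq_fintype_card, Fintype.card_subtype, Finset.sum_boole]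
  change (Nat.card {A : Matrix.GeneralLinearGroup (Fin n) F // fixedDim A = k} : ℚ) / _ = _
  rw [div_eq_iff hG, hcount,
    Finset.sum_congr rfl fun A _ => (indicator_expansion hq2 (k := k) (fixedDim_le A)).symm,
    ← Finset.mul_sum, Finset.sum_comm, mul_assoc, Finset.sum_mul]
  congr 1
  refine Finset.sum_congr rfl fun i hi => ?_
  have hi' : k + i ≤ n := by
    have := Finset.mem_range.1 hi
    omega
  rw [← Finset.mul_sum, ← hF, sum_fallQ_fixedDim hi']
end

section
/- Fix a prime power q and an integer k ≥ 0. As n → ∞, the proportion P_{GL,n}(k,q) of elements of GL(n,q) whose fixed space has dimension k converges to [∏_{r=1}^∞ (1 − q^{−r})] · q^{−k²} / [∏_{j=1}^k (1 − q^{−j})²]. -/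
/-!
The proof is by moments. For `m ≤ n` the group `GL(n,q)` permutes the linearly independent
`m`-tuples in `F^n` transitively, so by Burnside's lemma a random matrix fixes on average exactly
one of them (`sum_injCount_fixDim`). A matrix with fixed space of dimension `d` fixes
`∏ i < m, (q^d - q^i)` such tuples. An explicit combination of these functions of `d`, for
`k ≤ m ≤ n`, is supported on `d = k` (`sum_eulerCoeff_mul_injCount`), by a telescoping `q`-series;
hence the proportion in question equals a partial sum of a series, divided by
`∏ i < k, (q^k - q^i)` (`card_fixDim_div`).

The series is Euler's expansion of `∏ r ≥ 1, (1 - z q^{-r})` at `z = q^{-k}`. Its functional equation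
`G(z) = (1 - z/q) G(z/q)` (`tsum_eulerCoeff_succ`), together with `G(z) → 1` as `z → 0`, identifies
the sum (`prod_mul_tsum_eulerCoeff_eq_tprod`).
-/

/-! ### Inverting the moments -/

/-- The number of injective linear maps from an `m`-dimensional space to a `d`-dimensional one over
a field with `x` elements, as a polynomial expression in `x ^ d`. It vanishes for `d < m`. -/
noncomputable def injCount (x : ℝ) (m d : ℕ) : ℝ := ∏ i ∈ Finset.range m, (x ^ d - x ^ i)

/-- The terms of Euler's series for `∏ r, (1 - x⁻ᵏ⁻¹⁻ʳ)`. Up to the factor `injCount x k k`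
they are also the coefficients expressing the indicator of `d = k` through the functions
`injCount x (k + i) d` of `d` (see `sum_eulerCoeff_mul_injCount`). -/
noncomputable def eulerCoeff (x : ℝ) (k i : ℕ) : ℝ :=
  ∏ j ∈ Finset.range i, (-(1 / x ^ k) / (x ^ (j + 1) - 1))

theorem injCount_eq_zero {x : ℝ} {m d : ℕ} (h : d < m) : injCount x m d = 0 :=
  Finset.prod_eq_zero (Finset.mem_range.2 h) (sub_self _)

theorem pow_succ_sub_one_pos {x : ℝ} (hx : 1 < x) (j : ℕ) : 0 < x ^ (j + 1) - 1 :=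
  sub_pos.2 (one_lt_pow₀ hx (Nat.succ_ne_zero j))

theorem one_sub_inv_pow_pos {x : ℝ} (hx : 1 < x) (j : ℕ) : 0 < 1 - 1 / x ^ (j + 1) := by
  have h := one_lt_pow₀ hx (Nat.succ_ne_zero j)
  exact sub_pos.2 ((div_lt_one (zero_lt_one.trans h)).2 h)

theorem injCount_self {x : ℝ} (hx : 1 < x) (k : ℕ) :
    injCount x k k = x ^ (k ^ 2) * ∏ j ∈ Finset.range k, (1 - 1 / x ^ (j + 1)) := by
  have hx0 : x ≠ 0 := by linarith
  rw [injCount, ← Finset.prod_range_reflect, pow_two, pow_mul]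
  conv_rhs => rw [← Finset.card_range k, ← Finset.prod_const, Finset.card_range,
    ← Finset.prod_mul_distrib]
  refine Finset.prod_congr rfl fun j hj => ?_
  have hj := Finset.mem_range.1 hj
  obtain ⟨l, rfl⟩ : ∃ l, k = l + (j + 1) := ⟨k - (j + 1), by omega⟩
  rw [show l + (j + 1) - 1 - j = l by omega, pow_add]
  field_simp

/-- A sum whose partial sums are products; for `y = x ^ e` with `1 ≤ e ≤ N` it vanishes, which is
what makes the inversion of the moments work. -/
theorem sum_prod_telescope {x : ℝ} (hx : 1 < x) (y : ℝ) (N : ℕ) :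
    ∑ i ∈ Finset.range (N + 1), ∏ j ∈ Finset.range i, ((x ^ j - y) / (x ^ (j + 1) - 1)) =
      ∏ j ∈ Finset.range N, ((x ^ (j + 1) - y) / (x ^ (j + 1) - 1)) := by
  induction N with
  | zero => simp
  | succ N ih =>
    rw [Finset.sum_range_succ, ih, Finset.prod_div_distrib, Finset.prod_div_distrib,
      Finset.prod_div_distrib, Finset.prod_range_succ' (fun j => x ^ j - y),
      Finset.prod_range_succ (fun j => x ^ (j + 1) - 1),
      Finset.prod_range_succ (fun j => x ^ (j + 1) - y)]
    have h1 := (pow_succ_sub_one_pos hx N).ne'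
    have h2 : ∏ j ∈ Finset.range N, (x ^ (j + 1) - 1) ≠ 0 :=
      Finset.prod_ne_zero_iff.2 fun j _ => (pow_succ_sub_one_pos hx j).ne'
    field_simp
    ring

theorem eulerCoeff_mul_injCount {x : ℝ} (hx : 1 < x) (k i e : ℕ) :
    eulerCoeff x k i * injCount x (k + i) (k + e) = injCount x k (k + e) *
      ∏ j ∈ Finset.range i, ((x ^ j - x ^ e) / (x ^ (j + 1) - 1)) := by
  have hx0 : x ≠ 0 := by linarith
  rw [injCount, Finset.prod_range_add, eulerCoeff, injCount, mul_left_comm,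
    ← Finset.prod_mul_distrib]
  congr 1
  refine Finset.prod_congr rfl fun j _ => ?_
  have h1 := (pow_succ_sub_one_pos hx j).ne'
  rw [pow_add, pow_add]
  field_simp
  ring

/-- The moments determine the distribution: on `d ≤ k + N`, an explicit combination of the functions
`injCount x (k + i)` is a multiple of the indicator of `d = k`. -/
theorem sum_eulerCoeff_mul_injCount {x : ℝ} (hx : 1 < x) (k N d : ℕ) (hd : d ≤ k + N) :
    ∑ i ∈ Finset.range (N + 1), eulerCoeff x k i * injCount x (k + i) d =
      if d = k then injCount x k k else 0 := by
  rcases lt_or_ge d k with h | h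
  · rw [if_neg h.ne]
    exact Finset.sum_eq_zero fun i _ => by rw [injCount_eq_zero (by omega), mul_zero]
  · obtain ⟨e, rfl⟩ := Nat.exists_eq_add_of_le h
    simp_rw [eulerCoeff_mul_injCount hx]
    rw [← Finset.mul_sum, sum_prod_telescope hx]
    rcases e with _ | e
    · simp only [add_zero, pow_zero, if_true]
      rw [Finset.prod_eq_one fun j _ => div_self (pow_succ_sub_one_pos hx j).ne', mul_one]
    · -- the factor `x ^ (e + 1) - x ^ (e + 1)` occurs in the product because `e < N`, from `hd`
      rw [if_neg (by omega), Finset.prod_eq_zero (i := e) (Finset.mem_range.2 (by omega))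
        (by rw [sub_self, zero_div]), mul_zero]

/-! ### The moments of the fixed space -/

section Moments

variable {F : Type} [Field F] [Fintype F]

/-- The dimension of the fixed space of a matrix. -/
noncomputable def fixDim {n : ℕ} (A : Matrix.GeneralLinearGroup (Fin n) F) : ℕ :=
  Module.finrank F (LinearMap.ker (Matrix.mulVecLin ((A : Matrix (Fin n) (Fin n) F) - 1)))

theorem card_linearIndependent_eq_injCount {V : Type} [AddCommGroup V] [Module F V] [Finite V]
    (m : ℕ) : (Nat.card {s : Fin m → V // LinearIndependent F s} : ℝ) =
      injCount (Fintype.card F) m (Module.finrank F V) := by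
  rcases le_or_gt m (Module.finrank F V) with h | h
  · rw [card_linearIndependent h, injCount, Nat.cast_prod, Finset.prod_range]
    refine Finset.prod_congr rfl fun i _ => ?_
    rw [Nat.cast_sub (Nat.pow_le_pow_right Fintype.card_pos (by omega))]
    push_cast
    rfl
  · have : IsEmpty {s : Fin m → V // LinearIndependent F s} := ⟨fun s => by
      have := s.2.fintype_card_le_finrank
      rw [Fintype.card_fin] at this
      omega⟩
    rw [injCount_eq_zero h, Nat.card_of_isEmpty, Nat.cast_zero]

/-- The general linear group acts on linearly independent `m`-tuples of vectors. -/
@[reducible]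
def frameAction (F : Type) [Field F] (n m : ℕ) :
    MulAction (Matrix.GeneralLinearGroup (Fin n) F)
      {v : Fin m → (Fin n → F) // LinearIndependent F v} where
  smul A v := ⟨fun i => (A : Matrix (Fin n) (Fin n) F).mulVec (v.1 i),
    v.2.map' (Matrix.mulVecLin (A : Matrix (Fin n) (Fin n) F)) (LinearMap.ker_eq_bot.2
      (Matrix.mulVec_injective_of_isUnit A.isUnit))⟩
  one_smul v := Subtype.ext (funext fun i => Matrix.one_mulVec (v.1 i))
  mul_smul A B v := Subtype.ext (funext fun i => (Matrix.mulVec_mulVec (v.1 i) A.1 B.1).symm)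

theorem frameAction_transitive (n m : ℕ)
    (v w : {v : Fin m → (Fin n → F) // LinearIndependent F v}) :
    ∃ A : Matrix.GeneralLinearGroup (Fin n) F, (frameAction F n m).toSMul.smul A v = w := by
  obtain ⟨g, hg⟩ := Submodule.exists_linearEquiv_restrict_eq
    ((Module.Basis.span v.2).equiv (Module.Basis.span w.2) (Equiv.refl _))
  refine ⟨Matrix.GeneralLinearGroup.toLin.symm
    ((LinearMap.GeneralLinearGroup.generalLinearEquiv F _).symm g), Subtype.ext (funext fun i => ?_)⟩
  have h := hg (Module.Basis.span v.2 i)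
  rw [Module.Basis.equiv_apply, Equiv.refl_apply, Module.Basis.span_apply,
    Module.Basis.span_apply] at h
  exact (LinearMap.toMatrix'_mulVec g.toLinearMap (v.1 i)).trans h.symm

/-- Burnside's lemma for the (transitive) action on linearly independent `m`-tuples: the mean number
of such tuples in the fixed space of a random matrix is `1`. -/
theorem sum_injCount_fixDim (n m : ℕ) [Fintype (Matrix.GeneralLinearGroup (Fin n) F)]
    (hm : m ≤ n) :
    ∑ A : Matrix.GeneralLinearGroup (Fin n) F, injCount (Fintype.card F) m (fixDim A) =
      Nat.card (Matrix.GeneralLinearGroup (Fin n) F) := by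
  classical
  let _ := frameAction F n m
  let _ := fun A : Matrix.GeneralLinearGroup (Fin n) F => Fintype.ofFinite
    (MulAction.fixedBy {v : Fin m → (Fin n → F) // LinearIndependent F v} A)
  let _ := Fintype.ofFinite (Quotient (MulAction.orbitRel (Matrix.GeneralLinearGroup (Fin n) F)
    {v : Fin m → (Fin n → F) // LinearIndependent F v}))
  have hB := MulAction.sum_card_fixedBy_eq_card_orbits_mul_card_group
    (Matrix.GeneralLinearGroup (Fin n) F) {v : Fin m → (Fin n → F) // LinearIndependent F v}
  have h1 : Fintype.card (Quotient (MulAction.orbitRel (Matrix.GeneralLinearGroup (Fin n) F)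
      {v : Fin m → (Fin n → F) // LinearIndependent F v})) = 1 := by
    rw [Fintype.card_eq_one_iff]
    -- the first `m` standard basis vectors
    let e : {v : Fin m → (Fin n → F) // LinearIndependent F v} :=
      ⟨fun i => Pi.basisFun F (Fin n) (Fin.castLE hm i),
        (Pi.basisFun F (Fin n)).linearIndependent.comp _ (Fin.castLE_injective hm)⟩
    refine ⟨Quotient.mk _ e, fun y => ?_⟩
    induction y using Quotient.inductionOn with
    | h v => exact Quotient.sound (frameAction_transitive n m e v)
  rw [h1, one_mul, ← Nat.card_eq_fintype_card] at hB
  rw [← hB, Nat.cast_sum]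
  refine Finset.sum_congr rfl fun A _ => ?_
  rw [fixDim, ← card_linearIndependent_eq_injCount, ← Nat.card_eq_fintype_card, Nat.cast_inj]
  have key : ∀ x : Fin n → F, x ∈ LinearMap.ker (Matrix.mulVecLin
      ((A : Matrix (Fin n) (Fin n) F) - 1)) ↔ (A : Matrix (Fin n) (Fin n) F).mulVec x = x := by
    intro x
    rw [LinearMap.mem_ker, Matrix.mulVecLin_apply, Matrix.sub_mulVec, Matrix.one_mulVec, sub_eq_zero]
  exact Nat.card_congr
    { toFun := fun s => ⟨⟨fun i => (s.1 i : Fin n → F),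
          s.2.map' (Submodule.subtype _) (Submodule.ker_subtype _)⟩,
        Subtype.ext (funext fun i => (key _).1 (s.1 i).2)⟩
      invFun := fun v => ⟨fun i => ⟨v.1.1 i, (key _).2 (congrFun (congrArg Subtype.val v.2) i)⟩,
        LinearIndependent.of_comp (Submodule.subtype _) v.1.2⟩
      left_inv := fun _ => rfl
      right_inv := fun _ => rfl }

/-- The exact proportion for `n = k + N`, as a partial sum of Euler's series. -/
theorem card_fixDim_div (hF : (1 : ℝ) < Fintype.card F) (k N : ℕ) :
    (Nat.card {A : Matrix.GeneralLinearGroup (Fin (k + N)) F // fixDim A = k} : ℝ) /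
        (Nat.card (Matrix.GeneralLinearGroup (Fin (k + N)) F) : ℝ) =
      (∑ i ∈ Finset.range (N + 1), eulerCoeff (Fintype.card F) k i) /
        injCount (Fintype.card F) k k := by
  classical
  let _ := Fintype.ofFinite (Matrix.GeneralLinearGroup (Fin (k + N)) F)
  have hG : (Nat.card (Matrix.GeneralLinearGroup (Fin (k + N)) F) : ℝ) ≠ 0 :=
    Nat.cast_ne_zero.2 Nat.card_pos.ne'
  have hk : injCount (Fintype.card F) k k ≠ 0 := by
    rw [injCount_self hF]
    exact mul_ne_zero (pow_ne_zero _ (by linarith))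
      (Finset.prod_ne_zero_iff.2 fun j _ => (one_sub_inv_pow_pos hF j).ne')
  rw [div_eq_div_iff hG hk, Finset.sum_mul]
  have hle : ∀ A : Matrix.GeneralLinearGroup (Fin (k + N)) F, fixDim A ≤ k + N := fun A =>
    (LinearMap.ker (Matrix.mulVecLin
      ((A : Matrix (Fin (k + N)) (Fin (k + N)) F) - 1))).finrank_le.trans_eq
        (Module.finrank_fin_fun F)
  calc _ = ∑ A : Matrix.GeneralLinearGroup (Fin (k + N)) F,
        if fixDim A = k then injCount (Fintype.card F) k k else 0 := by
        rw [← Finset.sum_filter, Finset.sum_const, nsmul_eq_mul, Nat.card_eq_fintype_card,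
          Fintype.card_subtype]
    _ = ∑ A : Matrix.GeneralLinearGroup (Fin (k + N)) F, ∑ i ∈ Finset.range (N + 1),
        eulerCoeff (Fintype.card F) k i * injCount (Fintype.card F) (k + i) (fixDim A) :=
        Finset.sum_congr rfl fun A _ => (sum_eulerCoeff_mul_injCount hF k N _ (hle A)).symm
    _ = _ := by
        rw [Finset.sum_comm]
        refine Finset.sum_congr rfl fun i hi => ?_
        have hi := Finset.mem_range.1 hi
        rw [← Finset.mul_sum, sum_injCount_fixDim _ _ (by omega)]

end Moments

/-! ### Euler's series -/

section Euler

variable {x : ℝ}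

/-- The dependence on `k` is that of a power series in `z = x⁻ᵏ`. -/
theorem eulerCoeff_eq (hx : 1 < x) (k i : ℕ) :
    eulerCoeff x k i = eulerCoeff x 0 i * (1 / x ^ i) ^ k := by
  have hx0 : x ≠ 0 := by linarith
  have h : (1 / x ^ i) ^ k = ∏ _j ∈ Finset.range i, (1 / x ^ k) := by
    rw [Finset.prod_const, Finset.card_range, one_div_pow, one_div_pow, ← pow_mul, ← pow_mul,
      mul_comm]
  rw [eulerCoeff, eulerCoeff, h, ← Finset.prod_mul_distrib]
  refine Finset.prod_congr rfl fun j _ => ?_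
  rw [pow_zero]
  ring

theorem summable_norm_eulerCoeff (hx : 1 < x) (k : ℕ) : Summable fun i => ‖eulerCoeff x k i‖ := by
  have hx0 : x ≠ 0 := by linarith
  have h1 : ∀ i, eulerCoeff x k i ≠ 0 := fun i => Finset.prod_ne_zero_iff.2 fun j _ =>
    div_ne_zero (neg_ne_zero.2 (by positivity)) (pow_succ_sub_one_pos hx j).ne'
  refine summable_of_ratio_test_tendsto_lt_one zero_lt_one
    (Filter.Eventually.of_forall fun i => norm_ne_zero_iff.2 (h1 i)) ?_
  have h2 : ∀ i, ‖‖eulerCoeff x k (i + 1)‖‖ / ‖‖eulerCoeff x k i‖‖ =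
      ‖-(1 / x ^ k)‖ / (x ^ (i + 1) - 1) := fun i => by
    have h := norm_ne_zero_iff.2 (h1 i)
    rw [norm_norm, norm_norm, eulerCoeff, Finset.prod_range_succ, ← eulerCoeff, norm_mul, norm_div,
      Real.norm_of_nonneg (pow_succ_sub_one_pos hx i).le]
    field_simp
  simp_rw [h2]
  exact ((Filter.tendsto_atTop_add_const_right _ (-1)
    ((tendsto_pow_atTop_atTop_of_one_lt hx).comp (Filter.tendsto_add_atTop_nat 1))).const_div_atTop _)

theorem summable_eulerCoeff (hx : 1 < x) (k : ℕ) : Summable (eulerCoeff x k) :=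
  (summable_norm_eulerCoeff hx k).of_norm

/-- The functional equation `G(z) = (1 - z / x) G(z / x)` of Euler's series at `z = x⁻ᵏ`. -/
theorem tsum_eulerCoeff_succ (hx : 1 < x) (k : ℕ) :
    ∑' i, eulerCoeff x k i = (1 - 1 / x ^ (k + 1)) * ∑' i, eulerCoeff x (k + 1) i := by
  have hx0 : x ≠ 0 := by linarith
  have hk := summable_eulerCoeff hx k
  have hk' := summable_eulerCoeff hx (k + 1)
  have step : ∀ i, eulerCoeff x k (i + 1) - eulerCoeff x (k + 1) (i + 1) =
      -(1 / x ^ (k + 1)) * eulerCoeff x (k + 1) i := fun i => by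
    have h1 := (pow_succ_sub_one_pos hx i).ne'
    rw [eulerCoeff_eq hx k, eulerCoeff_eq hx (k + 1), eulerCoeff_eq hx (k + 1) i,
      eulerCoeff, Finset.prod_range_succ, ← eulerCoeff]
    simp only [one_div, inv_pow, ← pow_mul]
    field_simp
    ring
  have h := hk.tsum_sub hk'
  rw [(hk.sub hk').tsum_eq_zero_add, tsum_congr step, tsum_mul_left] at h
  have h0 : ∀ k, eulerCoeff x k 0 = 1 := fun k => Finset.prod_range_zero _
  rw [h0, h0] at h
  linarith

theorem tendsto_tsum_eulerCoeff (hx : 1 < x) :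
    Filter.Tendsto (fun k => ∑' i, eulerCoeff x k i) Filter.atTop (nhds 1) := by
  have h1 : ∑' i, (if i = 0 then (1 : ℝ) else 0) = 1 := tsum_ite_eq 0 _
  rw [← h1]
  refine tendsto_tsum_of_dominated_convergence (summable_norm_eulerCoeff hx 0) (fun i => ?_)
    (Filter.Eventually.of_forall fun k i => ?_)
  · rcases i with _ | i
    · simp [eulerCoeff]
    · rw [funext fun k => eulerCoeff_eq hx k (i + 1), if_neg (Nat.succ_ne_zero i), ← mul_zero (eulerCoeff x 0 (i + 1))]
      have := one_sub_inv_pow_pos hx i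
      exact (tendsto_pow_atTop_nhds_zero_of_lt_one (by positivity) (by linarith)).const_mul _
  · rw [eulerCoeff_eq hx k, norm_mul]
    refine mul_le_of_le_one_right (norm_nonneg _) ?_
    rw [norm_pow, Real.norm_of_nonneg (by positivity)]
    refine pow_le_one₀ (by positivity) ?_
    rw [div_le_one (by positivity)]
    exact one_le_pow₀ hx.le

theorem prod_mul_tsum_eulerCoeff (hx : 1 < x) (k : ℕ) :
    (∏ j ∈ Finset.range k, (1 - 1 / x ^ (j + 1))) * ∑' i, eulerCoeff x k i =
      ∑' i, eulerCoeff x 0 i := by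
  induction k with
  | zero => simp
  | succ k ih => rw [← ih, tsum_eulerCoeff_succ hx k, Finset.prod_range_succ, mul_assoc]

theorem multipliable_one_sub_inv_pow (hx : 1 < x) :
    Multipliable fun r : ℕ => 1 - 1 / x ^ (r + 1) := by
  simp_rw [sub_eq_add_neg]
  refine multipliable_one_add_of_summable ?_
  have h := (summable_geometric_of_lt_one (r := 1 / x) (by positivity)
    (by rw [div_lt_one (by linarith)]; exact hx))
  simpa [abs_of_pos (zero_lt_one.trans hx)] using (summable_nat_add_iff 1).2 h

/-- Euler's identity at `z = x⁻ᵏ`, with both sides multiplied by a finite product. -/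
theorem prod_mul_tsum_eulerCoeff_eq_tprod (hx : 1 < x) (k : ℕ) :
    (∏ j ∈ Finset.range k, (1 - 1 / x ^ (j + 1))) * ∑' i, eulerCoeff x k i =
      ∏' r : ℕ, (1 - 1 / x ^ (r + 1)) := by
  have h := (multipliable_one_sub_inv_pow hx).tendsto_prod_tprod_nat.mul (tendsto_tsum_eulerCoeff hx)
  simp_rw [prod_mul_tsum_eulerCoeff hx, mul_one] at h
  rw [prod_mul_tsum_eulerCoeff hx]
  exact tendsto_nhds_unique tendsto_const_nhds h

end Euler

/-- Rudvalis–Shinoda: as `n → ∞`, the proportion of elements of `GL(n,q)` whose fixed space has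
dimension `k` converges to `[∏_{r=1}^∞ (1 - q^{-r})] q^{-k²} / ∏_{j=1}^k (1 - q^{-j})²`. -/
theorem statement10 (q : ℕ) (hq : IsPrimePow q) (k : ℕ)
    (F : Type) [Field F] [Fintype F] (hF : Fintype.card F = q) :
    Filter.Tendsto (fun n : ℕ =>
        (Nat.card {A : Matrix.GeneralLinearGroup (Fin n) F //
            Module.finrank F
              (LinearMap.ker (Matrix.mulVecLin ((A : Matrix (Fin n) (Fin n) F) - 1))) = k} : ℝ) /
          (Nat.card (Matrix.GeneralLinearGroup (Fin n) F) : ℝ))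
      Filter.atTop
      (nhds ((∏' r : ℕ, (1 - 1 / (q : ℝ) ^ (r + 1))) * (1 / (q : ℝ) ^ (k ^ 2)) /
        ∏ j ∈ Finset.range k, (1 - 1 / (q : ℝ) ^ (j + 1)) ^ 2)) := by
  subst hF
  have hx : (1 : ℝ) < Fintype.card F := by exact_mod_cast Fintype.one_lt_card
  have hx0 : (Fintype.card F : ℝ) ≠ 0 := by linarith
  rw [← Filter.tendsto_add_atTop_iff_nat k]
  have hlim := (((summable_eulerCoeff hx k).hasSum.tendsto_sum_nat.comp
    (Filter.tendsto_add_atTop_nat 1))).div_const (injCount (Fintype.card F) k k)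
  have hP : ∏ j ∈ Finset.range k, (1 - 1 / (Fintype.card F : ℝ) ^ (j + 1)) ≠ 0 :=
    Finset.prod_ne_zero_iff.2 fun j _ => (one_sub_inv_pow_pos hx j).ne'
  convert hlim using 1
  · funext N
    rw [add_comm N k]
    exact card_fixDim_div hx k N
  · rw [injCount_self hx, ← prod_mul_tsum_eulerCoeff_eq_tprod hx k, Finset.prod_pow]
    congr 1
    field_simp
end
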